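/- Let G be a finite group satisfying the two-prime hypothesis with normal subgroups N ≤ M such that M/N ≅ PSL_2(8) and the centralizer of M/N in G/N is trivial. Then |cd(G)| ≤ 13. -/

import Mathlib

open CategoryTheory

/-- The set of degrees of the complex irreducible characters of `G`. -/
def charDegrees (G : Type) [Group G] : Set ℕ :=
  {n | ∃ V : FDRep ℂ G, Simple V ∧ Module.finrank ℂ V = n}

/-- `G` satisfies the two-prime hypothesis: for any distinct irreducible character degrees
`a`, `b`, the gcd `gcd a b` has at most two prime divisors counted with multiplicity. -/
def TwoPrimeHypothesis (G : Type) [Group G] : Prop :=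
  ∀ a ∈ charDegrees G, ∀ b ∈ charDegrees G, a ≠ b →
    (Nat.gcd a b).primeFactorsList.length ≤ 2

/-- `PSL₂(F)`: the quotient of `SL₂(F)` by its center. -/
abbrev PSL2 (F : Type) [Field F] : Type :=
  Matrix.SpecialLinearGroup (Fin 2) F ⧸
    Subgroup.center (Matrix.SpecialLinearGroup (Fin 2) F)

namespace CD
open Module

section basics
variable {G : Type} [Group G]
  {V : Type} [AddCommGroup V] [Module ℂ V]
  {W : Type} [AddCommGroup W] [Module ℂ W]

/-- Stable subspaces. -/
def Stab (ρ : Representation ℂ G V) (X : Submodule ℂ V) : Prop := ∀ g, ∀ x ∈ X, ρ g x ∈ X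

/-- Irreducible representations. -/
def Irr (ρ : Representation ℂ G V) : Prop :=
  Nontrivial V ∧ ∀ X : Submodule ℂ V, Stab ρ X → X = ⊥ ∨ X = ⊤

/-- Intertwining maps. -/
def Inter (ρ : Representation ℂ G V) (σ : Representation ℂ G W) (f : V →ₗ[ℂ] W) : Prop :=
  ∀ g v, f (ρ g v) = σ g (f v)

/-- The subrepresentation on a stable subspace. -/
def subrep (ρ : Representation ℂ G V) (X : Submodule ℂ V) (h : Stab ρ X) :
    Representation ℂ G X where
  toFun g := (ρ g).restrict (h g)
  map_one' := by ext; simp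
  map_mul' a b := by ext; simp

@[simp] lemma subrep_coe (ρ : Representation ℂ G V) (X : Submodule ℂ V) (h : Stab ρ X) (g : G)
    (x : X) : (subrep ρ X h g x : V) = ρ g x := rfl

lemma rep_inv_apply (ρ : Representation ℂ G V) (g : G) (v : V) : ρ g⁻¹ (ρ g v) = v := by
  rw [← Module.End.mul_apply, ← map_mul]; simp

lemma rep_apply_inv (ρ : Representation ℂ G V) (g : G) (v : V) : ρ g (ρ g⁻¹ v) = v := by
  rw [← Module.End.mul_apply, ← map_mul]; simp

lemma rep_mul_apply (ρ : Representation ℂ G V) (g h : G) (v : V) : ρ (g * h) v = ρ g (ρ h v) := by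
  rw [map_mul, Module.End.mul_apply]

lemma rep_inj (ρ : Representation ℂ G V) (g : G) : Function.Injective (ρ g) :=
  Function.LeftInverse.injective (rep_inv_apply ρ g)

lemma ker_stab {ρ : Representation ℂ G V} {σ : Representation ℂ G W} {f : V →ₗ[ℂ] W}
    (hf : Inter ρ σ f) : Stab ρ (LinearMap.ker f) := by
  intro g x hx
  rw [LinearMap.mem_ker] at hx ⊢
  rw [hf, hx, map_zero]

lemma range_stab {ρ : Representation ℂ G V} {σ : Representation ℂ G W} {f : V →ₗ[ℂ] W}
    (hf : Inter ρ σ f) : Stab σ (LinearMap.range f) := by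
  rintro g _ ⟨x, rfl⟩
  exact ⟨ρ g x, hf g x⟩

lemma Irr.inj {ρ : Representation ℂ G V} {σ : Representation ℂ G W} {f : V →ₗ[ℂ] W}
    (h : Irr ρ) (hf : Inter ρ σ f) (h0 : f ≠ 0) : Function.Injective f := by
  rcases h.2 _ (ker_stab hf) with h1 | h1
  · exact LinearMap.ker_eq_bot.1 h1
  · exact absurd (LinearMap.ker_eq_top.1 h1) h0

lemma Irr.surj {ρ : Representation ℂ G V} {σ : Representation ℂ G W} {f : V →ₗ[ℂ] W}
    (h : Irr σ) (hf : Inter ρ σ f) (h0 : f ≠ 0) : Function.Surjective f := by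
  rcases h.2 _ (range_stab hf) with h1 | h1
  · exact absurd (LinearMap.range_eq_bot.1 h1) h0
  · exact LinearMap.range_eq_top.1 h1

lemma schur [FiniteDimensional ℂ V] {ρ : Representation ℂ G V} (h : Irr ρ) {f : V →ₗ[ℂ] V}
    (hf : Inter ρ ρ f) : ∃ c : ℂ, f = c • LinearMap.id := by
  have := h.1
  obtain ⟨c, hc⟩ := Module.End.exists_eigenvalue f
  refine ⟨c, ?_⟩
  obtain ⟨v, hv⟩ := hc.exists_hasEigenvector
  by_contra hne
  have h1 : Inter ρ ρ (f - c • LinearMap.id) := by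
    intro g v
    simp [hf g v]
  have h2 := h.inj h1 (sub_ne_zero.2 hne)
  apply hv.2
  apply h2
  simp [hv.apply_eq_smul]

lemma exists_irr_sub [FiniteDimensional ℂ V] [Nontrivial V] (ρ : Representation ℂ G V) :
    ∃ (X : Submodule ℂ V) (h : Stab ρ X), Irr (subrep ρ X h) := by
  have key : ∀ n : ℕ, ∀ X : Submodule ℂ V, Stab ρ X → X ≠ ⊥ → finrank ℂ X = n →
      ∃ (X : Submodule ℂ V) (h : Stab ρ X), Irr (subrep ρ X h) := by
    intro n
    induction n using Nat.strong_induction_on with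
    | _ n ih =>
      intro X hX hX0 hn
      by_cases hi : Irr (subrep ρ X hX)
      · exact ⟨X, hX, hi⟩
      · have : Nontrivial X := Submodule.nontrivial_iff_ne_bot.2 hX0
        simp only [Irr, not_and, not_forall] at hi
        obtain ⟨Y, hY, hY2⟩ := hi this
        push Not at hY2
        have hs : Stab ρ (Y.map X.subtype) := by
          rintro g _ ⟨y, hy, rfl⟩
          exact ⟨subrep ρ X hX g y, hY g y hy, rfl⟩
        refine ih (finrank ℂ (Y.map X.subtype)) ?_ _ hs ?_ rfl
        · rw [Submodule.finrank_map_subtype_eq, ← hn]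
          exact Submodule.finrank_lt hY2.2
        · intro h0
          apply hY2.1
          rw [Submodule.eq_bot_iff] at h0 ⊢
          intro y hy
          exact Subtype.ext (h0 y ⟨y, hy, rfl⟩)
  exact key _ ⊤ (fun _ _ _ => Submodule.mem_top) top_ne_bot rfl

set_option linter.unusedSectionVars false
variable [Finite G]

open Classical in
/-- Averaging. -/
noncomputable def avg (ρ : Representation ℂ G V) (σ : Representation ℂ G W) (f : V →ₗ[ℂ] W) :
    V →ₗ[ℂ] W :=
  (Nat.card G : ℂ)⁻¹ • ∑ᶠ g : G, σ g ∘ₗ f ∘ₗ ρ g⁻¹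

lemma avg_apply [Fintype G] (ρ : Representation ℂ G V) (σ : Representation ℂ G W) (f : V →ₗ[ℂ] W)
    (v : V) : avg ρ σ f v = (Nat.card G : ℂ)⁻¹ • ∑ g : G, σ g (f (ρ g⁻¹ v)) := by
  rw [avg, finsum_eq_sum_of_fintype]
  simp

lemma avg_inter (ρ : Representation ℂ G V) (σ : Representation ℂ G W) (f : V →ₗ[ℂ] W) :
    Inter ρ σ (avg ρ σ f) := by
  have := Fintype.ofFinite G
  intro h v
  rw [avg_apply, avg_apply, map_smul, map_sum]
  congr 1
  rw [← Equiv.sum_comp (Equiv.mulLeft h)]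
  refine Finset.sum_congr rfl fun g _ => ?_
  simp only [Equiv.coe_mulLeft, mul_inv_rev, rep_mul_apply, rep_inv_apply]

lemma card_ne : (Nat.card G : ℂ) ≠ 0 := by exact_mod_cast Nat.card_pos.ne'

lemma exists_section {ρ : Representation ℂ G V} {σ : Representation ℂ G W} {f : V →ₗ[ℂ] W}
    (hf : Inter ρ σ f) (hs : Function.Surjective f) :
    ∃ s : W →ₗ[ℂ] V, Inter σ ρ s ∧ ∀ w, f (s w) = w := by
  have := Fintype.ofFinite G
  obtain ⟨s, hs⟩ := f.exists_rightInverse_of_surjective (LinearMap.range_eq_top.2 hs)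
  refine ⟨avg σ ρ s, avg_inter _ _ _, fun w => ?_⟩
  have hs' : ∀ w, f (s w) = w := fun w => LinearMap.congr_fun hs w
  rw [avg_apply, map_smul, map_sum]
  simp only [hf _ _, hs', rep_apply_inv, Finset.sum_const, Finset.card_univ]
  rw [← Nat.card_eq_fintype_card, ← Nat.cast_smul_eq_nsmul ℂ, smul_smul, inv_mul_cancel₀ card_ne,
    one_smul]

lemma exists_back [FiniteDimensional ℂ V] [FiniteDimensional ℂ W] {ρ : Representation ℂ G V}
    {σ : Representation ℂ G W} {f : V →ₗ[ℂ] W}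
    (hf : Inter ρ σ f) (h0 : f ≠ 0) : ∃ s : W →ₗ[ℂ] V, Inter σ ρ s ∧ s ≠ 0 := by
  have := Fintype.ofFinite G
  obtain ⟨v, hv⟩ : ∃ v, f v ≠ 0 := by
    by_contra hh
    push Not at hh
    exact h0 (LinearMap.ext hh)
  obtain ⟨l, hl⟩ := Module.Projective.exists_dual_eq_one ℂ hv
  refine ⟨avg σ ρ (l.smulRight v), avg_inter _ _ _, fun hz => ?_⟩
  have h1 : ∀ g : G, LinearMap.trace ℂ W (σ g ∘ₗ (f ∘ₗ l.smulRight v) ∘ₗ σ g⁻¹) = 1 := by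
    intro g
    rw [← LinearMap.trace_comp_comm']
    have : ((f ∘ₗ l.smulRight v) ∘ₗ σ g⁻¹) ∘ₗ σ g = l.smulRight (f v) := by
      ext w
      simp
    rw [this, LinearMap.trace_smulRight, hl]
  have h2 : f ∘ₗ avg σ ρ (l.smulRight v)
      = (Nat.card G : ℂ)⁻¹ • ∑ g : G, σ g ∘ₗ (f ∘ₗ l.smulRight v) ∘ₗ σ g⁻¹ := by
    ext w
    simp only [LinearMap.comp_apply, avg_apply, map_smul, map_sum, hf _ _, LinearMap.smul_apply,
      LinearMap.sum_apply]
  have h3 := congrArg (LinearMap.trace ℂ W) h2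
  rw [hz, LinearMap.comp_zero, map_zero, map_smul, map_sum, Finset.sum_congr rfl (fun g _ => h1 g),
    Finset.sum_const, Finset.card_univ, ← Nat.card_eq_fintype_card, nsmul_eq_mul, mul_one,
    smul_eq_mul, inv_mul_cancel₀ card_ne] at h3
  exact zero_ne_one h3

/-- `n` is the degree of an irreducible complex representation. -/
def IsDeg (G : Type) [Group G] (n : ℕ) : Prop :=
  ∃ (V : Type) (_ : AddCommGroup V) (_ : Module ℂ V) (_ : FiniteDimensional ℂ V)
    (ρ : Representation ℂ G V), Irr ρ ∧ finrank ℂ V = n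

/-- From intertwiners to morphisms. -/
def toHom (V : FDRep ℂ G) (f : V →ₗ[ℂ] V) (hf : Inter V.ρ V.ρ f) : V ⟶ V :=
  ⟨InducedCategory.homMk (ModuleCat.ofHom f), fun g => by
    ext x
    exact hf g x⟩

lemma exists_lin_of_hom (V : FDRep ℂ G) (f : V ⟶ V) :
    ∃ l : V →ₗ[ℂ] V, ∃ hl : Inter V.ρ V.ρ l, toHom V l hl = f := by
  refine ⟨f.hom.hom.hom, fun g v => ?_, rfl⟩
  exact ConcreteCategory.congr_hom ((forget (FGModuleCat ℂ)).congr_map (f.comm g)) v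

lemma mem_charDegrees (n : ℕ) : n ∈ charDegrees G ↔ IsDeg G n := by
  have : NeZero (Nat.card G : ℂ) := ⟨card_ne⟩
  constructor
  · rintro ⟨V, hV, rfl⟩
    refine ⟨V, inferInstance, inferInstance, inferInstance, V.ρ, ⟨?_, fun X hX => ?_⟩, rfl⟩
    · by_contra hn
      rw [not_nontrivial_iff_subsingleton] at hn
      apply id_nonzero V
      obtain ⟨l, hl, hl2⟩ := exists_lin_of_hom V (𝟙 V)
      obtain ⟨l', hl', hl2'⟩ := exists_lin_of_hom V (0 : V ⟶ V)
      rw [← hl2, ← hl2']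
      congr 1
      ext v
      exact Subsingleton.elim _ _
    · by_cases h0 : X = ⊥
      · exact Or.inl h0
      right
      obtain ⟨s, hs, hs2⟩ : ∃ s : V →ₗ[ℂ] V, Inter V.ρ V.ρ s ∧ (∀ x ∈ X, s x = x) ∧
          ∀ v, s v ∈ X := by
        obtain ⟨p, hp⟩ := X.subtype.exists_leftInverse_of_injective (Submodule.ker_subtype X)
        have hp' : ∀ x : X, p x = x := fun x => LinearMap.congr_fun hp x
        have := Fintype.ofFinite G
        refine ⟨X.subtype ∘ₗ avg V.ρ (subrep V.ρ X hX) p, ?_, ?_, ?_⟩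
        · intro g v
          simp only [LinearMap.comp_apply, avg_inter V.ρ (subrep V.ρ X hX) p g v]
          rfl
        · intro x hx
          simp only [LinearMap.comp_apply, avg_apply]
          have : ∀ g : G, subrep V.ρ X hX g (p (V.ρ g⁻¹ x)) = ⟨x, hx⟩ := by
            intro g
            have h1 := hp' (subrep V.ρ X hX g⁻¹ ⟨x, hx⟩)
            rw [subrep_coe] at h1
            erw [h1]
            exact rep_apply_inv _ _ _
          simp only [this, Finset.sum_const, Finset.card_univ]
          rw [← Nat.card_eq_fintype_card, ← Nat.cast_smul_eq_nsmul ℂ, smul_smul,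
            inv_mul_cancel₀ card_ne, one_smul]
          rfl
        · intro v
          exact Submodule.coe_mem _
      have h1 := (finrank_eq_one_iff_of_nonzero' (𝟙 V) (id_nonzero V)).1
        ((FDRep.simple_iff_end_is_rank_one V).1 hV) (toHom V s hs)
      obtain ⟨c, hc⟩ := h1
      have h2 : ∀ v : V, c • v = s v := by
        intro v
        exact ConcreteCategory.congr_hom ((forget (FGModuleCat ℂ)).congr_map
          (congrArg Action.Hom.hom hc)) v
      obtain ⟨x, hx, hx0⟩ := Submodule.exists_mem_ne_zero_of_ne_bot h0
      have h3 : c = 1 := by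
        have := h2 x
        rw [hs2.1 x hx] at this
        exact smul_left_injective ℂ hx0 (by simpa using this)
      rw [eq_top_iff]
      intro v _
      have := h2 v
      rw [h3, one_smul] at this
      rw [this]
      exact hs2.2 v
  · rintro ⟨V, _, _, _, ρ, h, rfl⟩
    refine ⟨FDRep.of ρ, ?_, rfl⟩
    rw [FDRep.simple_iff_end_is_rank_one]
    have hid : 𝟙 (FDRep.of ρ) ≠ 0 := by
      intro h0
      have := h.1
      obtain ⟨v, hv⟩ := exists_ne (0 : V)
      have h1 : (𝟙 (FDRep.of ρ) : FDRep.of ρ ⟶ FDRep.of ρ).hom.hom.hom v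
          = (0 : FDRep.of ρ ⟶ FDRep.of ρ).hom.hom.hom v := by rw [h0]
      exact hv h1
    refine (finrank_eq_one_iff_of_nonzero' _ hid).2 fun f => ?_
    obtain ⟨l, hl, rfl⟩ := exists_lin_of_hom _ f
    obtain ⟨c, hc⟩ := schur h hl
    refine ⟨c, ?_⟩
    ext v
    exact (LinearMap.congr_fun hc v).symm

end basics
end CD

open CategoryTheory
set_option linter.unusedSectionVars false
namespace CD
open Module

section clifford

/-- Product representation. -/
def piRep {G ι U : Type} [Group G] [AddCommGroup U] [Module ℂ U]
    (θ : ι → Representation ℂ G U) : Representation ℂ G (ι → U) where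
  toFun n := LinearMap.pi fun i => θ i n ∘ₗ LinearMap.proj i
  map_one' := by ext; simp
  map_mul' a b := by ext; simp

lemma piRep_apply {G ι U : Type} [Group G] [AddCommGroup U] [Module ℂ U]
    (θ : ι → Representation ℂ G U) (g : G) (x : ι → U) (i : ι) : piRep θ g x i = θ i g (x i) := rfl

lemma indep_homs {G ι U V : Type} [Group G] [Finite G] [Fintype ι] [AddCommGroup U] [Module ℂ U]
    [AddCommGroup V] [Module ℂ V] (θ : ι → Representation ℂ G U) (hθ : ∀ i, Irr (θ i))
    (ρ : Representation ℂ G V) (f : ι → U →ₗ[ℂ] V) (hf : ∀ i, Inter (θ i) ρ (f i))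
    (key : ∀ i, ∀ s : ι → U →ₗ[ℂ] U, (∀ j, Inter (θ i) (θ j) (s j)) → s i = LinearMap.id →
      (∀ u, ∑ j, f j (s j u) = 0) → False) :
    Function.Injective (∑ j, f j ∘ₗ LinearMap.proj j : (ι → U) →ₗ[ℂ] V) := by
  set Φ : (ι → U) →ₗ[ℂ] V := ∑ j, f j ∘ₗ LinearMap.proj j with hΦ
  have hΦa : ∀ x, Φ x = ∑ j, f j (x j) := by intro x; simp [hΦ]
  have hΦi : Inter (piRep θ) ρ Φ := by
    intro g x
    simp only [hΦa, map_sum, piRep_apply, hf _ _ _]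
  have hK := ker_stab hΦi
  rw [← LinearMap.ker_eq_bot]
  by_contra hne
  obtain ⟨x, hx, hx0⟩ := Submodule.exists_mem_ne_zero_of_ne_bot hne
  obtain ⟨i, hi⟩ : ∃ i, x i ≠ 0 := by
    by_contra hh
    push Not at hh
    exact hx0 (funext hh)
  let pr : LinearMap.ker Φ →ₗ[ℂ] U := LinearMap.proj i ∘ₗ (LinearMap.ker Φ).subtype
  have hpr : Inter (subrep (piRep θ) _ hK) (θ i) pr := by
    intro g x
    rfl
  have hpr0 : pr ≠ 0 := by
    intro h
    exact hi (LinearMap.congr_fun h ⟨x, hx⟩)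
  obtain ⟨s, hs, hs2⟩ := exists_section hpr ((hθ i).surj hpr hpr0)
  refine key i (fun j => LinearMap.proj j ∘ₗ (LinearMap.ker Φ).subtype ∘ₗ s) ?_ ?_ ?_
  · intro j g u
    simp only [LinearMap.comp_apply, hs g u]
    rfl
  · ext u
    exact hs2 u
  · intro u
    have := (s u).2
    rw [LinearMap.mem_ker, hΦa] at this
    exact this

variable {G : Type} [Group G] (N : Subgroup G) [N.Normal]
  {U : Type} [AddCommGroup U] [Module ℂ U]
  {V : Type} [AddCommGroup V] [Module ℂ V]
  {W : Type} [AddCommGroup W] [Module ℂ W]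

variable {N}

/-- The conjugated representation. -/
def conjRep (θ : Representation ℂ N U) (g : G) : Representation ℂ N U :=
  θ.comp (MulAut.conjNormal g : N ≃* N).toMonoidHom

lemma conjRep_apply (θ : Representation ℂ N U) (g : G) (n : N) (u : U) :
    conjRep θ g n u = θ (MulAut.conjNormal g n) u := rfl

lemma conjRep_irr {θ : Representation ℂ N U} (h : Irr θ) (g : G) : Irr (conjRep θ g) := by
  refine ⟨h.1, fun X hX => h.2 X fun n x hx => ?_⟩
  have := hX (MulAut.conjNormal g⁻¹ n) x hx
  rw [conjRep_apply, ← MulAut.mul_apply, ← map_mul] at this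
  simpa using this

/-- The inertia group. -/
def inertia (θ : Representation ℂ N U) : Subgroup G where
  carrier := {g | ∃ A : U ≃ₗ[ℂ] U, ∀ n u, A (θ n u) = θ (MulAut.conjNormal g n) (A u)}
  one_mem' := ⟨LinearEquiv.refl ℂ U, by simp⟩
  mul_mem' := by
    rintro a b ⟨A, hA⟩ ⟨B, hB⟩
    refine ⟨B.trans A, fun n u => ?_⟩
    simp [hA, hB, map_mul]
  inv_mem' := by
    rintro a ⟨A, hA⟩
    refine ⟨A.symm, fun n u => ?_⟩
    rw [LinearEquiv.symm_apply_eq, hA, ← MulAut.mul_apply, ← map_mul]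
    simp

lemma mem_inertia (θ : Representation ℂ N U) (g : G) : g ∈ inertia θ ↔
    ∃ A : U ≃ₗ[ℂ] U, ∀ n u, A (θ n u) = θ (MulAut.conjNormal g n) (A u) := Iff.rfl

/-- The action of a group element as an equivalence. -/
noncomputable def repEquiv {G : Type} [Group G] (ρ : Representation ℂ G V) (g : G) : V ≃ₗ[ℂ] V :=
  LinearEquiv.ofLinearMap (ρ g) (ρ g⁻¹)
    (by ext v; exact rep_apply_inv _ _ _) (by ext v; exact rep_inv_apply _ _ _)

@[simp] lemma repEquiv_apply {G : Type} [Group G] (ρ : Representation ℂ G V) (g : G) (v : V) :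
    repEquiv ρ g v = ρ g v := rfl

lemma le_inertia (θ : Representation ℂ N U) : N ≤ inertia θ := by
  intro n0 hn
  refine ⟨repEquiv θ ⟨n0, hn⟩, fun n u => ?_⟩
  simp only [repEquiv_apply]
  rw [← rep_mul_apply, ← rep_mul_apply]
  congr 2
  ext
  simp

/-- `N`-intertwiners. -/
def homN (θ : Representation ℂ N U) (ρ : Representation ℂ G V) : Submodule ℂ (U →ₗ[ℂ] V) where
  carrier := {f | ∀ (n : N) u, f (θ n u) = ρ n (f u)}
  add_mem' := by
    intro a b ha hb n u
    simp [ha n u, hb n u]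
  zero_mem' := by intro n u; simp
  smul_mem' := by
    intro c a ha n u
    simp [ha n u]

lemma upper [Finite G] [FiniteDimensional ℂ U] [FiniteDimensional ℂ V]
    {ρ : Representation ℂ G V} (hρ : Irr ρ) (T : Subgroup G) (Y : Submodule ℂ (U →ₗ[ℂ] V))
    (hY0 : Y ≠ ⊥)
    (hY : ∀ t ∈ T, ∀ f ∈ Y, ∃ A : U ≃ₗ[ℂ] U, ρ t ∘ₗ f ∘ₗ A.toLinearMap ∈ Y) :
    finrank ℂ V ≤ T.index * (finrank ℂ U * finrank ℂ Y) := by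
  have := Fintype.ofFinite (G ⧸ T)
  let b := finBasis ℂ Y
  let Φ : ((G ⧸ T) × Fin (finrank ℂ Y) → U) →ₗ[ℂ] V :=
    ∑ j, (ρ j.1.out ∘ₗ (b j.2 : U →ₗ[ℂ] V)) ∘ₗ LinearMap.proj j
  have hΦa : ∀ x, Φ x = ∑ j, ρ j.1.out ((b j.2 : U →ₗ[ℂ] V) (x j)) := by intro x; simp [Φ]
  have h1 : ∀ g : G, ∀ f ∈ Y, ∀ u, ρ g (f u) ∈ LinearMap.range Φ := by
    intro g f hf u
    classical
    set c : G ⧸ T := (g : G ⧸ T) with hc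
    have ht : (c.out)⁻¹ * g ∈ T := by
      rw [← QuotientGroup.eq, QuotientGroup.out_eq']
    obtain ⟨A, hA⟩ := hY _ ht f hf
    have e1 : ρ g (f u) = ρ c.out ((ρ ((c.out)⁻¹ * g) ∘ₗ f ∘ₗ A.toLinearMap) (A.symm u)) := by
      simp only [LinearMap.comp_apply, LinearEquiv.coe_coe, LinearEquiv.apply_symm_apply]
      rw [← rep_mul_apply]
      simp
    rw [e1]
    have e2 := b.sum_repr ⟨_, hA⟩
    have e3 := congrArg (Submodule.subtype Y) e2
    rw [map_sum] at e3
    simp only [map_smul, Submodule.subtype_apply] at e3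
    rw [← e3, LinearMap.sum_apply, map_sum]
    refine Submodule.sum_mem _ fun j _ => ?_
    rw [LinearMap.smul_apply, map_smul]
    refine Submodule.smul_mem _ _ ⟨Pi.single (c, j) (A.symm u), ?_⟩
    rw [hΦa, Finset.sum_eq_single (c, j)]
    · simp
    · intro i _ hi
      rw [Pi.single_eq_of_ne hi, map_zero, map_zero]
    · simp
  have h2 : LinearMap.range Φ = ⊤ := by
    let R : Submodule ℂ V := Submodule.span ℂ {v | ∃ g : G, ∃ f ∈ Y, ∃ u, v = ρ g (f u)}
    have hR : Stab ρ R := by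
      intro g x hx
      have : R ≤ R.comap (ρ g) := by
        rw [Submodule.span_le]
        rintro _ ⟨h, f, hf, u, rfl⟩
        refine Submodule.subset_span ⟨g * h, f, hf, u, ?_⟩
        rw [rep_mul_apply]
      exact this hx
    have hR2 : R = ⊤ := by
      rcases hρ.2 R hR with h | h
      · exfalso
        obtain ⟨f, hf, hf0⟩ := Submodule.exists_mem_ne_zero_of_ne_bot hY0
        apply hf0
        ext u
        have : f u ∈ R := Submodule.subset_span ⟨1, f, hf, u, by simp⟩
        rw [h] at this
        simpa using this
      · exact h
    rw [eq_top_iff, ← hR2, Submodule.span_le]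
    rintro _ ⟨h, f, hf, u, rfl⟩
    exact h1 h f hf u
  have h3 := LinearMap.finrank_range_le Φ
  rw [h2, finrank_top, finrank_pi_fintype] at h3
  simp only [Finset.sum_const, Finset.card_univ, Fintype.card_prod, Fintype.card_fin,
    smul_eq_mul] at h3
  rw [Subgroup.index, Nat.card_eq_fintype_card]
  calc _ ≤ _ := h3
    _ = _ := by ring

lemma lower [Finite G] [FiniteDimensional ℂ U] [FiniteDimensional ℂ V]
    {ρ : Representation ℂ G V} {θ : Representation ℂ N U} (hθ : Irr θ) :
    (inertia θ).index * (finrank ℂ U * finrank ℂ (homN θ ρ)) ≤ finrank ℂ V := by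
  set T := inertia θ with hT
  have := Fintype.ofFinite (G ⧸ T)
  let b := finBasis ℂ (homN θ ρ)
  have hinj := indep_homs (ι := (G ⧸ T) × Fin (finrank ℂ (homN θ ρ)))
    (fun j => conjRep θ j.1.out⁻¹) (fun j => conjRep_irr hθ _)
    (ρ.comp N.subtype) (fun j => ρ j.1.out ∘ₗ (b j.2 : U →ₗ[ℂ] V)) ?_ ?_
  · have h3 := LinearMap.finrank_le_finrank_of_injective hinj
    rw [finrank_pi_fintype] at h3
    simp only [Finset.sum_const, Finset.card_univ, Fintype.card_prod, Fintype.card_fin,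
      smul_eq_mul] at h3
    rw [Subgroup.index, Nat.card_eq_fintype_card]
    calc _ = _ := by ring
      _ ≤ _ := h3
  · intro j n u
    have := (b j.2).2 (MulAut.conjNormal j.1.out⁻¹ n) u
    simp only [LinearMap.comp_apply, conjRep_apply]
    rw [this, ← rep_mul_apply, MonoidHom.comp_apply, ← rep_mul_apply]
    congr 2
    simp [mul_assoc]
  · intro i s hs hsi h0
    have hz : ∀ j, j.1 ≠ i.1 → s j = 0 := by
      intro j hj
      by_contra hne
      have hb : Function.Bijective (s j) :=
        ⟨(conjRep_irr hθ _).inj (hs j) hne, (conjRep_irr hθ _).surj (hs j) hne⟩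
      apply hj
      have hm : j.1.out⁻¹ * i.1.out ∈ T := by
        refine ⟨LinearEquiv.ofBijective (s j) hb, fun n u => ?_⟩
        have h4 := hs j (MulAut.conjNormal i.1.out n) u
        rw [conjRep_apply, conjRep_apply, ← MulAut.mul_apply, ← MulAut.mul_apply, ← map_mul,
          ← map_mul] at h4
        simpa using h4
      rw [← QuotientGroup.eq, QuotientGroup.out_eq', QuotientGroup.out_eq'] at hm
      exact hm
    have hc : ∀ j, ∃ a : ℂ, s (i.1, j) = a • LinearMap.id := fun j =>
      schur (conjRep_irr hθ _) (hs (i.1, j))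
    choose a ha using hc
    have hsum : ∑ j, a j • b j = 0 := by
      ext u
      have h5 := h0 u
      rw [Fintype.sum_prod_type, Finset.sum_eq_single i.1] at h5
      · simp only [ha, LinearMap.smul_apply, LinearMap.id_apply, map_smul,
          LinearMap.comp_apply] at h5
        rw [← map_zero (ρ i.1.out)] at h5
        simp only [← map_smul, ← map_sum] at h5
        have h6 := rep_inj ρ _ h5
        simpa using h6
      · intro c _ hc
        refine Finset.sum_eq_zero fun j _ => ?_
        rw [hz (c, j) hc, LinearMap.zero_apply, map_zero]
      · simp
    have hli := b.linearIndependent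
    rw [Fintype.linearIndependent_iff] at hli
    have h7 := hli a hsum i.2
    have h8 := ha i.2
    rw [h7, zero_smul] at h8
    have : s i = 0 := h8
    rw [hsi] at this
    have := hθ.1
    obtain ⟨u, hu⟩ := exists_ne (0 : U)
    exact hu (LinearMap.congr_fun ‹LinearMap.id = 0› u)

lemma homN_conj {ρ : Representation ℂ G V} {θ : Representation ℂ N U} {t : G} {A : U ≃ₗ[ℂ] U}
    (hA : ∀ n u, A (θ n u) = θ (MulAut.conjNormal t⁻¹ n) (A u)) {f : U →ₗ[ℂ] V}
    (hf : f ∈ homN θ ρ) : ρ t ∘ₗ f ∘ₗ A.toLinearMap ∈ homN θ ρ := by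
  intro n u
  simp only [LinearMap.comp_apply, LinearEquiv.coe_coe]
  rw [hA, hf, ← rep_mul_apply, ← rep_mul_apply]
  congr 2
  simp [mul_assoc]

lemma finrank_clifford [Finite G] [FiniteDimensional ℂ U] [FiniteDimensional ℂ V]
    {ρ : Representation ℂ G V} (hρ : Irr ρ) {θ : Representation ℂ N U} (hθ : Irr θ)
    (h0 : homN θ ρ ≠ ⊥) :
    finrank ℂ V = (inertia θ).index * (finrank ℂ U * finrank ℂ (homN θ ρ)) := by
  refine le_antisymm (upper hρ _ _ h0 ?_) (lower hθ)
  intro t ht f hf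
  obtain ⟨A, hA⟩ := inv_mem ht
  exact ⟨A, homN_conj hA hf⟩

/-- Extension of a representation to a larger subgroup. -/
def Extends {T : Subgroup G} (θ' : Representation ℂ T U) (θ : Representation ℂ N U) : Prop :=
  ∀ (n : N) (h : (n : G) ∈ T), θ' ⟨n, h⟩ = θ n

lemma ext_conj {θ : Representation ℂ N U} {θ' : Representation ℂ (inertia θ) U}
    (h : Extends θ' θ) (t : inertia θ) (n : N) (u : U) :
    repEquiv θ' t (θ n u) = θ (MulAut.conjNormal (t : G) n) (repEquiv θ' t u) := by
  rw [← h n (le_inertia θ n.2), ← h _ (le_inertia θ (Subtype.coe_prop _))]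
  simp only [repEquiv_apply]
  rw [← rep_mul_apply, ← rep_mul_apply]
  congr 2
  ext
  simp

/-- The action on the space of `N`-intertwiners. -/
noncomputable def hRep (ρ : Representation ℂ G V) {θ : Representation ℂ N U}
    {θ' : Representation ℂ (inertia θ) U}
    (h : Extends θ' θ) : Representation ℂ (inertia θ) (homN θ ρ) where
  toFun t := LinearMap.restrict
    (((LinearMap.llcomp ℂ U V V (ρ t)) ∘ₗ LinearMap.lcomp ℂ V (θ' t⁻¹)) :
      (U →ₗ[ℂ] V) →ₗ[ℂ] (U →ₗ[ℂ] V)) (fun f hf => by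
      have := homN_conj (ρ := ρ) (t := t) (A := repEquiv θ' t⁻¹) (fun n u => ext_conj h t⁻¹ n u) hf
      exact this)
  map_one' := by ext; simp
  map_mul' a b := by
    ext f u
    change ρ ((a * b : inertia θ) : G) (f.1 (θ' (a * b)⁻¹ u)) = ρ a (ρ b (f.1 (θ' b⁻¹ (θ' a⁻¹ u))))
    rw [mul_inv_rev, rep_mul_apply θ', Subgroup.coe_mul, rep_mul_apply]

lemma hRep_apply (ρ : Representation ℂ G V) {θ : Representation ℂ N U}
    {θ' : Representation ℂ (inertia θ) U} (h : Extends θ' θ) (t : inertia θ) (f : homN θ ρ) (u : U) :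
    (hRep ρ h t f : U →ₗ[ℂ] V) u = ρ t ((f : U →ₗ[ℂ] V) (θ' t⁻¹ u)) := rfl

lemma hRep_irr [Finite G] [FiniteDimensional ℂ U] [FiniteDimensional ℂ V]
    {ρ : Representation ℂ G V} (hρ : Irr ρ) {θ : Representation ℂ N U} (hθ : Irr θ)
    (h0 : homN θ ρ ≠ ⊥) {θ' : Representation ℂ (inertia θ) U} (h : Extends θ' θ) :
    Irr (hRep ρ h) := by
  refine ⟨Submodule.nontrivial_iff_ne_bot.2 h0, fun Y hY => ?_⟩
  by_cases hY0 : Y = ⊥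
  · exact Or.inl hY0
  right
  have h1 := upper hρ (inertia θ) (Y.map (homN θ ρ).subtype) ?_ ?_
  · rw [finrank_clifford hρ hθ h0, Submodule.finrank_map_subtype_eq] at h1
    have h2 : 0 < (inertia θ).index := Nat.pos_of_ne_zero Subgroup.FiniteIndex.index_ne_zero
    have := hθ.1
    have h3 : 0 < finrank ℂ U := finrank_pos
    have h4 := Nat.le_of_mul_le_mul_left (Nat.le_of_mul_le_mul_left h1 h2) h3
    exact Submodule.eq_top_of_finrank_eq (le_antisymm (Submodule.finrank_le Y) h4)
  · intro h0
    apply hY0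
    rw [Submodule.eq_bot_iff] at h0 ⊢
    intro y hy
    exact Subtype.ext (h0 y ⟨y, hy, rfl⟩)
  · rintro t ht _ ⟨f, hf, rfl⟩
    refine ⟨repEquiv θ' (⟨t, ht⟩⁻¹), ⟨hRep ρ h ⟨t, ht⟩ f, hY _ _ hf, rfl⟩⟩

lemma hRep_triv (ρ : Representation ℂ G V) {θ : Representation ℂ N U}
    {θ' : Representation ℂ (inertia θ) U} (h : Extends θ' θ) (t : inertia θ) (ht : (t : G) ∈ N) :
    hRep ρ h t = 1 := by
  ext f u
  rw [hRep_apply]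
  have h1 : θ' t⁻¹ = θ ⟨t, ht⟩⁻¹ := h ⟨t, ht⟩⁻¹ (t⁻¹).2
  rw [h1, f.2]
  rw [← rep_mul_apply]
  simp

theorem clifford_A [Finite G] [FiniteDimensional ℂ V] {ρ : Representation ℂ G V} (hρ : Irr ρ) :
    ∃ (U : Type) (_ : AddCommGroup U) (_ : Module ℂ U) (_ : FiniteDimensional ℂ U)
      (θ : Representation ℂ N U), Irr θ ∧ (inertia θ).index ∣ finrank ℂ V ∧
      ∀ θ' : Representation ℂ (inertia θ) U, Extends θ' θ →
        ∃ (W : Type) (_ : AddCommGroup W) (_ : Module ℂ W) (_ : FiniteDimensional ℂ W)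
          (ω : Representation ℂ (inertia θ) W), Irr ω ∧
          (∀ t : inertia θ, (t : G) ∈ N → ω t = 1) ∧
          finrank ℂ V = (inertia θ).index * (finrank ℂ U * finrank ℂ W) := by
  have := hρ.1
  obtain ⟨X, hX, hXi⟩ := exists_irr_sub (ρ.comp N.subtype)
  have h0 : homN (subrep (ρ.comp N.subtype) X hX) ρ ≠ ⊥ := by
    intro h
    have h1 : X.subtype ∈ homN (subrep (ρ.comp N.subtype) X hX) ρ := by
      intro n u
      rfl
    rw [h, Submodule.mem_bot] at h1
    have := hXi.1
    obtain ⟨u, hu⟩ := exists_ne (0 : X)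
    exact hu (Subtype.ext (LinearMap.congr_fun h1 u))
  refine ⟨X, inferInstance, inferInstance, inferInstance, subrep (ρ.comp N.subtype) X hX, hXi,
    ⟨_, finrank_clifford hρ hXi h0⟩, fun θ' hθ' => ?_⟩
  exact ⟨_, inferInstance, inferInstance, inferInstance, hRep ρ hθ', hRep_irr hρ hXi h0 hθ',
    hRep_triv ρ hθ', finrank_clifford hρ hXi h0⟩

/-- Coinduced module. -/
def coi {T : Subgroup G} (σ : Representation ℂ T V) : Submodule ℂ (G → V) where
  carrier := {f | ∀ (t : T) g, f (t * g) = σ t (f g)}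
  add_mem' := by
    intro a b ha hb t g
    simp [ha t g, hb t g]
  zero_mem' := by intro t g; simp
  smul_mem' := by
    intro c a ha t g
    simp [ha t g]

/-- Coinduced representation. -/
def coiRep {T : Subgroup G} (σ : Representation ℂ T V) : Representation ℂ G (coi σ) where
  toFun h := LinearMap.restrict (LinearMap.funLeft ℂ V (fun g => g * h)) (fun f hf t g => by
    simp only [LinearMap.funLeft_apply, mul_assoc]
    exact hf t (g * h))
  map_one' := by ext; simp [LinearMap.funLeft_apply]
  map_mul' a b := by
    ext f g
    change f.1 (g * (a * b)) = f.1 (g * a * b)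
    rw [mul_assoc]

lemma coiRep_apply {T : Subgroup G} (σ : Representation ℂ T V) (h g : G) (f : coi σ) :
    (coiRep σ h f : G → V) g = (f : G → V) (g * h) := rfl

lemma exists_over [Finite G] [FiniteDimensional ℂ W] [Nontrivial W] {T : Subgroup G}
    (σ : Representation ℂ T W) :
    ∃ (V : Type) (_ : AddCommGroup V) (_ : Module ℂ V) (_ : FiniteDimensional ℂ V)
      (ρ : Representation ℂ G V), Irr ρ ∧ ∃ f : W →ₗ[ℂ] V, Inter σ (ρ.comp T.subtype) f ∧ f ≠ 0 := by
  classical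
  have hnt : Nontrivial (coi σ) := by
    obtain ⟨w, hw⟩ := exists_ne (0 : W)
    refine ⟨⟨⟨fun g => if h : g ∈ T then σ ⟨g, h⟩ w else 0, ?_⟩, 0, ?_⟩⟩
    · intro t g
      change dite _ _ _ = σ t (dite _ _ _)
      by_cases hg : g ∈ T
      · have : (t : G) * g ∈ T := mul_mem t.2 hg
        rw [dif_pos this, dif_pos hg, ← rep_mul_apply]
        rfl
      · have : ¬ (t : G) * g ∈ T := fun h => hg ((Subgroup.mul_mem_cancel_left T t.2).1 h)
        rw [dif_neg this, dif_neg hg, map_zero]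
    · intro h
      have h1 := congrFun (congrArg Subtype.val h) 1
      simp only [one_mem, dif_pos] at h1
      apply hw
      have : (⟨1, one_mem T⟩ : T) = 1 := rfl
      rw [this, map_one] at h1
      exact h1
  have := Fintype.ofFinite G
  obtain ⟨X, hX, hXi⟩ := exists_irr_sub (coiRep σ)
  refine ⟨X, inferInstance, inferInstance, inferInstance, subrep _ X hX, hXi, ?_⟩
  let ev : X →ₗ[ℂ] W := LinearMap.proj (1 : G) ∘ₗ (coi σ).subtype ∘ₗ X.subtype
  have hev : Inter (V := X) (W := W) ((subrep (coiRep σ) X hX).comp T.subtype) σ ev := by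
    intro t x
    have h1 := (x : coi σ).2 t 1
    have h2 : ev (((subrep (coiRep σ) X hX).comp T.subtype) t x) = (x : coi σ).1 (1 * t) := rfl
    rw [h2, one_mul]
    rw [mul_one] at h1
    exact h1
  refine exists_back hev ?_
  intro h0
  have := hXi.1
  obtain ⟨x, hx⟩ := exists_ne (0 : X)
  apply hx
  ext g
  have h1 := LinearMap.congr_fun h0 (subrep (coiRep σ) X hX g x)
  have h2 : ev (subrep (coiRep σ) X hX g x) = (x : coi σ).1 (1 * g) := rfl
  rw [h2, one_mul] at h1
  exact h1

open TensorProduct in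
theorem clifford_B [Finite G] [FiniteDimensional ℂ U] [FiniteDimensional ℂ W]
    {θ : Representation ℂ N U} (hθ : Irr θ) {θ' : Representation ℂ (inertia θ) U}
    (h : Extends θ' θ) {ω : Representation ℂ (inertia θ) W} (hω : Irr ω)
    (ht : ∀ t : inertia θ, (t : G) ∈ N → ω t = 1) :
    IsDeg G ((inertia θ).index * (finrank ℂ U * finrank ℂ W)) := by
  have := hθ.1
  have := hω.1
  obtain ⟨V, _, _, _, ρ, hρ, φ, hφ, hφ0⟩ := exists_over (Representation.tprod θ' ω)
  let f : W →ₗ[ℂ] homN θ ρ := LinearMap.codRestrict _ (TensorProduct.curry φ).flip (fun w => by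
    intro n u
    have hn := le_inertia θ n.2
    have h1 := hφ ⟨n, hn⟩ (u ⊗ₜ w)
    simp only [Representation.tprod_apply, TensorProduct.map_tmul, ht ⟨n, hn⟩ n.2, h n hn] at h1
    exact h1)
  have hfa : ∀ w u, (f w : U →ₗ[ℂ] V) u = φ (u ⊗ₜ w) := fun w u => rfl
  have hf : Inter ω (hRep ρ h) f := by
    intro t w
    ext u
    rw [hRep_apply, hfa, hfa]
    have h1 := hφ t (θ' t⁻¹ u ⊗ₜ w)
    simp only [Representation.tprod_apply, TensorProduct.map_tmul, rep_apply_inv] at h1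
    exact h1
  have hf0 : f ≠ 0 := by
    intro h0
    apply hφ0
    ext u w
    have := congrArg (fun f : W →ₗ[ℂ] homN θ ρ => (f w : U →ₗ[ℂ] V) u) h0
    exact this
  have h0 : homN θ ρ ≠ ⊥ := by
    intro hb
    apply hf0
    ext w u
    have := (Submodule.eq_bot_iff _).1 hb _ (f w).2
    simp [this]
  have hi := hRep_irr hρ hθ h0 h
  have he := (LinearEquiv.ofBijective f ⟨hω.inj hf hf0, hi.surj hf hf0⟩).finrank_eq
  refine ⟨V, _, _, inferInstance, ρ, hρ, ?_⟩
  rw [finrank_clifford hρ hθ h0, he]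

/-- The square of a degree is at most the group order. -/
theorem deg_sq_le [Finite G] [FiniteDimensional ℂ U] {θ : Representation ℂ G U} (hθ : Irr θ) :
    finrank ℂ U * finrank ℂ U ≤ Nat.card G := by
  have := Fintype.ofFinite G
  let b := finBasis ℂ U
  let reg : Representation ℂ G (G → ℂ) :=
    { toFun := fun h => LinearMap.funLeft ℂ ℂ (fun g => g * h)
      map_one' := by ext; simp [LinearMap.funLeft_apply]
      map_mul' := fun a b => by ext; simp [LinearMap.funLeft_apply, mul_assoc] }
  let f : Fin (finrank ℂ U) → U →ₗ[ℂ] (G → ℂ) := fun i => LinearMap.pi fun g => b.coord i ∘ₗ θ g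
  have hinj := indep_homs (ι := Fin (finrank ℂ U)) (fun _ => θ) (fun _ => hθ) reg f ?_ ?_
  · have h3 := LinearMap.finrank_le_finrank_of_injective hinj
    rw [finrank_pi_fintype] at h3
    simpa using h3
  · intro i h u
    ext g
    have : f i (θ h u) g = b.coord i (θ g (θ h u)) := rfl
    rw [this, ← rep_mul_apply]
    rfl
  · intro i s hs hsi h0
    choose a ha using fun j => schur hθ (hs j)
    have h1 : a i = 0 := by
      have h2 := congrFun (h0 (b i)) 1
      rw [Finset.sum_apply] at h2
      have h3 : ∀ j, f j (s j (b i)) 1 = a j * b.coord j (b i) := by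
        intro j
        have : f j (s j (b i)) 1 = b.coord j (θ 1 (s j (b i))) := rfl
        rw [this, ha j, map_one]
        simp
      simp only [h3] at h2
      rw [Finset.sum_eq_single i] at h2
      · simpa using h2
      · intro j _ hj
        simp [hj.symm]
      · simp
    have h8 := ha i
    rw [h1, zero_smul, hsi] at h8
    have := hθ.1
    obtain ⟨u, hu⟩ := exists_ne (0 : U)
    exact hu (LinearMap.congr_fun h8 u)

end clifford
end CD

open CategoryTheory
set_option linter.unusedSectionVars false
namespace CD
open Module

section ext

/-- Every central extension of `Q` by `ℂˣ` splits. -/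
def SchurTriv (Q : Type) [Group Q] : Prop :=
  ∀ (E : Type) [Group E] (π : E →* Q) (ι : ℂˣ →* E), Function.Surjective π →
    Function.Injective ι → (∀ z e, ι z * e = e * ι z) → (∀ e, π e = 1 ↔ ∃ z, e = ι z) →
    ∃ δ : E →* ℂˣ, ∀ z, δ (ι z) = z

variable {G : Type} [Group G] {N : Subgroup G} [N.Normal]
  {U : Type} [AddCommGroup U] [Module ℂ U] [FiniteDimensional ℂ U]

/-- Pairs of a group element and a conjugating operator. -/
def extE (θ : Representation ℂ N U) : Subgroup (inertia θ × (U ≃ₗ[ℂ] U)) where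
  carrier := {e | ∀ n u, e.2 (θ n u) = θ (MulAut.conjNormal (e.1 : G) n) (e.2 u)}
  one_mem' := by intro n u; simp
  mul_mem' := by
    rintro ⟨a, A⟩ ⟨b, B⟩ hA hB n u
    simp only [Set.mem_ofPred_eq] at hA hB
    simp [hA, hB, map_mul]
  inv_mem' := by
    rintro ⟨a, A⟩ hA n u
    simp only [Set.mem_ofPred_eq] at hA
    change A.symm _ = θ _ (A.symm _)
    rw [LinearEquiv.symm_apply_eq, hA, ← MulAut.mul_apply, ← map_mul]
    simp

/-- The embedding of `N`. -/
noncomputable def extN (θ : Representation ℂ N U) : N →* extE θ where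
  toFun n := ⟨(⟨n, le_inertia θ n.2⟩, repEquiv θ n), by
    intro m u
    simp only [repEquiv_apply]
    rw [← rep_mul_apply, ← rep_mul_apply]
    congr 2
    ext
    simp⟩
  map_one' := by
    apply Subtype.ext
    refine Prod.ext rfl ?_
    ext u
    simp
  map_mul' a b := by
    apply Subtype.ext
    refine Prod.ext rfl ?_
    ext u
    simp

lemma extN_fst (θ : Representation ℂ N U) (n : N) : ((extN θ n).1.1 : G) = n := rfl
lemma extN_snd (θ : Representation ℂ N U) (n : N) (u : U) : (extN θ n).1.2 u = θ n u := rfl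

lemma extE_ext {θ : Representation ℂ N U} {a b : extE θ} (h : (a.1.1 : G) = b.1.1)
    (h2 : ∀ u, a.1.2 u = b.1.2 u) : a = b :=
  Subtype.ext (Prod.ext (Subtype.ext h) (LinearEquiv.ext h2))

instance extN_normal (θ : Representation ℂ N U) : (extN θ).range.Normal where
  conj_mem := by
    rintro _ ⟨n, rfl⟩ e
    refine ⟨MulAut.conjNormal (e.1.1 : G) n, ?_⟩
    apply extE_ext
    · rw [extN_fst]; simp [extN_fst]
    · intro u
      rw [extN_snd]
      have h := e.2 n ((e.1.2).symm u)
      rw [LinearEquiv.apply_symm_apply] at h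
      rw [← h]
      rfl

/-- Scalars. -/
noncomputable def extZ (θ : Representation ℂ N U) : ℂˣ →* extE θ where
  toFun z := ⟨(1, DistribMulAction.toModuleAut ℂ U z), by
    intro n u
    change z • _ = θ (MulAut.conjNormal 1 n) (z • u)
    simp⟩
  map_one' := by
    apply extE_ext
    · rfl
    · intro u; simp
  map_mul' a b := by
    apply extE_ext
    · simp
    · intro u; exact mul_smul a b u

lemma extZ_fst (θ : Representation ℂ N U) (z : ℂˣ) : (extZ θ z).1.1 = 1 := rfl
lemma extZ_snd (θ : Representation ℂ N U) (z : ℂˣ) (u : U) : (extZ θ z).1.2 u = z • u := rfl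

lemma extE_scalar {θ : Representation ℂ N U} (hθ : Irr θ) (e : extE θ) (he : e.1.1 = 1) :
    ∃ z, e = extZ θ z := by
  have h1 : Inter θ θ e.1.2.toLinearMap := by
    intro n u
    have := e.2 n u
    rw [he] at this
    simpa using this
  obtain ⟨c, hc⟩ := schur hθ h1
  have hc' : ∀ u, e.1.2 u = c • u := fun u => LinearMap.congr_fun hc u
  have hc0 : c ≠ 0 := by
    rintro rfl
    have := hθ.1
    obtain ⟨u, hu⟩ := exists_ne (0 : U)
    apply hu
    apply e.1.2.injective
    rw [hc' u, zero_smul, map_zero]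
  refine ⟨Units.mk0 c hc0, extE_ext ?_ ?_⟩
  · rw [he, extZ_fst]
  · intro u
    rw [hc', extZ_snd]
    rfl

lemma extZ_comm (θ : Representation ℂ N U) (z : ℂˣ) (e : extE θ) :
    extZ θ z * e = e * extZ θ z := by
  apply extE_ext
  · simp [extZ_fst]
  · intro u
    change z • e.1.2 u = e.1.2 (z • u)
    rw [Units.smul_def, Units.smul_def, map_smul]

theorem exists_extension {Q : Type} [Group Q] (hQ : SchurTriv Q)
    {θ : Representation ℂ N U} (hθ : Irr θ) (q : inertia θ →* Q) (hq : Function.Surjective q)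
    (hker : ∀ t, q t = 1 ↔ (t : G) ∈ N) :
    ∃ θ' : Representation ℂ (inertia θ) U, Extends θ' θ := by
  let fst : extE θ →* inertia θ := (MonoidHom.fst _ _).comp (extE θ).subtype
  have hfst : Function.Surjective fst := by
    rintro ⟨t, ht⟩
    obtain ⟨A, hA⟩ := ht
    exact ⟨⟨(⟨t, _⟩, A), hA⟩, rfl⟩
  let π : extE θ ⧸ (extN θ).range →* Q := QuotientGroup.lift _ (q.comp fst) (by
    rintro _ ⟨n, rfl⟩
    exact (hker _).2 n.2)
  let ι : ℂˣ →* extE θ ⧸ (extN θ).range := (QuotientGroup.mk' _).comp (extZ θ)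
  have hk : ∃ δ : extE θ ⧸ (extN θ).range →* ℂˣ, ∀ z, δ (ι z) = z := by
    refine hQ _ π ι ?_ ?_ ?_ ?_
    · intro x
      obtain ⟨t, rfl⟩ := hq x
      obtain ⟨e, rfl⟩ := hfst t
      exact ⟨QuotientGroup.mk' _ e, rfl⟩
    · rw [injective_iff_map_eq_one]
      intro z hz
      obtain ⟨n, hn⟩ := (QuotientGroup.eq_one_iff _).1 hz
      have h1 : n = 1 := by
        have := congrArg (fun e : extE θ => (e.1.1 : G)) hn
        exact Subtype.ext this
      rw [h1, map_one] at hn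
      have := hθ.1
      obtain ⟨u, hu⟩ := exists_ne (0 : U)
      have h2 : u = z • u := congrArg (fun e : extE θ => e.1.2 u) hn
      rw [Units.smul_def] at h2
      have h3 : ((z : ℂ) - 1) • u = 0 := by rw [sub_smul, ← h2, one_smul, sub_self]
      rcases smul_eq_zero.1 h3 with h | h
      · exact Units.ext (sub_eq_zero.1 h)
      · exact absurd h hu
    · intro z e
      obtain ⟨e, rfl⟩ := QuotientGroup.mk'_surjective _ e
      change QuotientGroup.mk' _ (extZ θ z) * _ = _ * QuotientGroup.mk' _ (extZ θ z)
      rw [← map_mul, extZ_comm, map_mul]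
    · intro e
      obtain ⟨e, rfl⟩ := QuotientGroup.mk'_surjective _ e
      constructor
      · intro h
        have h1 : (e.1.1 : G) ∈ N := (hker _).1 h
        have h2 : (e * (extN θ ⟨_, h1⟩)⁻¹).1.1 = 1 := by
          apply Subtype.ext
          simp [extN_fst]
        obtain ⟨z, hz⟩ := extE_scalar hθ _ h2
        refine ⟨z, ?_⟩
        change _ = QuotientGroup.mk' _ (extZ θ z)
        rw [← hz, map_mul]
        have : QuotientGroup.mk' (extN θ).range (extN θ ⟨_, h1⟩)⁻¹ = 1 :=
          (QuotientGroup.eq_one_iff _).2 ⟨⟨_, h1⟩⁻¹, by rw [map_inv]⟩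
        rw [this, mul_one]
      · rintro ⟨z, hz⟩
        rw [hz]
        change q 1 = 1
        exact map_one q
  obtain ⟨δ, hδ⟩ := hk
  let χ : extE θ →* (U ≃ₗ[ℂ] U) :=
    { toFun := fun e => (extZ θ (δ (QuotientGroup.mk' _ e))⁻¹).1.2 * e.1.2
      map_one' := by
        ext u
        simp
      map_mul' := fun a b => by
        ext u
        change (δ (QuotientGroup.mk' _ (a * b)))⁻¹ • a.1.2 (b.1.2 u) =
          (δ (QuotientGroup.mk' _ a))⁻¹ • a.1.2 ((δ (QuotientGroup.mk' _ b))⁻¹ • b.1.2 u)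
        rw [Units.smul_def (δ (QuotientGroup.mk' _ b))⁻¹, map_smul, ← Units.smul_def, smul_smul,
          map_mul, map_mul, mul_inv] }
  have hχ : ∀ e u, χ e u = (δ (QuotientGroup.mk' _ e))⁻¹ • e.1.2 u := fun e u => rfl
  have hle : fst.ker ≤ χ.ker := by
    intro e he
    obtain ⟨z, rfl⟩ := extE_scalar hθ e he
    rw [MonoidHom.mem_ker]
    ext u
    rw [hχ, extZ_snd]
    have : δ (QuotientGroup.mk' _ (extZ θ z)) = z := hδ z
    rw [this, inv_smul_smul]
    rfl
  let ψ := MonoidHom.liftOfSurjective fst hfst ⟨χ, hle⟩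
  have hψ : ∀ e, ψ (fst e) = χ e := fun e => MonoidHom.liftOfRightInverse_comp_apply _ _ _ ⟨χ, hle⟩ e
  refine ⟨(LinearEquiv.automorphismGroup.toLinearMapMonoidHom).comp ψ, ?_⟩
  intro n hn
  ext u
  have h1 : (⟨n, hn⟩ : inertia θ) = fst (extN θ n) := rfl
  change ψ ⟨n, hn⟩ u = _
  rw [h1, hψ, hχ, extN_snd]
  have : QuotientGroup.mk' (extN θ).range (extN θ n) = 1 :=
    (QuotientGroup.eq_one_iff _).2 ⟨n, rfl⟩
  rw [this]
  simp

/-! Splitting tools. -/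
variable {E Q : Type} [Group E] [Group Q]

/-- The data of a central extension by `ℂˣ`. -/
structure CExt (π : E →* Q) (ι : ℂˣ →* E) : Prop where
  surj : Function.Surjective π
  inj : Function.Injective ι
  comm : ∀ z e, ι z * e = e * ι z
  ker : ∀ e, π e = 1 ↔ ∃ z, e = ι z

/-- There is a map which is the `k`-th power on the scalars. -/
def DPow (ι : ℂˣ →* E) (k : ℕ) : Prop := ∃ δ : E →* ℂˣ, ∀ z, δ (ι z) = z ^ k

lemma dpow_gcd {ι : ℂˣ →* E} {a b : ℕ} (ha : DPow ι a) (hb : DPow ι b) : DPow ι (a.gcd b) := by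
  obtain ⟨f, hf⟩ := ha
  obtain ⟨g, hg⟩ := hb
  refine ⟨f ^ (a.gcdA b) * g ^ (a.gcdB b), fun z => ?_⟩
  have h := Nat.gcd_eq_gcd_ab a b
  change (f (ι z)) ^ (a.gcdA b) * (g (ι z)) ^ (a.gcdB b) = _
  rw [hf, hg, ← zpow_natCast, ← zpow_natCast, ← zpow_natCast, ← zpow_mul, ← zpow_mul, ← zpow_add, h]

lemma dpow_of_section [Finite Q] {π : E →* Q} {ι : ℂˣ →* E} (h : CExt π ι) (R : Subgroup Q)
    (s : R →* E) (hs : ∀ r, π (s r) = r) : DPow ι R.index := by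
  let σ : R.comap π →* E := s.comp (π.subgroupComap R)
  have hσ : ∀ x, π (σ x) = π x := fun x => hs _
  have hex : ∀ x : R.comap π, ∃ z, (x : E) * (σ x)⁻¹ = ι z := by
    intro x
    rw [← h.ker, map_mul, map_inv, hσ, mul_inv_cancel]
  choose l hl using hex
  have hl1 : ∀ x : R.comap π, (x : E) = ι (l x) * σ x := by
    intro x
    rw [← hl, inv_mul_cancel_right]
  let lam : R.comap π →* ℂˣ := MonoidHom.mk' l (by
    intro a b
    apply h.inj
    rw [← hl, map_mul, map_mul, Subgroup.coe_mul, hl1 a, hl1 b]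
    have := h.comm (l b) (σ a)
    simp only [mul_inv_rev, mul_assoc]
    rw [← mul_assoc (σ a), ← this]
    simp [mul_assoc])
  have hidx : (R.comap π).index = R.index := Subgroup.index_comap_of_surjective R h.surj
  have hfi : (R.comap π).FiniteIndex := ⟨by rw [hidx]; exact Subgroup.FiniteIndex.index_ne_zero⟩
  refine ⟨MonoidHom.transfer lam, fun z => ?_⟩
  have hmem : ∀ z, ι z ∈ R.comap π := fun z => by
    rw [Subgroup.mem_comap, (h.ker (ι z)).2 ⟨z, rfl⟩]; exact one_mem R
  rw [MonoidHom.transfer_eq_pow lam (ι z)]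
  · rw [← hidx]
    have h1 : ∀ y hy, lam ⟨y, hy⟩ = l ⟨y, hy⟩ := fun _ _ => rfl
    rw [h1]
    apply h.inj
    rw [← hl]
    have h2 : ∀ x : R.comap π, π x = 1 → σ x = 1 := by
      intro x hx
      have : π.subgroupComap R x = 1 := Subtype.ext hx
      change s _ = 1
      rw [this, map_one]
    rw [map_pow, h2]
    · simp
    · simp [(h.ker (ι z)).2 ⟨z, rfl⟩]
  · intro k g0 hk
    have h3 : ι z ^ k * g0 = g0 * ι z ^ k := by rw [← map_pow, h.comm]
    rw [mul_assoc, h3]; group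

lemma exists_root (n : ℕ) (hn : n ≠ 0) (z : ℂˣ) : ∃ w : ℂˣ, w ^ n = z := by
  obtain ⟨w, hw⟩ := IsAlgClosed.exists_pow_nat_eq (z : ℂ) (Nat.pos_of_ne_zero hn)
  have : w ≠ 0 := by
    rintro rfl
    rw [zero_pow hn] at hw
    exact z.ne_zero hw.symm
  exact ⟨Units.mk0 w this, Units.ext (by simpa using hw)⟩

lemma exists_section_cyclic [Finite Q] {π : E →* Q} {ι : ℂˣ →* E} (h : CExt π ι) (r : Q) :
    ∃ s : Subgroup.zpowers r →* E, ∀ x, π (s x) = x := by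
  obtain ⟨e, he⟩ := h.surj r
  obtain ⟨z, hz⟩ := (h.ker (e ^ orderOf r)).1 (by rw [map_pow, he, pow_orderOf_eq_one])
  obtain ⟨w, hw⟩ := exists_root (orderOf r) (orderOf_pos r).ne' z⁻¹
  have h1 : (ι w * e) ^ orderOf r = 1 := by
    rw [Commute.mul_pow (h.comm w e), ← map_pow, hw, hz, ← map_mul]; simp
  have h2 : orderOf (ι w * e) ∣ orderOf r := orderOf_dvd_of_pow_eq_one h1
  have hg : ∀ x : Subgroup.zpowers r, x ∈ Subgroup.zpowers (⟨r, Subgroup.mem_zpowers r⟩ : Subgroup.zpowers r) := by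
    rintro ⟨x, k, rfl⟩
    exact ⟨k, by ext; simp⟩
  refine ⟨monoidHomOfForallMemZpowers hg (g' := ι w * e) (by simpa using h2), ?_⟩
  rintro ⟨x, k, rfl⟩
  have h3 : (⟨r ^ k, k, rfl⟩ : Subgroup.zpowers r) = ⟨r, Subgroup.mem_zpowers r⟩ ^ k := by
    ext; simp
  change π (_ ) = r ^ k
  have h4 : (⟨(fun x => r ^ x) k, k, rfl⟩ : Subgroup.zpowers r) = ⟨r, Subgroup.mem_zpowers r⟩ ^ k := h3
  rw [h4, map_zpow, monoidHomOfForallMemZpowers_apply_gen, map_zpow, map_mul, he,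
    (h.ker (ι w)).2 ⟨w, rfl⟩, one_mul]

lemma dpow_cyclic [Finite Q] {π : E →* Q} {ι : ℂˣ →* E} (h : CExt π ι) (r : Q) :
    DPow ι (Subgroup.zpowers r).index := by
  obtain ⟨s, hs⟩ := exists_section_cyclic h r
  exact dpow_of_section h _ s hs

lemma schurTriv_cyclic [Finite Q] [IsCyclic Q] : SchurTriv Q := by
  intro E _ π ι h1 h2 h3 h4
  obtain ⟨r, hr⟩ := IsCyclic.exists_generator (α := Q)
  have h : CExt π ι := ⟨h1, h2, h3, h4⟩
  obtain ⟨δ, hδ⟩ := dpow_cyclic h r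
  refine ⟨δ, fun z => ?_⟩
  rw [hδ, (Subgroup.eq_top_iff' _).2 hr, Subgroup.index_top, pow_one]

end ext
end CD

open CategoryTheory
set_option linter.unusedSectionVars false
namespace CD
open Module
open scoped commutatorElement

section field8
variable {F : Type} [Field F] [Fintype F]

lemma two0 (hF : Fintype.card F = 8) : (2 : F) = 0 := by
  have h := FiniteField.cast_card_eq_zero F
  rw [hF] at h
  have h2 : (2 : F) ^ 3 = 0 := by push_cast at h; rw [← h]; norm_num
  exact pow_eq_zero_iff (by norm_num) |>.1 h2

lemma pow8 (hF : Fintype.card F = 8) (x : F) : x ^ 8 = x := by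
  have := FiniteField.pow_card x
  rwa [hF] at this

lemma neg8 (hF : Fintype.card F = 8) (x : F) : -x = x := by
  have := two0 hF
  linear_combination -x * this

lemma cases8 (hF : Fintype.card F = 8) (x : F) :
    x = 0 ∨ x = 1 ∨ x ^ 3 + x + 1 = 0 ∨ x ^ 3 + x ^ 2 + 1 = 0 := by
  have h2 := two0 hF
  have h8 := pow8 hF x
  have h : x * ((x + 1) * ((x ^ 3 + x + 1) * (x ^ 3 + x ^ 2 + 1))) = 0 := by
    linear_combination h8 + (x + x ^ 2+ x^3 + 2*x^4+ 2 * x^5+x^6+x^7) * h2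
  rcases mul_eq_zero.1 h with h | h
  · exact Or.inl h
  rcases mul_eq_zero.1 h with h | h
  · right; left; linear_combination h - h2
  rcases mul_eq_zero.1 h with h | h
  · right; right; left; exact h
  · right; right; right; exact h

lemma exists_c (hF : Fintype.card F = 8) : ∃ c : F, c ^ 3 = c + 1 := by
  have h2 := two0 hF
  classical
  obtain ⟨x, hx⟩ : ∃ x : F, x ∉ ({0, 1} : Finset F) := by
    by_contra h
    push Not at h
    have h1 : (Finset.univ : Finset F) ⊆ {0, 1} := fun x _ => h x
    have := Finset.card_le_card h1
    rw [Finset.card_univ, hF] at this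
    have h3 := Finset.card_le_two (a := (0 : F)) (b := 1)
    omega
  simp only [Finset.mem_insert, Finset.mem_singleton, not_or] at hx
  rcases cases8 hF x with h | h | h | h
  · exact absurd h hx.1
  · exact absurd h hx.2
  · exact ⟨x, by linear_combination h - (x + 1) * h2⟩
  · exact ⟨x + 1, by linear_combination h + (x ^ 2 + x - 1) * h2⟩

lemma all8 (hF : Fintype.card F = 8) {c : F} (hc : c ^ 3 = c + 1) (y : F) :
    y = 0 ∨ y = 1 ∨ y = c ∨ y = c ^ 2 ∨ y = c + 1 ∨ y = c ^ 2 + 1 ∨ y = c ^ 2 + c ∨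
      y = c ^ 2 + c + 1 := by
  have h2 := two0 hF
  rcases cases8 hF y with h | h | h | h
  · simp [h]
  · simp [h]
  · have : (y - c) * ((y - c ^ 2) * (y - (c ^ 2 + c))) = 0 := by grind
    rcases mul_eq_zero.1 this with h | h
    · rw [sub_eq_zero] at h; simp [h]
    rcases mul_eq_zero.1 h with h | h
    · rw [sub_eq_zero] at h; simp [h]
    · rw [sub_eq_zero] at h; simp [h]
  · have : (y - (c + 1)) * ((y - (c ^ 2 + 1)) * (y - (c ^ 2 + c + 1))) = 0 := by grind
    rcases mul_eq_zero.1 this with h | h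
    · rw [sub_eq_zero] at h; simp [h]
    rcases mul_eq_zero.1 h with h | h
    · rw [sub_eq_zero] at h; simp [h]
    · rw [sub_eq_zero] at h; simp [h]

lemma form_triv (hF : Fintype.card F = 8) (f : F → F → ℂˣ)
    (hadd : ∀ x x' y, f (x + x') y = f x y * f x' y) (hxx : ∀ x, f x x = 1)
    (hsymm : ∀ x y, f y x = (f x y)⁻¹) (hinv : ∀ b x y, b ≠ 0 → f (b * x) (b * y) = f x y)
    (x y : F) : f x y = 1 := by
  have h2 := two0 hF
  obtain ⟨c, hc⟩ := exists_c hF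
  have hc0 : c ≠ 0 := by
    rintro rfl
    simp at hc
  have hadd' : ∀ x y y', f x (y + y') = f x y * f x y' := by
    intro x y y'
    rw [hsymm, hadd, mul_inv, ← hsymm, ← hsymm]
  have h0 : ∀ y, f 0 y = 1 := by
    intro y
    have := hadd 0 0 y
    rw [add_zero] at this
    exact left_eq_mul.1 this
  have hsq : ∀ x y, f x y * f x y = 1 := by
    intro x y
    rw [← hadd, ← two_mul, h2, zero_mul, h0]
  have hs : ∀ x y, f y x = f x y := by
    intro x y
    rw [hsymm]
    exact inv_eq_of_mul_eq_one_left (hsq x y)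
  have hg2 : f 1 (c ^ 2) = 1 := by
    have e1 := hinv (c ^ 2) 1 c (pow_ne_zero 2 hc0)
    have e2 : c ^ 2 * c = c + 1 := by rw [← hc]; ring
    rw [e2, mul_one, hadd'] at e1
    have e3 := hinv c c 1 hc0
    rw [mul_one, ← sq, hs] at e3
    rw [hs c (c ^ 2), e3, hs 1 c] at e1
    rw [hs (c ^ 2) 1, hs c 1] at *
    exact mul_eq_left.1 e1
  have hg1 : f 1 c = 1 := by
    have e1 := hinv (c ^ 3) 1 c (pow_ne_zero 3 hc0)
    have e2 : c ^ 3 * c = c ^ 2 + c := by rw [hc]; ring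
    rw [e2, mul_one, hc, hadd, hadd', hadd', hg2, hxx] at e1
    have e3 := hinv c 1 c hc0
    rw [mul_one, ← sq] at e3
    rw [e3, mul_one, one_mul, hsq] at e1
    exact e1.symm
  have hg : ∀ y, f 1 y = 1 := by
    intro y
    have h00 : f 1 0 = 1 := by rw [hs, h0]
    rcases all8 hF hc y with h | h | h | h | h | h | h | h <;> rw [h] <;>
      simp only [hadd', hg1, hg2, hxx, h00, one_mul]
  by_cases hx : x = 0
  · rw [hx, h0]
  · have := hinv x 1 (x⁻¹ * y) hx
    rw [mul_inv_cancel_left₀ hx, mul_one, hg] at this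
    exact this

variable {E Q : Type} [Group E] [Group Q]

lemma comm_scalar {π : E →* Q} {ι : ℂˣ →* E} (h : CExt π ι) {a a' b b' : E} (ha : π a = π a')
    (hb : π b = π b') : ⁅a, b⁆ = ⁅a', b'⁆ := by
  obtain ⟨z, hz⟩ := (h.ker (a * a'⁻¹)).1 (by rw [map_mul, map_inv, ha, mul_inv_cancel])
  obtain ⟨w, hw⟩ := (h.ker (b * b'⁻¹)).1 (by rw [map_mul, map_inv, hb, mul_inv_cancel])
  have ha' : a = ι z * a' := by rw [← hz]; group
  have hb' : b = ι w * b' := by rw [← hw]; group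
  have hwi : ∀ e, e * (ι w)⁻¹ = (ι w)⁻¹ * e := fun e => by
    have := h.comm w⁻¹ e
    rw [map_inv] at this
    exact this.symm
  rw [ha', hb', commutatorElement_def, commutatorElement_def]
  calc ι z * a' * (ι w * b') * (ι z * a')⁻¹ * (ι w * b')⁻¹
      = ι z * (a' * ι w) * b' * a'⁻¹ * (ι z)⁻¹ * (b'⁻¹ * (ι w)⁻¹) := by group
    _ = ι z * (ι w * a') * b' * a'⁻¹ * (ι z)⁻¹ * ((ι w)⁻¹ * b'⁻¹) := by rw [h.comm w a', hwi]
    _ = ι z * (ι w * (a' * b' * a'⁻¹ * (ι z)⁻¹ * (ι w)⁻¹)) * b'⁻¹ := by group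
    _ = ι z * (a' * b' * a'⁻¹ * (ι z)⁻¹) * b'⁻¹ := by rw [h.comm w]; group
    _ = a' * b' * a'⁻¹ * b'⁻¹ := by rw [h.comm z]; group

/-- The section over an elementary abelian group of order eight. -/
lemma section_U (hF : Fintype.card F = 8) {π : E →* Q} {ι : ℂˣ →* E} (h : CExt π ι)
    (u : Multiplicative F →* Q)
    (hτ : ∀ b : F, b ≠ 0 → ∃ τ : Q, ∀ x : F, τ * u (.ofAdd x) * τ⁻¹ = u (.ofAdd (b * x))) :
    ∃ s : Multiplicative F →* E, ∀ x, π (s x) = u x := by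
  choose L hL using fun x : F => h.surj (u (.ofAdd x))
  have hex : ∀ x y, ∃ z, ⁅L x, L y⁆ = ι z := by
    intro x y
    rw [← h.ker, commutatorElement_def]
    simp only [map_mul, map_inv, hL]
    have : u (.ofAdd x) * u (.ofAdd y) = u (.ofAdd y) * u (.ofAdd x) := by
      rw [← map_mul u, ← map_mul u, mul_comm]
    rw [this]
    group
  choose f hf using hex
  have hLL : ∀ x y, ⁅L x, L y⁆ = 1 := by
    intro x y
    rw [hf, form_triv hF f, map_one]
    · intro x x' y
      apply h.inj
      rw [map_mul, ← hf, ← hf x y]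
      have e1 : ⁅L (x + x'), L y⁆ = ⁅L x * L x', L y⁆ := by
        apply comm_scalar h _ rfl
        rw [map_mul, hL, hL, hL, ← map_mul]
        rfl
      have e2 : ⁅L x * L x', L y⁆ = L x * ⁅L x', L y⁆ * (L x)⁻¹ * ⁅L x, L y⁆ := by
        simp only [commutatorElement_def]; group
      rw [e1, e2, hf x' y, ← h.comm, mul_inv_cancel_right, hf x y, h.comm]
    · intro x
      apply h.inj
      rw [← hf, commutatorElement_self, map_one]
    · intro x y
      apply h.inj
      rw [map_inv, ← hf, ← hf, commutatorElement_inv]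
    · intro b x y hb
      obtain ⟨τ, hτ⟩ := hτ b hb
      obtain ⟨t, ht⟩ := h.surj τ
      apply h.inj
      rw [← hf]
      have e1 : ⁅L (b * x), L (b * y)⁆ = ⁅t * L x * t⁻¹, t * L y * t⁻¹⁆ := by
        apply comm_scalar h <;> simp only [map_mul, map_inv, hL, ht, hτ]
      have e2 : ⁅t * L x * t⁻¹, t * L y * t⁻¹⁆ = t * ⁅L x, L y⁆ * t⁻¹ := by
        simp only [commutatorElement_def]; group
      rw [e1, e2, hf, ← h.comm, mul_inv_cancel_right]
  have hcom : ∀ e e' x y, π e = u (.ofAdd x) → π e' = u (.ofAdd y) → e * e' = e' * e := by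
    intro e e' x y he he'
    rw [← commutatorElement_eq_one_iff_mul_comm, ← hLL x y]
    apply comm_scalar h
    · rw [he, hL]
    · rw [he', hL]
  have h2 := two0 hF
  obtain ⟨c, hc⟩ := exists_c hF
  have hc0 : c ≠ 0 := by
    rintro rfl
    simp at hc
  have hc1 : c - 1 ≠ 0 := by
    intro h0
    have : c = 1 := by linear_combination h0
    rw [this] at hc
    apply one_ne_zero (α := F)
    linear_combination -hc
  obtain ⟨τ, hτ⟩ := hτ c hc0
  obtain ⟨t, ht⟩ := h.surj τ
  have hpi : ∀ y, π ⁅t, L y⁆ = u (.ofAdd ((c - 1) * y)) := by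
    intro y
    rw [commutatorElement_def]
    simp only [map_mul, map_inv, hL, ht, hτ]
    rw [← map_inv, ← map_mul]
    congr 1
    rw [sub_mul, one_mul, ofAdd_sub, div_eq_mul_inv]
  refine ⟨MonoidHom.mk' (fun x => ⁅t, L ((c - 1)⁻¹ * x.toAdd)⁆) ?_, ?_⟩
  · intro a b
    set x := (c - 1)⁻¹ * a.toAdd
    set y := (c - 1)⁻¹ * b.toAdd
    have e0 : (c - 1)⁻¹ * (a * b).toAdd = x + y := by
      rw [toAdd_mul, mul_add]
    have e1 : ⁅t, L (x + y)⁆ = ⁅t, L x * L y⁆ := by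
      apply comm_scalar h rfl
      rw [map_mul, hL, hL, hL, ← map_mul]
      rfl
    have e2 : ⁅t, L x * L y⁆ = ⁅t, L x⁆ * (L x * ⁅t, L y⁆) * (L x)⁻¹ := by
      simp only [commutatorElement_def]; group
    rw [e0, e1, e2, hcom (L x) _ _ _ (hL x) (hpi y)]
    group
  · intro x
    change π ⁅t, L ((c - 1)⁻¹ * x.toAdd)⁆ = _
    rw [hpi, mul_inv_cancel_left₀ hc1]
    rfl

lemma dpow_U [Finite Q] (hF : Fintype.card F = 8) {π : E →* Q} {ι : ℂˣ →* E} (h : CExt π ι)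
    (u : Multiplicative F →* Q) (hu : Function.Injective u)
    (hτ : ∀ b : F, b ≠ 0 → ∃ τ : Q, ∀ x : F, τ * u (.ofAdd x) * τ⁻¹ = u (.ofAdd (b * x))) :
    DPow ι u.range.index := by
  obtain ⟨s, hs⟩ := section_U hF h u hτ
  refine dpow_of_section h u.range (s.comp (MonoidHom.ofInjective hu).symm.toMonoidHom) ?_
  intro r
  change π (s _) = _
  rw [hs]
  have := MonoidHom.apply_ofInjective_symm hu r
  exact this

end field8
end CD

open CategoryTheory
set_option linter.all false
namespace CD
open Module
open scoped commutatorElement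

/-- Abbreviation for `SL₂`. -/
abbrev SL (F : Type) [Field F] : Type := Matrix.SpecialLinearGroup (Fin 2) F

section sl
variable {F : Type} [Field F]

lemma sl_ext {g h : SL F} (h1 : g.1 0 0 = h.1 0 0) (h2 : g.1 0 1 = h.1 0 1)
    (h3 : g.1 1 0 = h.1 1 0) (h4 : g.1 1 1 = h.1 1 1) : g = h := by
  apply Subtype.ext
  ext i j
  fin_cases i <;> fin_cases j <;> assumption

lemma sl_det (g : SL F) : g.1 0 0 * g.1 1 1 - g.1 0 1 * g.1 1 0 = 1 := by
  rw [← Matrix.det_fin_two]; exact g.2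

lemma mul00 (g h : SL F) : (g * h).1 0 0 = g.1 0 0 * h.1 0 0 + g.1 0 1 * h.1 1 0 := by
  simp [Matrix.mul_apply, Fin.sum_univ_two]
lemma mul01 (g h : SL F) : (g * h).1 0 1 = g.1 0 0 * h.1 0 1 + g.1 0 1 * h.1 1 1 := by
  simp [Matrix.mul_apply, Fin.sum_univ_two]
lemma mul10 (g h : SL F) : (g * h).1 1 0 = g.1 1 0 * h.1 0 0 + g.1 1 1 * h.1 1 0 := by
  simp [Matrix.mul_apply, Fin.sum_univ_two]
lemma mul11 (g h : SL F) : (g * h).1 1 1 = g.1 1 0 * h.1 0 1 + g.1 1 1 * h.1 1 1 := by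
  simp [Matrix.mul_apply, Fin.sum_univ_two]
lemma inv00 (g : SL F) : (g⁻¹).1 0 0 = g.1 1 1 := by
  simp [Matrix.adjugate_fin_two]
lemma inv01 (g : SL F) : (g⁻¹).1 0 1 = - g.1 0 1 := by
  simp [Matrix.adjugate_fin_two]
lemma inv10 (g : SL F) : (g⁻¹).1 1 0 = - g.1 1 0 := by
  simp [Matrix.adjugate_fin_two]
lemma inv11 (g : SL F) : (g⁻¹).1 1 1 = g.1 0 0 := by
  simp [Matrix.adjugate_fin_two]
lemma one00 : (1 : SL F).1 0 0 = 1 := by simp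
lemma one01 : (1 : SL F).1 0 1 = 0 := by simp
lemma one10 : (1 : SL F).1 1 0 = 0 := by simp
lemma one11 : (1 : SL F).1 1 1 = 1 := by simp

/-- Explicit matrices. -/
def m2 (a b c d : F) (h : a * d - b * c = 1) : SL F :=
  ⟨!![a, b; c, d], by rw [Matrix.det_fin_two_of, h]⟩

lemma m200 (a b c d : F) (h : a * d - b * c = 1) : (m2 a b c d h).1 0 0 = a := rfl
lemma m201 (a b c d : F) (h : a * d - b * c = 1) : (m2 a b c d h).1 0 1 = b := rfl
lemma m210 (a b c d : F) (h : a * d - b * c = 1) : (m2 a b c d h).1 1 0 = c := rfl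
lemma m211 (a b c d : F) (h : a * d - b * c = 1) : (m2 a b c d h).1 1 1 = d := rfl

/-- The unipotent elements. -/
def uu : Multiplicative F →* SL F where
  toFun x := m2 1 x.toAdd 0 1 (by ring)
  map_one' := by
    apply sl_ext <;> simp [m2]
  map_mul' x y := by
    apply sl_ext <;> simp only [mul00, mul01, mul10, mul11, m200, m201, m210, m211, toAdd_mul] <;> ring

/-- Unipotent element, additive form. -/
def u (x : F) : SL F := uu (.ofAdd x)

lemma u00 (x : F) : (u x).1 0 0 = 1 := rfl
lemma u01 (x : F) : (u x).1 0 1 = x := rfl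
lemma u10 (x : F) : (u x).1 1 0 = 0 := rfl
lemma u11 (x : F) : (u x).1 1 1 = 1 := rfl

/-- The diagonal elements. -/
def t (a : Fˣ) : SL F := m2 a 0 0 (a⁻¹ : Fˣ) (by simp)

lemma t00 (x : Fˣ) : (t x).1 0 0 = x := rfl
lemma t01 (x : Fˣ) : (t x).1 0 1 = 0 := rfl
lemma t10 (x : Fˣ) : (t x).1 1 0 = 0 := rfl
lemma t11 (x : Fˣ) : (t x).1 1 1 = (x⁻¹ : Fˣ) := rfl

lemma u_add (x y : F) : u (x + y) = u x * u y := by rw [u, ofAdd_add, map_mul]; rfl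
lemma u_zero : u (0 : F) = 1 := map_one uu
lemma u_inj {x y : F} (h : u x = u y) : x = y := by
  have := congrArg (fun g : SL F => g.1 0 1) h
  exact this
lemma uu_inj : Function.Injective (uu (F := F)) := by
  intro x y h
  exact u_inj (F := F) h

lemma t_mul (a b : Fˣ) : t (a * b) = t a * t b := by
  apply sl_ext <;> simp [mul00, mul01, mul10, mul11, t00, t01, t10, t11, mul_comm]
lemma t_one : t (1 : Fˣ) = 1 := by
  apply sl_ext <;> simp [t00, t01, t10, t11]
lemma t_inj {x y : Fˣ} (h : t x = t y) : x = y := by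
  have := congrArg (fun g : SL F => g.1 0 0) h
  exact Units.ext this

lemma t_u (a : Fˣ) (x : F) : t a * u x * (t a)⁻¹ = u (a ^ 2 * x) := by
  apply sl_ext <;> simp [mul00, mul01, mul10, mul11, t00, t01, t10, t11, inv00, inv01, inv10, inv11,
    u00, u01, u10, u11]
  ring

/-- The Borel subgroup. -/
def BB (F : Type) [Field F] : Subgroup (SL F) where
  carrier := {g | g.1 1 0 = 0}
  one_mem' := one10
  mul_mem' := by
    intro a b ha hb
    have ha : a.1 1 0 = 0 := ha
    have hb : b.1 1 0 = 0 := hb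
    change (a * b).1 1 0 = 0
    rw [mul10, ha, hb]; ring
  inv_mem' := by
    intro a ha
    have ha : a.1 1 0 = 0 := ha
    change (a⁻¹).1 1 0 = 0
    rw [inv10, ha, neg_zero]

lemma mem_BB (g : SL F) : g ∈ BB F ↔ g.1 1 0 = 0 := Iff.rfl
lemma u_mem_BB (x : F) : u x ∈ BB F := rfl
lemma t_mem_BB (x : Fˣ) : t x ∈ BB F := rfl

lemma BB_decomp {g : SL F} (hg : g ∈ BB F) : ∃ x a, g = u x * t a := by
  have h := sl_det g
  rw [mem_BB] at hg
  rw [hg, mul_zero, sub_zero] at h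
  have ha : g.1 0 0 ≠ 0 := left_ne_zero_of_mul_eq_one h
  have hd : g.1 1 1 = (g.1 0 0)⁻¹ := eq_inv_of_mul_eq_one_right h
  refine ⟨g.1 0 1 * g.1 0 0, Units.mk0 _ ha, ?_⟩
  apply sl_ext <;> simp [mul00, mul01, mul10, mul11, t00, t01, t10, t11, u00, u01, u10, u11, hg, hd]
  rw [mul_inv_cancel_right₀ ha]

/-- The Weyl element. -/
def w : SL F := m2 0 1 (-1) 0 (by ring)

lemma bruhat {g : SL F} (hg : g ∉ BB F) : ∃ x a y, g = u x * w * t a * u y := by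
  have h := sl_det g
  have hc : g.1 1 0 ≠ 0 := hg
  refine ⟨g.1 0 0 / g.1 1 0, Units.mk0 (-g.1 1 0) (neg_ne_zero.2 hc), g.1 1 1 / g.1 1 0, ?_⟩
  have h2 : g.1 0 1 = (g.1 0 0 * g.1 1 1 - 1) / g.1 1 0 := by
    field_simp
    linear_combination -h
  apply sl_ext <;> simp [mul00, mul01, mul10, mul11, t00, t01, t10, t11, u00, u01, u10, u11, w, m200, m201,
    m210, m211, h2] <;> field_simp <;> ring

/-- The trace. -/
def tr (g : SL F) : F := g.1 0 0 + g.1 1 1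

lemma tr_conj (g h : SL F) : tr (h * g * h⁻¹) = tr g := by
  have := sl_det h
  simp only [tr, mul00, mul01, mul10, mul11, inv00, inv01, inv10, inv11]
  linear_combination (g.1 0 0 + g.1 1 1) * this

/-- Expressing the power as a linear combination. -/
def Lin (g : SL F) (n : ℕ) (a b : F) : Prop :=
  ∀ i j, (g ^ n).1 i j = a * g.1 i j + b * (1 : SL F).1 i j

variable [Fintype F] (hF : Fintype.card F = 8)
include hF

lemma lin_succ {g : SL F} {n : ℕ} {a b : F} (h : Lin g n a b) : Lin g (n + 1) (a * tr g + b) a := by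
  have hd := sl_det g
  have h2 := two0 hF
  have e00 := h 0 0
  have e01 := h 0 1
  have e10 := h 1 0
  have e11 := h 1 1
  rw [one00] at e00
  rw [one01] at e01
  rw [one10] at e10
  rw [one11] at e11
  have f00 : (g ^ (n + 1)).1 0 0 = (a * tr g + b) * g.1 0 0 + a * (1 : SL F).1 0 0 := by
    rw [pow_succ, mul00, e00, e01, one00, tr]
    linear_combination -a * hd + a * (g.1 0 0 * g.1 1 1) * 0 - a * h2 * (1 : F) 
  have f01 : (g ^ (n + 1)).1 0 1 = (a * tr g + b) * g.1 0 1 + a * (1 : SL F).1 0 1 := by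
    rw [pow_succ, mul01, e00, e01, one01, tr]; ring
  have f10 : (g ^ (n + 1)).1 1 0 = (a * tr g + b) * g.1 1 0 + a * (1 : SL F).1 1 0 := by
    rw [pow_succ, mul10, e10, e11, one10, tr]; ring
  have f11 : (g ^ (n + 1)).1 1 1 = (a * tr g + b) * g.1 1 1 + a * (1 : SL F).1 1 1 := by
    rw [pow_succ, mul11, e10, e11, one11, tr]
    linear_combination -a * hd - a * h2 * (1 : F)
  intro i j
  fin_cases i <;> fin_cases j <;> assumption

lemma lin1 (g : SL F) : Lin g 1 1 0 := by
  intro i j; simp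

lemma lin_tr {g : SL F} {n : ℕ} {a b : F} (h : Lin g n a b) : tr (g ^ n) = a * tr g := by
  have h2 := two0 hF
  rw [tr, h 0 0, h 1 1, one00, one11, tr]
  linear_combination b * h2

lemma lin_one {g : SL F} {n : ℕ} {a b : F} (h : Lin g n a b) (ha : a = 0) (hb : b = 1) :
    g ^ n = 1 := by
  apply Subtype.ext
  ext i j
  rw [h i j, ha, hb]; ring

lemma tr0 {g : SL F} (h : tr g = 0) : g ^ 2 = 1 := by
  refine lin_one hF (lin_succ hF (lin1 hF g)) ?_ ?_
  · rw [h]; ring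
  · rfl

lemma tr1 {g : SL F} (h : tr g = 1) : g ^ 3 = 1 := by
  have h2 := two0 hF
  refine lin_one hF (lin_succ hF (lin_succ hF (lin1 hF g))) ?_ ?_ <;> rw [h]
  · linear_combination h2
  · ring

lemma trA {g : SL F} (h : tr g ^ 3 + tr g + 1 = 0) : orderOf g = 9 := by
  have h2 := two0 hF
  have h3 : (tr g) ≠ 0 := by
    intro h0; rw [h0] at h; simp at h
  have h4 : (tr g) ≠ 1 := by
    intro h0; rw [h0] at h; exact one_ne_zero (α := F) (by linear_combination h - h2)
  have h5 := lin_succ hF (lin_succ hF (lin1 hF g))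
  have h6 := lin_succ hF (lin_succ hF (lin_succ hF h5))
  have h9 := lin_succ hF (lin_succ hF (lin_succ hF h6))
  have e9 : g ^ 9 = 1 := by
    refine lin_one hF h9 ?_ ?_
    · generalize tr g = τ at *
      grind
    · generalize tr g = τ at *
      grind
  have e3 : g ^ 3 ≠ 1 := by
    intro h
    have := lin_tr hF h5
    rw [h, tr, one00, one11] at this
    have h7 : tr g * ((tr g + 1) * (tr g + 1)) = 0 := by
      linear_combination -this + (tr g ^ 2) * h2 + h2
    rcases mul_eq_zero.1 h7 with h | h
    · exact h3 h
    · rw [mul_self_eq_zero] at h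
      exact h4 (by linear_combination h - h2)
  have := orderOf_eq_prime_pow (p := 3) (n := 1) (x := g) (by simpa using e3) (by simpa using e9)
  simpa using this

lemma trB {g : SL F} (h : tr g ^ 3 + tr g ^ 2 + 1 = 0) : orderOf g = 7 := by
  have h2 := two0 hF
  have h5 := lin_succ hF (lin_succ hF (lin1 hF g))
  have h7 := lin_succ hF (lin_succ hF (lin_succ hF (lin_succ hF h5)))
  have e7 : g ^ 7 = 1 := by
    refine lin_one hF h7 ?_ ?_
    · generalize tr g = τ at *
      grind
    · generalize tr g = τ at *
      grind
  have : Fact (Nat.Prime 7) := ⟨by norm_num⟩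
  refine orderOf_eq_prime e7 ?_
  rintro rfl
  apply one_ne_zero (α := F)
  have : tr (1 : SL F) = 0 := by rw [tr, one00, one11, ← h2]; norm_num
  rw [this] at h
  simpa using h

lemma ord_cases (g : SL F) : orderOf g ∣ 2 ∨ orderOf g ∣ 9 ∨ orderOf g ∣ 7 := by
  rcases cases8 hF (tr g) with h | h | h | h
  · left; exact orderOf_dvd_of_pow_eq_one (tr0 hF h)
  · right; left; exact (orderOf_dvd_of_pow_eq_one (tr1 hF h)).trans (by norm_num)
  · right; left; rw [trA hF h]
  · right; right; rw [trB hF h]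

lemma tr_of_ord7 {g : SL F} (h : orderOf g = 7) : tr g ^ 3 + tr g ^ 2 + 1 = 0 := by
  rcases cases8 hF (tr g) with h1 | h1 | h1 | h1
  · have := orderOf_dvd_of_pow_eq_one (tr0 hF h1); rw [h] at this; omega
  · have := orderOf_dvd_of_pow_eq_one (tr1 hF h1); rw [h] at this; omega
  · have := trA hF h1; omega
  · exact h1

lemma card_S : Nat.card (SL F) = 504 := by
  classical
  let f1 : Fˣ × F × F → SL F :=
    fun y => m2 y.2.1 ((y.2.1 * y.2.2 - 1) * (y.1⁻¹ : Fˣ)) y.1 y.2.2 (by simp)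
  let f2 : Fˣ × F → SL F := fun y => m2 y.1 y.2 0 (y.1⁻¹ : Fˣ) (by simp)
  have hb : Function.Bijective (Sum.elim f1 f2) := by
    constructor
    · refine Function.Injective.sumElim ?_ ?_ ?_
      · rintro ⟨c, a, d⟩ ⟨c', a', d'⟩ h
        have h1 : (c : F) = c' := congrArg (fun g : SL F => g.1 1 0) h
        have h2 : a = a' := congrArg (fun g : SL F => g.1 0 0) h
        have h3 : d = d' := congrArg (fun g : SL F => g.1 1 1) h
        rw [Units.ext h1, h2, h3]
      · rintro ⟨a, b⟩ ⟨a', b'⟩ h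
        have h1 : (a : F) = a' := congrArg (fun g : SL F => g.1 0 0) h
        have h2 : b = b' := congrArg (fun g : SL F => g.1 0 1) h
        rw [Units.ext h1, h2]
      · rintro ⟨c, a, d⟩ ⟨a', b'⟩ h
        have h1 : (c : F) = 0 := congrArg (fun g : SL F => g.1 1 0) h
        exact c.ne_zero h1
    · intro g
      have hd := sl_det g
      by_cases h : g.1 1 0 = 0
      · have ha : g.1 0 0 * g.1 1 1 = 1 := by
          rw [h, mul_zero, sub_zero] at hd
          exact hd
        refine ⟨Sum.inr (Units.mk0 (g.1 0 0) (left_ne_zero_of_mul_eq_one ha), g.1 0 1), ?_⟩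
        apply sl_ext
        · rfl
        · rfl
        · exact h.symm
        · exact (eq_inv_of_mul_eq_one_right ha).symm
      · refine ⟨Sum.inl (Units.mk0 (g.1 1 0) h, g.1 0 0, g.1 1 1), ?_⟩
        apply sl_ext
        · rfl
        · change (g.1 0 0 * g.1 1 1 - 1) * (g.1 1 0)⁻¹ = g.1 0 1
          field_simp
          linear_combination hd
        · rfl
        · rfl
  let e := (Equiv.ofBijective _ hb).symm
  rw [Nat.card_congr e, Nat.card_sum, Nat.card_prod, Nat.card_prod, Nat.card_prod, Nat.card_units,
    Nat.card_eq_fintype_card, hF]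

lemma card_U : Nat.card (uu (F := F)).range = 8 := by
  rw [← Nat.card_congr (MonoidHom.ofInjective uu_inj).toEquiv, Nat.card_congr Multiplicative.toAdd,
    Nat.card_eq_fintype_card, hF]

lemma card_B : Nat.card (BB F) = 56 := by
  classical
  let e : F × Fˣ ≃ BB F := Equiv.ofBijective (fun p => ⟨u p.1 * t p.2, mul_mem (u_mem_BB _) (t_mem_BB _)⟩) (by
    constructor
    · rintro ⟨x, a⟩ ⟨y, b⟩ h
      have h1 := congrArg Subtype.val h
      simp only at h1
      have h2 := congrArg (fun g : SL F => g.1 0 0) h1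
      have h3 := congrArg (fun g : SL F => g.1 0 1) h1
      simp only [mul00, mul01, u00, u01, t00, t01, t10, t11, one_mul, mul_zero, add_zero, zero_add] at h2 h3
      have hab := Units.ext h2
      subst hab
      rw [Prod.mk.injEq]
      exact ⟨mul_right_cancel₀ (Units.ne_zero _) h3, rfl⟩
    · rintro ⟨g, hg⟩
      obtain ⟨x, a, rfl⟩ := BB_decomp hg
      exact ⟨(x, a), rfl⟩)
  rw [← Nat.card_congr e, Nat.card_prod, Nat.card_units, Nat.card_eq_fintype_card, hF]

end sl
end CD

open CategoryTheory
set_option linter.all false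
namespace CD
open Module
open scoped commutatorElement

section subgroups
variable {F : Type} [Field F] [Fintype F] (hF : Fintype.card F = 8)
include hF

lemma all8' {r : F} (h0 : r ≠ 0) (h1 : r ≠ 1) (y : F) :
    y = 0 ∨ y = 1 ∨ y = r ∨ y = r ^ 2 ∨ y = r + 1 ∨ y = r ^ 2 + 1 ∨ y = r ^ 2 + r ∨
      y = r ^ 2 + r + 1 := by
  have h2 := two0 hF
  rcases cases8 hF r with h | h | h | h
  · exact absurd h h0
  · exact absurd h h1
  · exact all8 hF (by linear_combination h - (r + 1) * h2) y
  · have h3 : (r + 1) ^ 3 = (r + 1) + 1 := by linear_combination h + (r ^ 2 + r - 1) * h2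
    rcases all8 hF h3 y with h | h | h | h | h | h | h | h
    · simp [h]
    · simp [h]
    · simp [h]
    · right; right; right; right; right; left; linear_combination h + r * h2
    · right; right; left; linear_combination h + h2
    · right; right; right; left; linear_combination h + (r + 1) * h2
    · right; right; right; right; right; right; left; linear_combination h + (r + 1) * h2
    · right; right; right; right; right; right; right; linear_combination h + (r + 1) * h2

lemma prods {a b : F} (ha : a ≠ 0) (hb : b ≠ 0) (hab : a ≠ b) {v : F} (hv : v ≠ 0) :
    (∃ x y, (x = a ∨ x = b ∨ x = a + b) ∧ (y = a ∨ y = b ∨ y = a + b) ∧ x * y = v) ∨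
      v = a ^ 2 + a * b + b ^ 2 := by
  have h2 := two0 hF
  have hr0 : a / b ≠ 0 := div_ne_zero ha hb
  have hr1 : a / b ≠ 1 := by
    intro h
    exact hab ((div_eq_one_iff_eq hb).1 h)
  have hv' : v = (v / b ^ 2) * b ^ 2 := by field_simp
  rcases all8' hF hr0 hr1 (v / b ^ 2) with h | h | h | h | h | h | h | h
  · exfalso; rw [h] at hv'; simp at hv'; exact hv hv'
  all_goals rw [h] at hv'; field_simp at hv'
  · exact Or.inl ⟨b, b, by simp, by simp, by rw [hv']; ring⟩
  · exact Or.inl ⟨a, b, by simp, by simp, by rw [hv']⟩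
  · exact Or.inl ⟨a, a, by simp, by simp, by rw [hv']; ring⟩
  · exact Or.inl ⟨a + b, b, by simp, by simp, by rw [hv']; ring⟩
  · exact Or.inl ⟨a + b, a + b, by simp, by simp, by rw [hv']; linear_combination (a * b) * h2⟩
  · exact Or.inl ⟨a, a + b, by simp, by simp, by rw [hv']⟩
  · right; rw [hv']; ring

lemma four_dvd (H : Subgroup (SL F)) {a b : F} (ha : a ≠ 0) (hb : b ≠ 0) (hab : a ≠ b)
    (hua : u a ∈ H) (hub : u b ∈ H) : 4 ∣ Nat.card H := by
  classical
  set K := H ⊓ (uu (F := F)).range with hK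
  have h1 : Nat.card K ∣ 8 := by
    rw [← card_U hF]; exact Subgroup.card_dvd_of_le inf_le_right
  have h2 : Nat.card K ∣ Nat.card H := Subgroup.card_dvd_of_le inf_le_left
  have h3 : 3 ≤ Nat.card K := by
    let f : Fin 3 → K := ![1, ⟨u a, hua, _, rfl⟩, ⟨u b, hub, _, rfl⟩]
    have hf : Function.Injective f := by
      have e1 : u a ≠ 1 := by rw [← u_zero]; exact fun h => ha (u_inj h)
      have e2 : u b ≠ 1 := by rw [← u_zero]; exact fun h => hb (u_inj h)
      have e3 : u a ≠ u b := fun h => hab (u_inj h)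
      intro i j hij
      have hij' : ∀ i, (f i : SL F) = (![1, u a, u b] : Fin 3 → SL F) i := by
        intro i; fin_cases i <;> rfl
      have hij2 := congrArg Subtype.val hij
      rw [hij', hij'] at hij2
      clear_value f
      clear hij hij' 
      fin_cases i <;> fin_cases j
      · rfl
      · exact absurd hij2.symm e1
      · exact absurd hij2.symm e2
      · exact absurd hij2 e1
      · rfl
      · exact absurd hij2 e3
      · exact absurd hij2 e2
      · exact absurd hij2.symm e3
      · rfl
    have := Nat.card_le_card_of_injective f hf
    simpa using this
  refine dvd_trans ?_ h2
  have h4 : Nat.card K ≤ 8 := Nat.le_of_dvd (by norm_num) h1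
  interval_cases Nat.card K <;> revert h1 <;> norm_num

lemma no_index_two (H : Subgroup (SL F)) : H.index ≠ 2 := by
  intro h
  have hn : H.Normal := Subgroup.normal_of_index_eq_two h
  obtain ⟨c, hc⟩ := exists_c hF
  have h2 := two0 hF
  have hc0 : c ≠ 0 := by rintro rfl; simp at hc
  have hc1 : c ^ 2 ≠ 1 := by
    intro h1
    have h3 : c ^ 3 = c := by rw [pow_succ, h1, one_mul]
    rw [h3] at hc
    exact one_ne_zero (α := F) (by linear_combination -hc)
  have h3 := Matrix.SL2.commutator_eq_top hc0 hc1
  have : Fact (Nat.Prime 2) := ⟨Nat.prime_two⟩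
  have h4 : IsCyclic (SL F ⧸ H) := isCyclic_of_prime_card (p := 2) h
  have h5 : commutator (SL F) ≤ H := by
    refine Subgroup.Normal.quotient_commutative_iff_commutator_le.1 ?_
    exact isMulCommutative_iff.2 (fun a b => (IsCyclic.commGroup (α := SL F ⧸ H)).mul_comm a b)
  rw [h3, top_le_iff] at h5
  rw [h5, Subgroup.index_top] at h
  omega

lemma H_top (H : Subgroup (SL F)) {a b : F} (ha : a ≠ 0) (hb : b ≠ 0) (hab : a ≠ b)
    (hua : u a ∈ H) (hub : u b ∈ H) {g : SL F} (hg : g ∈ H) (hg0 : g ∉ BB F) : H = ⊤ := by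
  have h2 := two0 hF
  have h4 := four_dvd hF H ha hb hab hua hub
  have hγ : g.1 1 0 ≠ 0 := hg0
  set γ := g.1 1 0 with hγdef
  have huab : u (a + b) ∈ H := by rw [u_add]; exact mul_mem hua hub
  have hu : ∀ x, (x = a ∨ x = b ∨ x = a + b) → u x ∈ H := by
    rintro x (rfl | rfl | rfl) <;> assumption
  have key : ∀ v, v ≠ 0 → v ≠ (a ^ 2 + a * b + b ^ 2) * γ ^ 2 → ∃ h ∈ H, tr h = v := by
    intro v hv hv2
    have hvγ : v / γ ^ 2 ≠ 0 := div_ne_zero hv (pow_ne_zero 2 hγ)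
    rcases prods hF ha hb hab hvγ with ⟨x, y, hx, hy, hxy⟩ | h
    · refine ⟨u x * (g * u y * g⁻¹), mul_mem (hu x hx) (mul_mem (mul_mem hg (hu y hy)) (inv_mem hg)), ?_⟩
      have hv3 : v = x * y * γ ^ 2 := by rw [hxy]; field_simp
      have hd := sl_det g
      simp only [tr, mul00, mul01, mul10, mul11, inv00, inv01, inv10, inv11, u00, u01, u10, u11]
      rw [hv3, hγdef]
      linear_combination 2 * hd + h2 - (x * y * g.1 1 0 ^ 2) * h2
    · exfalso
      apply hv2
      rw [← h]
      field_simp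
  obtain ⟨c, hc⟩ := exists_c hF
  have hc0 : c ≠ 0 := by rintro rfl; simp at hc
  have hc1 : c ≠ 1 := by
    rintro rfl
    exact one_ne_zero (α := F) (by linear_combination -hc)
  have hcc : c ≠ c ^ 2 := by
    intro h
    apply hc1
    apply mul_left_cancel₀ hc0
    rw [mul_one, ← sq, ← h]
  have two : ∀ v w, v ≠ 0 → w ≠ 0 → v ≠ w → (∃ h ∈ H, tr h = v) ∨ (∃ h ∈ H, tr h = w) := by
    intro v w hv hw hvw
    by_cases h : v = (a ^ 2 + a * b + b ^ 2) * γ ^ 2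
    · right
      exact key w hw (by rw [← h]; exact hvw.symm)
    · exact Or.inl (key v hv h)
  have h9 : 9 ∣ Nat.card H := by
    rcases two c (c ^ 2) hc0 (pow_ne_zero 2 hc0) hcc with ⟨h, hh, ht⟩ | ⟨h, hh, ht⟩
    · have := trA hF (g := h) (by rw [ht]; linear_combination hc + (c + 1) * h2)
      rw [← this]; exact H.orderOf_dvd_natCard hh
    · have := trA hF (g := h) (by
        rw [ht]; linear_combination (c ^ 3 + c + 1) * hc + (c ^ 2 + c + 1) * h2)
      rw [← this]; exact H.orderOf_dvd_natCard hh
  have h7 : 7 ∣ Nat.card H := by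
    have e1 : c + 1 ≠ 0 := fun h => hc1 (by linear_combination h - h2)
    have e2 : c ^ 2 + 1 ≠ 0 := by
      intro h
      apply e1
      rw [← pow_eq_zero_iff (n := 2) (by norm_num)]
      linear_combination h + c * h2
    have e3 : c + 1 ≠ c ^ 2 + 1 := fun h => hcc (by linear_combination h)
    rcases two (c + 1) (c ^ 2 + 1) e1 e2 e3 with ⟨h, hh, ht⟩ | ⟨h, hh, ht⟩
    · have := trB hF (g := h) (by rw [ht]; grind)
      rw [← this]; exact H.orderOf_dvd_natCard hh
    · have := trB hF (g := h) (by rw [ht]; grind)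
      rw [← this]; exact H.orderOf_dvd_natCard hh
  have hm := H.card_mul_index
  rw [card_S hF] at hm
  have h252 : 252 ∣ Nat.card H := by omega
  obtain ⟨k, hk⟩ := h252
  rw [hk] at hm
  have h6 : k * H.index = 2 := by nlinarith
  have h8 : H.index ∣ 2 := Dvd.intro_left _ h6
  rcases (Nat.dvd_prime Nat.prime_two).1 h8 with h | h
  · exact Subgroup.index_eq_one.1 h
  · exact absurd h (no_index_two hF H)

/-- The Sylow 2-subgroup. -/
noncomputable def sylU : Sylow 2 (SL F) :=
  have : Fact (Nat.Prime 2) := ⟨Nat.prime_two⟩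
  Sylow.ofCard (uu (F := F)).range (by
    rw [card_U hF, card_S hF]
    have : (504 : ℕ) = 2 ^ 3 * 63 := by norm_num
    rw [this, Nat.factorization_mul (by norm_num) (by norm_num), Nat.Prime.factorization_pow Nat.prime_two]
    have h63 : (63 : ℕ).factorization 2 = 0 := Nat.factorization_eq_zero_of_not_dvd (by norm_num)
    simp [h63])

lemma sylU_coe : (sylU hF : Subgroup (SL F)) = (uu (F := F)).range := rfl

lemma conj_into_U (P : Subgroup (SL F)) (hP : IsPGroup 2 P) :
    ∃ s : SL F, ∀ h ∈ P, ∃ x, s * h * s⁻¹ = u x := by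
  have : Fact (Nat.Prime 2) := ⟨Nat.prime_two⟩
  obtain ⟨Q, hQ⟩ := hP.exists_le_sylow
  obtain ⟨s, hs⟩ := MulAction.exists_smul_eq (SL F) Q (sylU hF)
  refine ⟨s, fun h hh => ?_⟩
  have h1 : s * h * s⁻¹ ∈ (sylU hF : Subgroup (SL F)) := by
    rw [← hs]
    exact ⟨h, hQ hh, by simp [MulAut.conj_apply]⟩
  obtain ⟨x, hx⟩ := h1
  exact ⟨x.toAdd, hx.symm⟩

lemma B_index_two (H : Subgroup (SL F)) (hH : H ≤ BB F) (h28 : 28 ∣ Nat.card H) : H = BB F := by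
  have h1 : Nat.card H * H.relIndex (BB F) = 56 := by
    rw [← card_B hF, ← (H.subgroupOf (BB F)).card_mul_index, Nat.card_congr (Subgroup.subgroupOfEquivOfLe hH).toEquiv]; rfl
  obtain ⟨k, hk⟩ := h28
  rw [hk] at h1
  have h2 : k * H.relIndex (BB F) = 2 := by nlinarith
  have h8 : H.relIndex (BB F) ∣ 2 := Dvd.intro_left _ h2
  rcases (Nat.dvd_prime Nat.prime_two).1 h8 with h | h
  · exact le_antisymm hH (Subgroup.relIndex_eq_one.1 h)
  · exfalso
    have h' : (H.subgroupOf (BB F)).index = 2 := h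
    have hn : (H.subgroupOf (BB F)).Normal := Subgroup.normal_of_index_eq_two h'
    have : Fact (Nat.Prime 2) := ⟨Nat.prime_two⟩
    have h4 : IsCyclic (BB F ⧸ (H.subgroupOf (BB F))) := isCyclic_of_prime_card (p := 2) h'
    have h5 : commutator (BB F) ≤ H.subgroupOf (BB F) := by
      refine Subgroup.Normal.quotient_commutative_iff_commutator_le.1 ?_
      exact isMulCommutative_iff.2 (fun a b => (IsCyclic.commGroup (α := BB F ⧸ (H.subgroupOf (BB F)))).mul_comm a b)
    have hU : (uu (F := F)).range ≤ H := by
      rintro _ ⟨x, rfl⟩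
      have h2 := two0 hF
      obtain ⟨c, hc⟩ := exists_c hF
      have hc0 : c ≠ 0 := by rintro rfl; simp at hc
      have hc1 : c ^ 2 - 1 ≠ 0 := by
        intro h1
        have h1 : c ^ 2 = 1 := by linear_combination h1
        have h3 : c ^ 3 = c := by rw [pow_succ, h1, one_mul]
        rw [h3] at hc
        exact one_ne_zero (α := F) (by linear_combination -hc)
      have e1 : uu x = ⁅t (Units.mk0 c hc0), u ((c ^ 2 - 1)⁻¹ * x.toAdd)⁆ := by
        rw [commutatorElement_def, t_u, eq_mul_inv_iff_mul_eq]
        change u x.toAdd * _ = _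
        rw [← u_add]
        congr 1
        simp only [Units.val_mk0]
        field_simp
        ring
      have e2 : ⁅(⟨t (Units.mk0 c hc0), t_mem_BB _⟩ : BB F), ⟨u ((c ^ 2 - 1)⁻¹ * x.toAdd), u_mem_BB _⟩⁆ ∈
          commutator (BB F) := Subgroup.commutator_mem_commutator (Subgroup.mem_top _) (Subgroup.mem_top _)
      have e3 := h5 e2
      rw [e1]
      exact e3
    have h6 := Subgroup.card_dvd_of_le hU
    rw [card_U hF, hk] at h6
    have : k = 1 := by rw [h] at h2; omega
    omega

lemma case42 (H : Subgroup (SL F)) (h42 : 42 ∣ Nat.card H) (h4 : ¬ 4 ∣ Nat.card H) : False := by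
  classical
  have hm := H.card_mul_index
  rw [card_S hF] at hm
  have hF7 : Fact (Nat.Prime 7) := ⟨by norm_num⟩
  have hF3 : Fact (Nat.Prime 3) := ⟨by norm_num⟩
  have h0 := two0 hF
  have hc : Nat.card H = 42 ∨ Nat.card H = 126 := by
    obtain ⟨k, hk⟩ := h42
    rw [hk] at hm h4 ⊢
    have hk12 : k * H.index = 12 := by nlinarith
    have : k ∣ 12 := Dvd.intro _ hk12
    have : k ≤ 12 := Nat.le_of_dvd (by norm_num) this
    interval_cases k <;> omega
  let P : Sylow 7 H := default
  have hP : Nat.card P = 7 ∧ P.1.index ∣ 18 := by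
    have h1 := P.card_eq_multiplicity
    have hfac : (Nat.card H).factorization 7 = 1 := by
      rcases hc with h | h <;> rw [h]
      · have : (42 : ℕ) = 7 ^ 1 * 6 := by norm_num
        rw [this, Nat.factorization_mul (by norm_num) (by norm_num), Nat.Prime.factorization_pow (by norm_num)]
        have h63 : (6 : ℕ).factorization 7 = 0 := Nat.factorization_eq_zero_of_not_dvd (by norm_num)
        simp [h63]
      · have : (126 : ℕ) = 7 ^ 1 * 18 := by norm_num
        rw [this, Nat.factorization_mul (by norm_num) (by norm_num), Nat.Prime.factorization_pow (by norm_num)]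
        have h63 : (18 : ℕ).factorization 7 = 0 := Nat.factorization_eq_zero_of_not_dvd (by norm_num)
        simp [h63]
    rw [hfac, pow_one] at h1
    refine ⟨h1, ?_⟩
    have h2 := P.1.card_mul_index
    have h3 : Nat.card P.1 = 7 := h1
    rw [h3] at h2
    have : P.1.index = 6 ∨ P.1.index = 18 := by omega
    rcases this with h | h <;> rw [h]
    norm_num
  have hs : Nat.card (Sylow 7 H) = 1 := by
    have h1 := card_sylow_modEq_one 7 H
    have h2 : Nat.card (Sylow 7 H) ∣ 18 := P.card_dvd_index.trans hP.2
    have h3 := Nat.le_of_dvd (by norm_num) h2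
    unfold Nat.ModEq at h1
    generalize Nat.card (Sylow 7 H) = n at *
    interval_cases n <;> omega
  have hsub : Subsingleton (Sylow 7 H) := (Nat.card_eq_one_iff_unique.1 hs).1
  have hPn : P.1.Normal := Sylow.normal_of_subsingleton P
  obtain ⟨x, hx⟩ := exists_prime_orderOf_dvd_card' (G := P) 7 (by rw [hP.1])
  obtain ⟨r, hr⟩ := exists_prime_orderOf_dvd_card' (G := H) 3 (by rcases hc with h | h <;> rw [h] <;> norm_num)
  have hxH : orderOf (x : H) = 7 := (Subgroup.orderOf_coe x).trans hx
  have hz : Subgroup.zpowers (x : H) = P.1 := by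
    apply Subgroup.eq_of_le_of_card_ge
    · rw [Subgroup.zpowers_le]; exact x.2
    · rw [Nat.card_zpowers, hxH]; exact hP.1.le
  have hconj : r * x * r⁻¹ ∈ Subgroup.zpowers (x : H) := by
    rw [hz]; exact hPn.conj_mem _ x.2 r
  rw [mem_zpowers_iff_mem_range_orderOf, hxH] at hconj
  simp only [Finset.mem_image, Finset.mem_range] at hconj
  obtain ⟨k, hk, hkx⟩ := hconj
  have hX : orderOf ((x : H) : SL F) = 7 := (Subgroup.orderOf_coe (x : H)).trans hxH
  have hkx' : ((r : SL F)) * (x : H) * (r : SL F)⁻¹ = ((x : H) : SL F) ^ k := by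
    have := congrArg Subtype.val hkx
    simpa using this.symm
  have htr : tr (((x : H) : SL F) ^ k) = tr ((x : H) : SL F) := by rw [← hkx', tr_conj]
  set X : SL F := ((x : H) : SL F) with hXdef
  have hτ := tr_of_ord7 hF hX
  have hτ0 : tr X ≠ 0 := by intro h; rw [h] at hτ; simp at hτ
  have hτ1 : tr X + 1 ≠ 0 := by
    intro h
    have : tr X = 1 := by linear_combination h - h0
    rw [this] at hτ
    exact one_ne_zero (α := F) (by linear_combination hτ - h0)
  have hk16 : k = 1 ∨ k = 6 := by
    have l1 := lin1 hF X
    have l2 := lin_succ hF l1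
    have l3 := lin_succ hF l2
    have l4 := lin_succ hF l3
    have l5 := lin_succ hF l4
    have bad : ∀ a b n, Lin X n a b → (tr X) * ((a + 1) * 1) = 0 ∨ tr (X ^ n) ≠ tr X := by
      intro a b n hl
      by_cases h : tr (X ^ n) = tr X
      · left
        have := lin_tr hF hl
        rw [h] at this
        linear_combination -this + tr X * h0
      · exact Or.inr h
    have tz : tr (1 : SL F) = 0 := by rw [tr, one00, one11, ← h0]; norm_num
    generalize hτe : tr X = τ at *
    interval_cases k
    · exfalso; rw [pow_zero, tz] at htr; exact hτ0 htr.symm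
    · left; rfl
    · exfalso
      rcases bad _ _ _ l2 with h | h
      · rcases mul_eq_zero.1 h with h | h
        · exact hτ0 h
        · exact hτ1 (by linear_combination h)
      · exact h htr
    · exfalso
      rcases bad _ _ _ l3 with h | h
      · have : τ * τ ^ 2 = 0 := by linear_combination h - τ * h0
        rcases mul_eq_zero.1 this with h | h
        · exact hτ0 h
        · exact hτ0 (pow_eq_zero_iff (by norm_num) |>.1 h)
      · exact h htr
    · exfalso
      rcases bad _ _ _ l4 with h | h
      · have : τ * τ ^ 2 = 0 := by
          grind
        rcases mul_eq_zero.1 this with h | h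
        · exact hτ0 h
        · exact hτ0 (pow_eq_zero_iff (by norm_num) |>.1 h)
      · exact h htr
    · exfalso
      rcases bad _ _ _ l5 with h | h
      · have : τ * (τ + 1) = 0 := by grind
        rcases mul_eq_zero.1 this with h | h
        · exact hτ0 h
        · exact hτ1 h
      · exact h htr
    · right; rfl
  have hcomm : (r : H) ^ 2 * x = x * (r : H) ^ 2 := by
    have h1 : r * x * r⁻¹ = x ∨ r * x * r⁻¹ = (x : H)⁻¹ := by
      rcases hk16 with rfl | rfl
      · left; rw [← hkx, pow_one]
      · right
        rw [← hkx]
        apply eq_inv_of_mul_eq_one_left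
        rw [← pow_succ]; exact orderOf_dvd_iff_pow_eq_one.1 (by rw [hxH])
    have h2 : r * (r * x * r⁻¹) * r⁻¹ = x := by
      rcases h1 with h | h
      · rw [h, h]
      · rw [h]
        have : r * (x : H)⁻¹ * r⁻¹ = (r * x * r⁻¹)⁻¹ := by group
        rw [this, h, inv_inv]
    calc r ^ 2 * x = (r * (r * x * r⁻¹) * r⁻¹) * r ^ 2 := by rw [pow_two]; group
      _ = x * r ^ 2 := by rw [h2]
  have hr2 : orderOf (r ^ 2) = 3 := by
    rw [Nat.Coprime.orderOf_pow]
    · exact hr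
    · rw [hr]; norm_num
  have h21 : orderOf (r ^ 2 * (x : H)) = 21 := by
    have := Commute.orderOf_mul_eq_mul_orderOf_of_coprime (x := r ^ 2) (y := (x : H)) hcomm
      (by rw [hr2, hxH]; norm_num)
    rw [this, hr2, hxH]
  have h21' : orderOf ((r ^ 2 * (x : H) : H) : SL F) = 21 := by rw [Subgroup.orderOf_coe, h21]
  have := ord_cases hF ((r ^ 2 * (x : H) : H) : SL F)
  rw [h21'] at this
  omega

theorem classify (H : Subgroup (SL F)) : H = ⊤ ∨ 8 ∣ H.index ∨ 28 ∣ H.index ∨ 36 ∣ H.index ∨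
    63 ∣ H.index ∨ ∃ s : SL F, ∀ h, h ∈ H ↔ s * h * s⁻¹ ∈ BB F := by
  have hF2 : Fact (Nat.Prime 2) := ⟨Nat.prime_two⟩
  have hm := H.card_mul_index
  rw [card_S hF] at hm
  by_cases h4 : 4 ∣ Nat.card H
  · obtain ⟨P, hP⟩ := Sylow.exists_subgroup_card_pow_prime (G := H) 2 (n := 2) h4
    have hPp : IsPGroup 2 (P.map H.subtype) := by
      refine IsPGroup.of_card (n := 2) ?_
      rw [Subgroup.card_map_of_injective H.subtype_injective, hP]
    obtain ⟨s, hs⟩ := conj_into_U hF _ hPp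
    let H' : Subgroup (SL F) := H.map (MulAut.conj s).toMonoidHom
    have hH' : ∀ h, h ∈ H ↔ s * h * s⁻¹ ∈ H' := by
      intro h
      constructor
      · intro hh; exact ⟨h, hh, rfl⟩
      · rintro ⟨k, hk, hk2⟩
        have : k = h := (MulAut.conj s).injective hk2
        rwa [← this]
    have hcard : Nat.card H' = Nat.card H := Subgroup.card_map_of_injective (MulAut.conj s).injective
    have hPu : ∀ h ∈ P, ∃ x, u x ∈ H' ∧ s * (h : SL F) * s⁻¹ = u x := by
      intro h hh
      obtain ⟨x, hx⟩ := hs h ⟨h, hh, rfl⟩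
      exact ⟨x, by rw [← hx, ← hH']; exact h.2, hx⟩
    choose! φ hφ hφ2 using hPu
    have hinj : Function.Injective (fun p : P => φ p) := by
      intro p q hpq
      have h1 := hφ2 p p.2
      have h2 := hφ2 q q.2
      simp only at hpq
      rw [hpq, ← h2] at h1
      have h3 := (MulAut.conj s).injective h1
      exact Subtype.ext (Subtype.ext h3)
    have hab : ∃ a b : F, a ≠ 0 ∧ b ≠ 0 ∧ a ≠ b ∧ u a ∈ H' ∧ u b ∈ H' := by
      classical
      have := Fintype.ofFinite P
      let A : Finset F := (Finset.univ.image (fun p : P => φ p)).erase 0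
      have hA : 1 < A.card := by
        have h1 : (Finset.univ.image (fun p : P => φ p)).card = 4 := by
          rw [Finset.card_image_of_injective _ hinj, Finset.card_univ, ← Nat.card_eq_fintype_card, hP]; norm_num
        have h2 := Finset.pred_card_le_card_erase (s := Finset.univ.image (fun p : P => φ p)) (a := (0 : F))
        rw [h1] at h2
        change 3 ≤ A.card at h2
        omega
      obtain ⟨a, ha, b, hb, hab⟩ := Finset.one_lt_card.1 hA
      simp only [A, Finset.mem_erase, Finset.mem_image, Finset.mem_univ, true_and] at ha hb
      obtain ⟨ha0, p, rfl⟩ := ha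
      obtain ⟨hb0, q, rfl⟩ := hb
      exact ⟨_, _, ha0, hb0, hab, hφ _ p.2, hφ _ q.2⟩
    obtain ⟨a, b, ha, hb, hab, hua, hub⟩ := hab
    by_cases hB : H' ≤ BB F
    · by_cases h7 : 7 ∣ Nat.card H
      · right; right; right; right; right
        have : H' = BB F := B_index_two hF H' hB (by rw [hcard]; omega)
        exact ⟨s, fun h => by rw [← this]; exact hH' h⟩
      · right; right; right; right; left
        have h1 : Nat.card H ∣ 56 := by rw [← hcard, ← card_B hF]; exact Subgroup.card_dvd_of_le hB
        have h2 : Nat.card H ∣ 8 := by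
          have : Nat.Coprime (Nat.card H) 7 := ((Nat.Prime.coprime_iff_not_dvd (by norm_num)).2 h7).symm
          exact this.dvd_of_dvd_mul_right (by simpa using h1)
        obtain ⟨k, hk⟩ := h2
        refine ⟨k, ?_⟩
        have : 0 < Nat.card H := Nat.card_pos
        apply Nat.eq_of_mul_eq_mul_left this
        calc _ = 504 := hm
          _ = 8 * 63 := by norm_num
          _ = _ := by rw [hk]; ring
    · left
      obtain ⟨g, hg, hgB⟩ := Set.not_subset.1 hB
      have h1 := H_top hF H' ha hb hab hua hub hg hgB
      rw [eq_top_iff]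
      intro h _
      rw [hH', h1]
      exact Subgroup.mem_top _
  · by_cases h42 : 42 ∣ Nat.card H
    · exact absurd (case42 hF H h42 h4) id
    · by_cases h2 : 2 ∣ Nat.card H
      · obtain ⟨j, hj⟩ := h2
        have hodd : ¬ 2 ∣ j := by omega
        have e1 : j * H.index = 252 := by rw [hj] at hm; nlinarith
        have h4i : 4 ∣ H.index := by
          have : Nat.Coprime 4 j := by
            have : Nat.Coprime 2 j := (Nat.Prime.coprime_iff_not_dvd Nat.prime_two).2 hodd
            exact Nat.Coprime.pow_left 2 this
          exact this.dvd_of_dvd_mul_left (by rw [e1]; norm_num)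
        by_cases h7 : 7 ∣ Nat.card H
        · have h3 : ¬ 3 ∣ Nat.card H := by omega
          have h9i : 9 ∣ H.index := by
            have : Nat.Coprime 3 (Nat.card H) := (Nat.Prime.coprime_iff_not_dvd Nat.prime_three).2 h3
            have : Nat.Coprime 9 (Nat.card H) := Nat.Coprime.pow_left 2 this
            exact this.dvd_of_dvd_mul_left (by rw [hm]; norm_num)
          right; right; right; left; omega
        · have h7i : 7 ∣ H.index := by
            have : Nat.Coprime 7 (Nat.card H) := (Nat.Prime.coprime_iff_not_dvd (by norm_num)).2 h7
            exact this.dvd_of_dvd_mul_left (by rw [hm]; norm_num)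
          right; right; left; omega
      · right; left
        have : Nat.Coprime 2 (Nat.card H) := (Nat.Prime.coprime_iff_not_dvd Nat.prime_two).2 h2
        have : Nat.Coprime 8 (Nat.card H) := Nat.Coprime.pow_left 3 this
        exact this.dvd_of_dvd_mul_left (by rw [hm]; norm_num)

end subgroups
end CD

open CategoryTheory
set_option linter.all false
namespace CD
open Module
open scoped commutatorElement

section schurS
variable {F : Type} [Field F] [Fintype F] (hF : Fintype.card F = 8)
include hF

lemma c_ne0 {c : F} (hc : c ^ 3 = c + 1) : c ≠ 0 := by rintro rfl; simp at hc

lemma ord_t {c : F} (hc : c ^ 3 = c + 1) (h0 : c ≠ 0) : orderOf (t (Units.mk0 c h0)) = 7 := by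
  have h2 := two0 hF
  refine trB hF ?_
  have hi : c⁻¹ = c ^ 2 + 1 := by
    field_simp
    grind
  have : tr (t (Units.mk0 c h0)) = c ^ 2 + c + 1 := by
    rw [tr, t00, t11]
    simp only [Units.val_mk0, Units.val_inv_eq_inv_val]
    rw [hi]; ring
  rw [this]
  grind

lemma tau_exists (b : F) (hb : b ≠ 0) : ∃ a : Fˣ, ∀ x : F,
    t a * u x * (t a)⁻¹ = u (b * x) := by
  refine ⟨Units.mk0 (b ^ 4) (pow_ne_zero 4 hb), fun x => ?_⟩
  rw [t_u]
  congr 1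
  have := pow8 hF b
  simp only [Units.val_mk0]
  linear_combination x * this

lemma exists_ord9 : ∃ g : SL F, orderOf g = 9 := by
  obtain ⟨c, hc⟩ := exists_c hF
  have h2 := two0 hF
  refine ⟨m2 c 1 (-1) 0 (by ring), trA hF ?_⟩
  rw [tr, m200, m211]
  linear_combination hc + (c + 1) * h2

lemma index_of_card {Q : Type} [Group Q] [Finite Q] (K : Subgroup Q) {a b : ℕ} (h : Nat.card K = a) (h0 : 0 < a)
    (hb : Nat.card Q = a * b) : K.index = b := by
  have h1 := K.card_mul_index
  rw [h, hb] at h1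
  exact Nat.eq_of_mul_eq_mul_left h0 h1

theorem schurTriv_S : SchurTriv (SL F) := by
  intro E _ π ι h1 h2 h3 h4
  have h : CExt π ι := ⟨h1, h2, h3, h4⟩
  have d1 := dpow_U hF h uu uu_inj (by
    intro b hb
    obtain ⟨a, ha⟩ := tau_exists hF b hb
    exact ⟨t a, ha⟩)
  rw [index_of_card hF _ (card_U hF) (by norm_num) (b := 63) (by rw [card_S hF])] at d1
  obtain ⟨g, hg⟩ := exists_ord9 hF
  have d2 := dpow_cyclic h g
  rw [index_of_card hF _ (a := 9) (by rw [Nat.card_zpowers, hg]) (by norm_num) (b := 56) (by rw [card_S hF])] at d2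
  obtain ⟨c, hc⟩ := exists_c hF
  have d3 := dpow_cyclic h (t (Units.mk0 c (c_ne0 hF hc)))
  rw [index_of_card hF _ (a := 7) (by rw [Nat.card_zpowers, ord_t hF hc]) (by norm_num) (b := 72) (by rw [card_S hF])] at d3
  obtain ⟨δ, hδ⟩ := dpow_gcd d1 (dpow_gcd d2 d3)
  refine ⟨δ, fun z => ?_⟩
  rw [hδ]
  norm_num

omit [Fintype F] hF in
/-- `uu` with values in the Borel. -/
def uB : Multiplicative F →* BB F := uu.codRestrict (BB F) (fun x => u_mem_BB x.toAdd)

theorem schurTriv_B : SchurTriv (BB F) := by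
  intro E _ π ι h1 h2 h3 h4
  have h : CExt π ι := ⟨h1, h2, h3, h4⟩
  have hi : Function.Injective (uB (F := F)) := fun x y hxy => uu_inj (congrArg Subtype.val hxy)
  have d1 := dpow_U hF h uB hi (by
    intro b hb
    obtain ⟨a, ha⟩ := tau_exists hF b hb
    exact ⟨⟨t a, t_mem_BB a⟩, fun x => Subtype.ext (ha x)⟩)
  have hc8 : Nat.card (uB (F := F)).range = 8 := by
    rw [← Nat.card_congr (MonoidHom.ofInjective hi).toEquiv, Nat.card_congr Multiplicative.toAdd,
      Nat.card_eq_fintype_card, hF]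
  rw [index_of_card hF _ hc8 (by norm_num) (b := 7) (by rw [card_B hF])] at d1
  obtain ⟨c, hc⟩ := exists_c hF
  let τ : BB F := ⟨t (Units.mk0 c (c_ne0 hF hc)), t_mem_BB _⟩
  have hτ : orderOf τ = 7 := by
    rw [← Subgroup.orderOf_coe]; exact ord_t hF hc _
  have d3 := dpow_cyclic h τ
  rw [index_of_card hF _ (a := 7) (by rw [Nat.card_zpowers, hτ]) (by norm_num) (b := 8) (by rw [card_B hF])] at d3
  obtain ⟨δ, hδ⟩ := dpow_gcd d1 d3
  refine ⟨δ, fun z => ?_⟩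
  rw [hδ]
  norm_num

end schurS
end CD

open CategoryTheory
set_option linter.all false
namespace CD
open Module
open scoped commutatorElement

section autS
variable {F : Type} [Field F] [Fintype F] (hF : Fintype.card F = 8)

omit [Fintype F] in
lemma t_decomp (a : Fˣ) (h2 : (2 : F) = 0) :
    t a = u (a : F) * w * u ((a⁻¹ : Fˣ) : F) * w * u (a : F) * w := by
  have h : (a : F) * ((a⁻¹ : Fˣ) : F) = 1 := by simp
  apply sl_ext <;>
    simp only [mul00, mul01, mul10, mul11, u00, u01, u10, u11, t00, t01, t10, t11, w, m200, m201, m210, m211] <;>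
    generalize (a : F) = x at * <;> generalize ((a⁻¹ : Fˣ) : F) = y at * <;> grind

include hF

lemma aut_id (φ : MulAut (SL F)) {c : F} (hc : c ^ 3 = c + 1) (h0 : c ≠ 0)
    (hu : ∀ x, φ (u x) = u x) (ht : φ (t (Units.mk0 c h0)) = t (Units.mk0 c h0)) : φ = 1 := by
  have h2 := two0 hF
  have hc1 : c ^ 2 - 1 ≠ 0 := by intro h; apply one_ne_zero (α := F); grind
  have hw : φ w = w := by
    have e1 : (w : SL F) * t (Units.mk0 c h0) = t (Units.mk0 c h0)⁻¹ * w := by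
      apply sl_ext <;>
      simp [mul00, mul01, mul10, mul11, u00, u01, u10, u11, t00, t01, t10, t11, w, m200, m201, m210, m211]
    have e1' : t (Units.mk0 c h0)⁻¹ = (t (Units.mk0 c h0))⁻¹ := by
      rw [eq_inv_iff_mul_eq_one, ← t_mul, inv_mul_cancel, t_one]
    have e2 := congrArg φ e1
    rw [map_mul, map_mul, e1', map_inv, ht, ← e1'] at e2
    have e3 : (w * u 1 : SL F) ^ 3 = 1 := by
      apply tr1 hF
      simp [tr, mul00, mul11, u00, u01, u10, u11, w, m200, m201, m210, m211]
      linear_combination -h2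
    have e4 := congrArg φ e3
    rw [map_pow, map_mul, hu, map_one] at e4
    have hd := sl_det (φ w)
    have a00 := congrArg (fun g : SL F => g.1 0 0) e2
    have a11 := congrArg (fun g : SL F => g.1 1 1) e2
    simp only [mul00, mul11, t00, t01, t10, t11, Units.val_mk0, inv_inv, Units.val_inv_eq_inv_val, mul_zero, zero_mul, add_zero, zero_add] at a00 a11
    have b00 : (φ w).1 0 0 = 0 := by
      have : (c ^ 2 - 1) * (φ w).1 0 0 = 0 := by
        field_simp at a00
        linear_combination a00
      exact (mul_eq_zero.1 this).resolve_left hc1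
    have b11 : (φ w).1 1 1 = 0 := by
      have : (c ^ 2 - 1) * (φ w).1 1 1 = 0 := by
        field_simp at a11
        linear_combination -a11
      exact (mul_eq_zero.1 this).resolve_left hc1
    have d01 := congrArg (fun g : SL F => g.1 0 1) e4
    simp only [pow_succ, pow_zero, one_mul, mul00, mul01, mul10, mul11, u00, u01, u10, u11, one01, b00, b11] at d01
    rw [b00, b11] at hd
    generalize hdd : (φ w).1 0 1 = d at *
    have hd' : d * (φ w).1 1 0 = 1 := by grind
    have he : (φ w).1 1 0 = 1 := by
      have : ((φ w).1 1 0 - 1) ^ 2 = 0 := by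
        generalize (φ w).1 1 0 = e at *
        grind
      have := pow_eq_zero_iff (n := 2) (by norm_num) |>.1 this
      linear_combination this
    apply sl_ext
    · rw [b00]; rfl
    · rw [hdd]
      rw [he, mul_one] at hd'
      rw [hd']; rfl
    · rw [he]
      change (1 : F) = -1
      linear_combination h2
    · rw [b11]; rfl
  have hT : ∀ a : Fˣ, φ (t a) = t a := by
    intro a
    rw [t_decomp a h2]
    simp only [map_mul, hu, hw]
  ext1 g
  change φ g = g
  by_cases hg : g ∈ BB F
  · obtain ⟨x, a, rfl⟩ := BB_decomp hg
    rw [map_mul, hu, hT]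
  · obtain ⟨x, a, y, rfl⟩ := bruhat hg
    simp only [map_mul, hu, hw, hT]

/-- The Frobenius map on `SL`. -/
def frobFun (g : SL F) : SL F := m2 (g.1 0 0 ^ 2) (g.1 0 1 ^ 2) (g.1 1 0 ^ 2) (g.1 1 1 ^ 2) (by
  have := sl_det g
  have h2 := two0 hF
  linear_combination (g.1 0 0 * g.1 1 1 - g.1 0 1 * g.1 1 0) * this + this -  (g.1 0 1 * g.1 1 0) * (g.1 0 1 * g.1 1 0 - g.1 0 0 * g.1 1 1 ) * h2)

/-- The Frobenius endomorphism of `SL`. -/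
def frobHom : SL F →* SL F where
  toFun := frobFun hF
  map_one' := by
    apply sl_ext <;> simp [frobFun, m200, m201, m210, m211]
  map_mul' g h := by
    have h2 := two0 hF
    apply sl_ext <;> simp only [frobFun, m200, m201, m210, m211, mul00, mul01, mul10, mul11]
    · linear_combination (g.1 0 0 * h.1 0 0 * g.1 0 1 * h.1 1 0) * h2
    · linear_combination (g.1 0 0 * h.1 0 1 * g.1 0 1 * h.1 1 1) * h2
    · linear_combination (g.1 1 0 * h.1 0 0 * g.1 1 1 * h.1 1 0) * h2
    · linear_combination (g.1 1 0 * h.1 0 1 * g.1 1 1 * h.1 1 1) * h2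

lemma frob3 (g : SL F) : frobHom hF (frobHom hF (frobHom hF g)) = g := by
  apply sl_ext
  all_goals
    simp only [frobHom, MonoidHom.coe_mk, OneHom.coe_mk, frobFun, m200, m201, m210, m211]
    rw [← pow_mul, ← pow_mul]
    exact pow8 hF _

/-- The Frobenius automorphism of `SL`. -/
def frob : MulAut (SL F) where
  toFun := frobHom hF
  invFun g := frobHom hF (frobHom hF g)
  left_inv g := frob3 hF g
  right_inv g := frob3 hF g
  map_mul' := map_mul _

lemma frob_cube : frob hF ^ 3 = 1 := by
  ext1 g
  exact frob3 hF g

lemma frob_u (x : F) : frob hF (u x) = u (x ^ 2) := by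
  apply sl_ext <;> simp [frob, frobHom, frobFun, m200, m201, m210, m211, u00, u01, u10, u11]

lemma frob_t (x : Fˣ) : frob hF (t x) = t (x ^ 2) := by
  apply sl_ext <;> simp [frob, frobHom, frobFun, m200, m201, m210, m211, t00, t01, t10, t11]

/-- Inner automorphisms. -/
abbrev Inn (S : Type) [Group S] : Subgroup (MulAut S) := (MulAut.conj : S →* MulAut S).range

omit [Fintype F] [Field F] hF in
lemma inn_normal (S : Type) [Group S] : (Inn S).Normal := by
  constructor
  rintro _ ⟨s, rfl⟩ φ
  refine ⟨φ s, ?_⟩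
  ext1 g
  simp [MulAut.conj_apply]

lemma K_step1 (φ : MulAut (SL F)) {c : F} (hc : c ^ 3 = c + 1) (h0 : c ≠ 0)
    (hu : ∀ x, ∃ y, φ (u x) = u y) (hu1 : φ (u 1) = u 1) (ht : φ (t (Units.mk0 c h0)) = t (Units.mk0 c h0)) : φ = 1 := by
  have h2 := two0 hF
  refine aut_id hF φ hc h0 ?_ ht
  have hadd : ∀ x y, φ (u x) = u x → φ (u y) = u y → φ (u (x + y)) = u (x + y) := by
    intro x y hx hy
    rw [u_add, map_mul, hx, hy]
  have hmul : ∀ x, φ (u x) = u x → φ (u (c ^ 2 * x)) = u (c ^ 2 * x) := by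
    intro x hx
    have := t_u (Units.mk0 c h0) x
    simp only [Units.val_mk0] at this
    rw [← this, map_mul, map_mul, map_inv, ht, hx]
  have k0 : φ (u 0) = u 0 := by rw [u_zero, map_one]
  have k2 := hmul _ hu1
  have k4 := hmul _ k2
  have kc := hadd _ _ k2 k4
  rw [mul_one] at *
  have e4 : c ^ 2 + c ^ 2 * c ^ 2 = c := by grind
  rw [e4] at kc
  intro x
  rcases all8 hF hc x with h | h | h | h | h | h | h | h
  · rw [h]; exact k0
  · rw [h]; exact hu1
  · rw [h]; exact kc
  · rw [h]; exact k2
  · rw [h]; exact hadd _ _ kc hu1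
  · rw [h]; exact hadd _ _ k2 hu1
  · rw [h]; exact hadd _ _ k2 kc
  · rw [h]; exact hadd _ _ (hadd _ _ k2 kc) hu1

/-- The known automorphisms. -/
def KK : Subgroup (MulAut (SL F)) := Inn (SL F) ⊔ Subgroup.zpowers (frob hF)

lemma inn_KK (s : SL F) : MulAut.conj s ∈ KK hF := Subgroup.mem_sup_left ⟨s, rfl⟩
lemma frob_KK : frob hF ∈ KK hF := Subgroup.mem_sup_right (Subgroup.mem_zpowers _)

lemma K_step2 (φ : MulAut (SL F)) {c : F} (hc : c ^ 3 = c + 1) (h0 : c ≠ 0)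
    (hu : ∀ x, ∃ y, φ (u x) = u y) (hu1 : φ (u 1) = u 1) (a : Fˣ) (ht : φ (t (Units.mk0 c h0)) = t a) :
    φ ∈ KK hF := by
  have h2 := two0 hF
  have hmul : ∀ x y, φ (u x) = u y → φ (u (c ^ 2 * x)) = u (a ^ 2 * y) := by
    intro x y hx
    have := t_u (Units.mk0 c h0) x
    simp only [Units.val_mk0] at this
    rw [← this, map_mul, map_mul, map_inv, ht, hx, t_u]
  have k2 := hmul _ _ hu1
  have k4 := hmul _ _ k2
  have k6 := hmul _ _ k4
  have ha : (a : F) ^ 3 = a + 1 := by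
    have e : c ^ 2 * (c ^ 2 * (c ^ 2 * 1)) = c ^ 2 * 1 + 1 := by grind
    rw [e, u_add, map_mul, k2, hu1, ← u_add] at k6
    have := u_inj k6
    have h3 : ((a : F) ^ 3 - a - 1) ^ 2 = 0 := by
      generalize (a : F) = x at *
      grind
    have := pow_eq_zero_iff (n := 2) (by norm_num) |>.1 h3
    linear_combination this
  have hac : a = Units.mk0 c h0 ∨ a ^ 2 = Units.mk0 c h0 ∨ a ^ 4 = Units.mk0 c h0 := by
    simp only [Units.ext_iff, Units.val_pow_eq_pow_val, Units.val_mk0]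
    generalize (a : F) = x at *
    have : (x - c) * ((x ^ 2 - c) * (x ^ 4 - c)) = 0 := by
      rcases all8 hF hc x with h | h | h | h | h | h | h | h <;> rw [h] at ha ⊢ <;> grind
    rcases mul_eq_zero.1 this with h | h
    · left; linear_combination h
    · rcases mul_eq_zero.1 h with h | h
      · right; left; linear_combination h
      · right; right; linear_combination h
  have hone : u (1 : F) = u ((1 : F) ^ 2) := by rw [one_pow]
  have hfu : ∀ ψ : MulAut (SL F), (∀ x, ∃ y, ψ (u x) = u y) → (∀ x, ∃ y, (frob hF * ψ) (u x) = u y) := by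
    intro ψ h x
    obtain ⟨y, hy⟩ := h x
    exact ⟨y ^ 2, by rw [MulAut.mul_apply, hy, frob_u]⟩
  have hf1 : ∀ ψ : MulAut (SL F), ψ (u 1) = u 1 → (frob hF * ψ) (u 1) = u 1 := by
    intro ψ h
    rw [MulAut.mul_apply, h, frob_u, one_pow]
  rcases hac with h | h | h
  · rw [K_step1 hF φ hc h0 hu hu1 (by rw [ht, h])]; exact one_mem _
  · have := K_step1 hF (frob hF * φ) hc h0 (hfu _ hu) (hf1 _ hu1) (by rw [MulAut.mul_apply, ht, frob_t, h])
    rw [← Subgroup.mul_mem_cancel_left (KK hF) (frob_KK hF), this]; exact one_mem _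
  · have := K_step1 hF (frob hF * (frob hF * φ)) hc h0 (hfu _ (hfu _ hu)) (hf1 _ (hf1 _ hu1)) (by
      rw [MulAut.mul_apply, MulAut.mul_apply, ht, frob_t, frob_t, ← pow_mul, h])
    rw [← Subgroup.mul_mem_cancel_left (KK hF) (frob_KK hF),
      ← Subgroup.mul_mem_cancel_left (KK hF) (frob_KK hF), this]; exact one_mem _

lemma K_top (φ : MulAut (SL F)) : φ ∈ KK hF := by
  have h2 := two0 hF
  have hF2 : Fact (Nat.Prime 2) := ⟨Nat.prime_two⟩
  obtain ⟨c, hc⟩ := exists_c hF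
  have h0 := c_ne0 hF hc
  -- step 1
  have hP : IsPGroup 2 ((uu (F := F)).range.map φ.toMonoidHom) := by
    refine IsPGroup.of_card (n := 3) ?_
    rw [Subgroup.card_map_of_injective φ.injective, card_U hF]; norm_num
  obtain ⟨s, hs⟩ := conj_into_U hF _ hP
  rw [← Subgroup.mul_mem_cancel_left (KK hF) (inn_KK hF s)]
  have hu : ∀ x, ∃ y, (MulAut.conj s * φ) (u x) = u y := by
    intro x
    obtain ⟨y, hy⟩ := hs (φ (u x)) ⟨u x, ⟨.ofAdd x, rfl⟩, rfl⟩
    exact ⟨y, hy⟩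
  generalize MulAut.conj s * φ = φ at *
  clear hs hP s
  -- step 2
  have hord : orderOf (φ (t (Units.mk0 c h0))) = 7 := by
    rw [← ord_t hF hc h0]; exact MulEquiv.orderOf_eq φ _
  have hB : φ (t (Units.mk0 c h0)) ∈ BB F := by
    obtain ⟨y, hy⟩ := hu 1
    obtain ⟨z, hz⟩ := hu (c ^ 2 * 1)
    have h1 := t_u (Units.mk0 c h0) (1 : F)
    simp only [Units.val_mk0] at h1
    rw [← h1, map_mul, map_mul, map_inv, hy] at hz
    have hy0 : y ≠ 0 := by
      rintro rfl
      rw [u_zero, ← map_one φ, ← u_zero] at hy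
      exact one_ne_zero (u_inj (φ.injective hy))
    have := congrArg (fun g : SL F => g.1 1 0) hz
    simp only [mul10, mul11, inv00, inv01, inv10, inv11, u00, u01, u10, u11] at this
    rw [mem_BB]
    generalize φ (t (Units.mk0 c h0)) = g at *
    have h3 : g.1 1 0 ^ 2 * y = 0 := by linear_combination -this
    exact pow_eq_zero_iff (n := 2) (by norm_num) |>.1 ((mul_eq_zero.1 h3).resolve_right hy0)
  obtain ⟨x, a, hxa⟩ := BB_decomp hB
  have ha : (a : F) ^ 2 - 1 ≠ 0 := by
    intro h
    have ha1 : (a : F) = 1 := by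
      have : ((a : F) - 1) ^ 2 = 0 := by linear_combination h + (1 - a) * h2
      have := pow_eq_zero_iff (n := 2) (by norm_num) |>.1 this
      linear_combination this
    have ha1 : a = 1 := Units.ext ha1
    have : φ (t (Units.mk0 c h0)) ^ 2 = 1 := by
      rw [hxa, ha1, t_one, mul_one, pow_two, ← u_add, ← u_zero]
      congr 1
      linear_combination x * h2
    have := orderOf_dvd_of_pow_eq_one this
    rw [hord] at this
    omega
  obtain ⟨y, hyx⟩ : ∃ y, y * ((a : F) ^ 2 - 1) = x := ⟨x / ((a : F) ^ 2 - 1), by field_simp⟩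
  rw [← Subgroup.mul_mem_cancel_left (KK hF) (inn_KK hF (u y))]
  have ht : (MulAut.conj (u y) * φ : MulAut (SL F)) (t (Units.mk0 c h0)) = t a := by
    rw [MulAut.mul_apply, hxa, MulAut.conj_apply, mul_inv_eq_iff_eq_mul, ← mul_assoc, ← u_add,
      mul_inv_eq_iff_eq_mul.1 (t_u a y), mul_left_inj]
    congr 1
    linear_combination -hyx
  have hu : ∀ z, ∃ v, (MulAut.conj (u y) * φ : MulAut (SL F)) (u z) = u v := by
    intro z
    obtain ⟨v, hv⟩ := hu z
    refine ⟨v, ?_⟩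
    rw [MulAut.mul_apply, hv, MulAut.conj_apply, ← u_add, add_comm, u_add, mul_inv_cancel_right]
  generalize MulAut.conj (u y) * φ = φ at *
  -- step 3
  obtain ⟨y, hy⟩ := hu 1
  have hy0 : y ≠ 0 := by
    rintro rfl
    rw [u_zero, ← map_one φ, ← u_zero] at hy
    exact one_ne_zero (u_inj (φ.injective hy))
  obtain ⟨e, he⟩ := tau_exists hF y⁻¹ (inv_ne_zero hy0)
  rw [← Subgroup.mul_mem_cancel_left (KK hF) (inn_KK hF (t e))]
  refine K_step2 hF _ hc h0 ?_ ?_ a ?_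
  · intro z
    obtain ⟨v, hv⟩ := hu z
    exact ⟨y⁻¹ * v, by rw [MulAut.mul_apply, hv, MulAut.conj_apply, he]⟩
  · rw [MulAut.mul_apply, hy, MulAut.conj_apply, he, inv_mul_cancel₀ hy0]
  · rw [MulAut.mul_apply, ht, MulAut.conj_apply, ← t_mul, mul_comm, t_mul, mul_inv_cancel_right]

theorem inn_index : (Inn (SL F)).index ∣ 3 := by
  have := inn_normal (SL F)
  let q := QuotientGroup.mk' (Inn (SL F))
  have h1 : Subgroup.zpowers (q (frob hF)) = ⊤ := by
    rw [Subgroup.eq_top_iff']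
    intro y
    obtain ⟨φ, rfl⟩ := QuotientGroup.mk'_surjective _ y
    have h2 : KK hF ≤ (Subgroup.zpowers (q (frob hF))).comap q := by
      apply sup_le
      · intro x hx
        have : q x = 1 := (QuotientGroup.eq_one_iff x).2 hx
        rw [Subgroup.mem_comap, this]; exact one_mem _
      · rw [Subgroup.zpowers_le]; exact Subgroup.mem_zpowers _
    exact h2 (K_top hF φ)
  have h3 : (Inn (SL F)).index = orderOf (q (frob hF)) := by
    rw [← Nat.card_zpowers, h1, Subgroup.card_top]; rfl
  rw [h3]
  apply orderOf_dvd_of_pow_eq_one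
  rw [← map_pow, frob_cube, map_one]

end autS
end CD

open CategoryTheory
set_option linter.all false
namespace CD
open Module
open scoped commutatorElement

section perm
variable {Γ X I : Type} [Group Γ] [MulAction Γ X] [Fintype X] [Fintype I]

/-- The permutation representation. -/
noncomputable def permRep (Γ X : Type) [Group Γ] [MulAction Γ X] : Representation ℂ Γ (X → ℂ) where
  toFun g := LinearMap.funLeft ℂ ℂ (fun x : X => g⁻¹ • x)
  map_one' := by ext f x; simp [LinearMap.funLeft]
  map_mul' a b := by ext f x; simp [LinearMap.funLeft, mul_smul]

omit [Fintype X] in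
lemma permRep_apply (g : Γ) (f : X → ℂ) (x : X) : permRep Γ X g f x = f (g⁻¹ • x) := rfl

theorem perm_deg (x0 : X) (v : I → Γ) (hv0 : ∀ i, v i • x0 = x0)
    (hreg : ∀ y, y ≠ x0 → ∀ z, z ≠ x0 → ∃! i, v i • y = z) (htr : ∀ x, ∃ g : Γ, g • x0 = x)
    (n : ℕ) (hn : Fintype.card X = n + 1) (hI : Fintype.card I = n) (hn0 : 0 < n) : IsDeg Γ n := by
  classical
  let l : (X → ℂ) →ₗ[ℂ] ℂ := ∑ x, LinearMap.proj x
  have hl : ∀ f, l f = ∑ x, f x := by intro f; simp [l]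
  let ρ := permRep Γ X
  have hZ : Stab ρ (LinearMap.ker l) := by
    intro g f hf
    rw [LinearMap.mem_ker, hl] at hf ⊢
    rw [← hf]
    exact Fintype.sum_equiv (MulAction.toPerm g⁻¹) _ _ (fun x => rfl)
  have hfr : finrank ℂ (LinearMap.ker l) = n := by
    have h1 := LinearMap.finrank_range_add_finrank_ker l
    have h2 : LinearMap.range l = ⊤ := by
      rw [LinearMap.range_eq_top]
      intro c
      refine ⟨Pi.single x0 c, ?_⟩
      rw [hl]; simp
    rw [h2, finrank_top, finrank_self, Module.finrank_fintype_fun_eq_card, hn] at h1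
    omega
  refine ⟨LinearMap.ker l, inferInstance, inferInstance, inferInstance, subrep ρ _ hZ, ⟨?_, ?_⟩, hfr⟩
  · apply Module.nontrivial_of_finrank_pos (R := ℂ); omega
  · intro W hW
    by_cases hW0 : W = ⊥
    · exact Or.inl hW0
    right
    obtain ⟨⟨f0, hf0⟩, hfW0, hne⟩ := (Submodule.ne_bot_iff W).1 hW0
    obtain ⟨x, hx⟩ : ∃ x, f0 x ≠ 0 := by
      by_contra hh
      push Not at hh
      exact hne (Subtype.ext (funext hh))
    obtain ⟨g, hg⟩ := htr x
    -- the translate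
    obtain ⟨f, hf, hfW, hfx⟩ : ∃ f, ∃ hf : f ∈ LinearMap.ker l, (⟨f, hf⟩ : LinearMap.ker l) ∈ W ∧ f x0 ≠ 0 := by
      refine ⟨ρ g⁻¹ f0, hZ g⁻¹ f0 hf0, hW g⁻¹ _ hfW0, ?_⟩
      change f0 (g⁻¹⁻¹ • x0) ≠ 0
      rw [inv_inv, hg]; exact hx
    have hsum : ∑ x, f x = 0 := by rw [← hl]; exact hf
    let d : X → X → ℂ := fun x y => if y = x then (n : ℂ) else -1
    have hdl : ∀ x, d x ∈ LinearMap.ker l := by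
      intro x
      rw [LinearMap.mem_ker, hl, Fintype.sum_eq_add_sum_compl x]
      have : ∀ y ∈ ({x}ᶜ : Finset X), d x y = -1 := by
        intro y hy
        simp only [Finset.mem_compl, Finset.mem_singleton] at hy
        simp [d, hy]
      rw [Finset.sum_congr rfl this, Finset.sum_const, Finset.card_compl, hn]
      simp [d]
    have hd0 : (⟨d x0, hdl x0⟩ : LinearMap.ker l) ∈ W := by
      have h1 : (f x0)⁻¹ • ∑ i, (subrep ρ _ hZ (v i)⁻¹ ⟨f, hf⟩) ∈ W :=
        W.smul_mem _ (W.sum_mem (fun i _ => hW _ _ hfW))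
      convert h1 using 1
      apply Subtype.ext
      funext y
      have e2 : ((((f x0)⁻¹ • ∑ i, (subrep ρ _ hZ (v i)⁻¹ ⟨f, hf⟩) : LinearMap.ker l)) : X → ℂ) y
          = (f x0)⁻¹ * ∑ i, f (v i • y) := by
        rw [Submodule.coe_smul, Submodule.coe_sum, Pi.smul_apply, Finset.sum_apply, smul_eq_mul]
        congr 1
        refine Finset.sum_congr rfl (fun i _ => ?_)
        change f ((v i)⁻¹⁻¹ • y) = _
        rw [inv_inv]
      rw [e2]
      change d x0 y = _
      by_cases hy : y = x0
      · subst hy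
        simp only [d, if_true, hv0]
        rw [Finset.sum_const, Finset.card_univ, hI, nsmul_eq_mul]
        field_simp
      · simp only [d, hy, if_false]
        have e3 : ∑ i, f (v i • y) = ∑ z ∈ ({x0}ᶜ : Finset X), f z := by
          refine Finset.sum_bij (fun i _ => v i • y) ?_ ?_ ?_ ?_
          · intro i _
            simp only [Finset.mem_compl, Finset.mem_singleton]
            intro h
            apply hy
            rw [← hv0 i] at h
            exact MulAction.injective (v i) h
          · intro i _ j _ hij
            have hz : v j • y ≠ x0 := by
              intro h
              apply hy
              rw [← hv0 j] at h
              exact MulAction.injective (v j) h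
            exact (hreg y hy _ hz).unique hij rfl
          · intro z hz
            simp only [Finset.mem_compl, Finset.mem_singleton] at hz
            obtain ⟨i, hi, _⟩ := hreg y hy z hz
            exact ⟨i, Finset.mem_univ _, hi⟩
          · intro i _; rfl
        rw [Fintype.sum_eq_add_sum_compl x0] at hsum
        rw [e3]
        field_simp
        linear_combination -hsum
    have hd : ∀ x, (⟨d x, hdl x⟩ : LinearMap.ker l) ∈ W := by
      intro x
      obtain ⟨g, rfl⟩ := htr x
      have h1 := hW g _ hd0
      convert h1 using 1
      apply Subtype.ext
      funext y
      change (if y = g • x0 then (n : ℂ) else -1) = if g⁻¹ • y = x0 then (n : ℂ) else -1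
      rw [inv_smul_eq_iff]
    rw [eq_top_iff]
    rintro ⟨h, hh⟩ _
    have hhs : ∑ x, h x = 0 := by rw [← hl]; exact hh
    have h1 : ((n : ℂ) + 1)⁻¹ • ∑ x, h x • (⟨d x, hdl x⟩ : LinearMap.ker l) ∈ W :=
      W.smul_mem _ (W.sum_mem (fun x _ => W.smul_mem _ (hd x)))
    convert h1 using 1
    apply Subtype.ext
    funext y
    have hn1 : (n : ℂ) + 1 ≠ 0 := by exact_mod_cast Nat.succ_ne_zero n
    rw [Submodule.coe_smul, Submodule.coe_sum, Pi.smul_apply, Finset.sum_apply, smul_eq_mul]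
    change h y = _ * ∑ x, h x * (if y = x then (n : ℂ) else -1)
    have e4 : ∀ x, h x * (if y = x then (n : ℂ) else -1) = (if y = x then h x * ((n : ℂ) + 1) else 0) - h x := by
      intro x
      split_ifs <;> ring
    rw [Finset.sum_congr rfl (fun x _ => e4 x), Finset.sum_sub_distrib, hhs, Finset.sum_ite_eq]
    simp only [Finset.mem_univ, if_true, sub_zero]
    field_simp

end perm

section lemW
variable {F : Type} [Field F] [Fintype F] (hF : Fintype.card F = 8)
  {Q : Type} [Group Q] {V : Type} [AddCommGroup V] [Module ℂ V]

/-- Fixed vectors. -/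
def fixU (u : Multiplicative F →* Q) (ρ : Representation ℂ Q V) : Submodule ℂ V where
  carrier := {v | ∀ x : Multiplicative F, ρ (u x) v = v}
  zero_mem' := by intro x; simp
  add_mem' := by
    intro a b ha hb x
    rw [map_add, ha x, hb x]
  smul_mem' := by
    intro c a ha x
    rw [map_smul, ha x]

variable [FiniteDimensional ℂ V]

include hF in
theorem lemW (u : Multiplicative F →* Q) (ρ : Representation ℂ Q V)
    (hτ : ∀ b : F, b ≠ 0 → ∃ τ : Q, ∀ x : F, τ * u (.ofAdd x) * τ⁻¹ = u (.ofAdd (b * x))) :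
    ∃ b, finrank ℂ V = finrank ℂ (fixU u ρ) + 7 * b := by
  classical
  let A : F → (V →ₗ[ℂ] V) := fun x => ρ (u (.ofAdd x))
  have hA : ∀ x y v, A x (A y v) = A (x + y) v := by
    intro x y v
    change _ = ρ (u (.ofAdd (x + y))) v
    rw [ofAdd_add, map_mul, rep_mul_apply]
  have hA0 : A 0 = 1 := by
    change ρ (u 1) = 1
    rw [map_one, map_one]
  have h2 := two0 hF
  have p1 : LinearMap.IsProj (fixU u ρ) ((8 : ℂ)⁻¹ • ∑ x, A x) := by
    constructor
    · intro v y
      change A y.toAdd _ = _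
      rw [LinearMap.smul_apply, LinearMap.sum_apply, map_smul, map_sum]
      congr 1
      rw [Finset.sum_congr rfl (fun x _ => hA y.toAdd x v)]
      exact Fintype.sum_equiv (Equiv.addLeft y.toAdd) _ _ (fun x => rfl)
    · intro v hv
      rw [LinearMap.smul_apply, LinearMap.sum_apply, Finset.sum_congr rfl (fun x _ => hv (.ofAdd x)),
        Finset.sum_const, Finset.card_univ, hF, ← Nat.cast_smul_eq_nsmul ℂ, smul_smul]
      norm_num
  let E : Submodule ℂ V := LinearMap.ker (A 1 - 1)
  have hE : ∀ v, v ∈ E ↔ A 1 v = v := by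
    intro v
    rw [LinearMap.mem_ker, LinearMap.sub_apply, sub_eq_zero]; rfl
  have p2 : LinearMap.IsProj E ((2 : ℂ)⁻¹ • (1 + A 1)) := by
    constructor
    · intro v
      rw [hE, LinearMap.smul_apply, LinearMap.add_apply, map_smul, map_add, hA]
      have : (1 + 1 : F) = 0 := by linear_combination h2
      rw [this, hA0, add_comm]; rfl
    · intro v hv
      rw [hE] at hv
      rw [LinearMap.smul_apply, LinearMap.add_apply, hv, Module.End.one_apply, ← two_smul ℂ v, smul_smul]
      norm_num
  have t1 := p1.trace
  have t2 := p2.trace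
  rw [map_smul, map_sum] at t1
  rw [map_smul, map_add, LinearMap.trace_one] at t2
  have ht : ∀ x, x ≠ 0 → LinearMap.trace ℂ V (A x) = LinearMap.trace ℂ V (A 1) := by
    intro x hx
    obtain ⟨τ, hτ⟩ := hτ x hx
    have h1 := hτ 1
    rw [mul_one] at h1
    change LinearMap.trace ℂ V (ρ (u (.ofAdd x))) = _
    rw [← h1, map_mul, LinearMap.trace_mul_comm, ← map_mul, ← mul_assoc, inv_mul_cancel, one_mul]
  rw [Fintype.sum_eq_add_sum_compl 0, Finset.sum_congr rfl (g := fun _ => LinearMap.trace ℂ V (A 1)) (fun x hx => ht x (by simpa using hx)),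
    Finset.sum_const, Finset.card_compl, hF, hA0, LinearMap.trace_one] at t1
  have hle : finrank ℂ (fixU u ρ) ≤ finrank ℂ V := Submodule.finrank_le _
  have key : 4 * finrank ℂ (fixU u ρ) + 3 * finrank ℂ V = 7 * finrank ℂ E := by
    have : (4 * finrank ℂ (fixU u ρ) + 3 * finrank ℂ V : ℂ) = 7 * finrank ℂ E := by
      simp only [Finset.card_singleton, smul_eq_mul, nsmul_eq_mul] at t1 t2
      push_cast at t1 t2
      norm_num at t1
      linear_combination -4 * t1 + 7 * t2
    exact_mod_cast this
  refine ⟨(finrank ℂ V - finrank ℂ (fixU u ρ)) / 7, ?_⟩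
  omega

end lemW
end CD

open CategoryTheory
set_option linter.all false
namespace CD
open Module
open scoped commutatorElement Pointwise

section degs
variable {F : Type} [Field F] [Fintype F] (hF : Fintype.card F = 8)
include hF

lemma stab_sylU (g : SL F) : g • sylU hF = sylU hF ↔ g ∈ BB F := by
  rw [Sylow.smul_eq_iff_mem_normalizer]
  change g ∈ Subgroup.normalizer ((sylU hF : Subgroup (SL F)) : Set (SL F)) ↔ _
  rw [sylU_coe]
  constructor
  · intro hg
    obtain ⟨y, hy⟩ := (Subgroup.mem_normalizer_iff.1 hg (u 1)).1 ⟨.ofAdd 1, rfl⟩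
    have hy : u y.toAdd = g * u 1 * g⁻¹ := hy
    have := congrArg (fun g : SL F => g.1 1 0) hy
    simp only [mul10, mul11, inv00, inv01, inv10, inv11, u00, u01, u10, u11] at this
    have h3 : g.1 1 0 ^ 2 = 0 := by linear_combination this
    rw [mem_BB]
    exact pow_eq_zero_iff (n := 2) (by norm_num) |>.1 h3
  · have key : ∀ g ∈ BB F, ∀ h, h ∈ (uu (F := F)).range → g * h * g⁻¹ ∈ (uu (F := F)).range := by
      rintro g hg _ ⟨x, rfl⟩
      obtain ⟨y, a, rfl⟩ := BB_decomp hg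
      have h1 := t_u a x.toAdd
      refine ⟨.ofAdd (a ^ 2 * x.toAdd), ?_⟩
      have h2 : u y * t a * uu x * (u y * t a)⁻¹ = u y * (t a * u x.toAdd * (t a)⁻¹) * (u y)⁻¹ := by
        rw [mul_inv_rev]; simp only [mul_assoc]; rfl
      rw [h2, h1, ← u_add, add_comm, u_add, mul_inv_cancel_right]; rfl
    intro hg
    rw [Subgroup.mem_normalizer_iff]
    intro h
    refine ⟨key g hg h, fun hh => ?_⟩
    have := key g⁻¹ (inv_mem hg) _ hh
    rw [inv_inv] at this
    have e : g⁻¹ * (g * h * g⁻¹) * g = h := by group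
    rwa [e] at this

lemma syl_cover (P : Sylow 2 (SL F)) (hP : P ≠ sylU hF) : ∃ x : F, P = u x • (w : SL F) • sylU hF := by
  have hF2 : Fact (Nat.Prime 2) := ⟨Nat.prime_two⟩
  obtain ⟨g, hg⟩ := MulAction.exists_smul_eq (SL F) (sylU hF) P
  have hgB : g ∉ BB F := by
    intro h
    rw [← stab_sylU hF] at h
    exact hP (hg.symm.trans h)
  obtain ⟨x, a, y, rfl⟩ := bruhat hgB
  refine ⟨x, ?_⟩
  rw [← hg, mul_smul, (stab_sylU hF (u y)).2 (u_mem_BB y), mul_smul, (stab_sylU hF (t a)).2 (t_mem_BB a), mul_smul]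

lemma w_not_B : (w : SL F) ∉ BB F := by
  intro h
  have : (-1 : F) = 0 := h
  simp at this

lemma syl_ne (x : F) : u x • (w : SL F) • sylU hF ≠ sylU hF := by
  intro h
  rw [← mul_smul, stab_sylU] at h
  exact w_not_B hF ((Subgroup.mul_mem_cancel_left _ (u_mem_BB x)).1 h)

lemma syl_inj {x y : F} (h : u x • (w : SL F) • sylU hF = u y • (w : SL F) • sylU hF) : x = y := by
  rw [← inv_smul_eq_iff, ← inv_smul_eq_iff, ← mul_smul, ← mul_smul, ← mul_smul, stab_sylU, mem_BB] at h
  simp only [mul10, mul11, mul00, mul01, inv00, inv01, inv10, inv11, u00, u01, u10, u11, w, m200, m201, m210, m211] at h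
  linear_combination -h

lemma card_syl [Fintype (Sylow 2 (SL F))] : Fintype.card (Sylow 2 (SL F)) = 9 := by
  have : Function.Bijective (fun o : Option F => o.elim (sylU hF) (fun x => u x • (w : SL F) • sylU hF)) := by
    constructor
    · rintro (_ | x) (_ | y) h
      · rfl
      · exact absurd h.symm (syl_ne hF y)
      · exact absurd h (syl_ne hF x)
      · rw [syl_inj hF h]
    · intro P
      by_cases hP : P = sylU hF
      · exact ⟨none, hP.symm⟩
      · obtain ⟨x, rfl⟩ := syl_cover hF P hP
        exact ⟨some x, rfl⟩
  rw [← Fintype.card_of_bijective this, Fintype.card_option, hF]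

theorem deg8 {Γ : Type} [Group Γ] (α : Γ →* MulAut (SL F)) (hα : ∀ s, ∃ γ, α γ = MulAut.conj s) :
    IsDeg Γ 8 := by
  classical
  have hF2 : Fact (Nat.Prime 2) := ⟨Nat.prime_two⟩
  have := Fintype.ofFinite (Sylow 2 (SL F))
  letI : MulAction Γ (Sylow 2 (SL F)) := MulAction.compHom _ α
  choose β hβ using hα
  have hsm : ∀ s (P : Sylow 2 (SL F)), β s • P = s • P := by
    intro s P
    change α (β s) • P = _
    rw [hβ]; rfl
  refine perm_deg (sylU hF) (fun x : F => β (u x)) ?_ ?_ ?_ 8 (card_syl hF) hF (by norm_num)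
  · intro x
    rw [hsm, stab_sylU]; exact u_mem_BB x
  · intro P hP R hR
    obtain ⟨x, rfl⟩ := syl_cover hF P hP
    obtain ⟨y, rfl⟩ := syl_cover hF R hR
    refine ⟨y - x, ?_, ?_⟩
    · simp only
      rw [hsm, ← mul_smul (u (y - x)), ← u_add, sub_add_cancel]
    · intro z hz
      rw [hsm, ← mul_smul (u z), ← u_add] at hz
      rw [← syl_inj hF hz]; ring
  · intro P
    obtain ⟨g, hg⟩ := MulAction.exists_smul_eq (SL F) (sylU hF) P
    exact ⟨β g, by rw [hsm, hg]⟩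

theorem deg8_S : IsDeg (SL F) 8 := deg8 hF MulAut.conj (fun s => ⟨s, rfl⟩)

omit hF [Fintype F] in
/-- The affine action. -/
def affAct : MulAction (BB F) F where
  smul g y := g.1.1 0 0 ^ 2 * y + g.1.1 0 0 * g.1.1 0 1
  one_smul y := by
    change (1 : SL F).1 0 0 ^ 2 * y + (1 : SL F).1 0 0 * (1 : SL F).1 0 1 = y
    rw [one00, one01]; ring
  mul_smul g h y := by
    change (g.1 * h.1).1 0 0 ^ 2 * y + (g.1 * h.1).1 0 0 * (g.1 * h.1).1 0 1 =
      g.1.1 0 0 ^ 2 * (h.1.1 0 0 ^ 2 * y + h.1.1 0 0 * h.1.1 0 1) + g.1.1 0 0 * g.1.1 0 1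
    have h1 : h.1.1 1 0 = 0 := h.2
    have h2 := sl_det h.1
    rw [h1] at h2
    rw [mul00, mul01, h1]
    linear_combination (g.1.1 0 0 * g.1.1 0 1) * h2

theorem deg7_B : IsDeg (BB F) 7 := by
  classical
  letI := affAct (F := F)
  have hF2 := two0 hF
  have hsm : ∀ (g : BB F) (y : F), g • y = g.1.1 0 0 ^ 2 * y + g.1.1 0 0 * g.1.1 0 1 := fun g y => rfl
  refine perm_deg (0 : F) (fun a : Fˣ => (⟨t a, t_mem_BB a⟩ : BB F)) ?_ ?_ ?_ 7 hF
    (by rw [Fintype.card_units, hF]) (by norm_num)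
  · intro a
    rw [hsm]
    simp [t00, t01]
  · intro y hy z hz
    have hzy : z / y ≠ 0 := div_ne_zero hz hy
    refine ⟨Units.mk0 ((z / y) ^ 4) (pow_ne_zero 4 hzy), ?_, ?_⟩
    · simp only [hsm, t00, t01, Units.val_mk0]
      have := pow8 hF (z / y)
      have h8 : (((z / y) ^ 4) ^ 2) = z / y := by rw [← pow_mul]; exact this
      rw [h8]; field_simp; ring
    · intro a ha
      simp only [hsm, t00, t01, mul_zero, add_zero] at ha
      apply Units.ext
      rw [Units.val_mk0, ← ha]
      have : (a : F) ^ 2 * y / y = a ^ 2 := by field_simp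
      rw [this, ← pow_mul]
      exact (pow8 hF _).symm
  · intro x
    refine ⟨⟨u x, u_mem_BB x⟩, ?_⟩
    rw [hsm]
    simp [u00, u01]

lemma uB_tau (b : F) (hb : b ≠ 0) : ∃ τ : BB F, ∀ x : F, τ * uB (.ofAdd x) * τ⁻¹ = uB (.ofAdd (b * x)) := by
  obtain ⟨a, ha⟩ := tau_exists hF b hb
  exact ⟨⟨t a, t_mem_BB a⟩, fun x => Subtype.ext (ha x)⟩

variable {V : Type} [AddCommGroup V] [Module ℂ V] [FiniteDimensional ℂ V]

/-- On the fixed space of `U` the Borel acts through the torus. -/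
lemma B_conj (g : BB F) (x : Multiplicative F) : ∃ y : Multiplicative F, uB x * g = g * uB y := by
  have h1 := (stab_sylU hF g⁻¹.1).2 g⁻¹.2
  rw [Sylow.smul_eq_iff_mem_normalizer] at h1
  change _ ∈ Subgroup.normalizer ((sylU hF : Subgroup (SL F)) : Set (SL F)) at h1
  rw [sylU_coe] at h1
  obtain ⟨y, hy⟩ := (Subgroup.mem_normalizer_iff.1 h1 (uu x)).1 ⟨x, rfl⟩
  refine ⟨y, Subtype.ext ?_⟩
  change uu x * g.1 = g.1 * uu y
  rw [hy]
  change uu x * g.1 = g.1 * (g.1⁻¹ * uu x * g.1⁻¹⁻¹)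
  group

lemma fix_stab (ρ : Representation ℂ (BB F) V) : Stab ρ (fixU uB ρ) := by
  intro g v hv x
  obtain ⟨y, hy⟩ := B_conj hF g x
  rw [← rep_mul_apply, hy, rep_mul_apply, hv y]

lemma B_comm_mod (g h : BB F) : ∃ x : Multiplicative F, g * h = h * g * uB x := by
  obtain ⟨x, a, hg⟩ := BB_decomp g.2
  obtain ⟨y, b, hh⟩ := BB_decomp h.2
  have : ((h.1 * g.1)⁻¹ * (g.1 * h.1)).1 1 0 = 0 := (((h * g)⁻¹ * (g * h) : BB F)).2
  have hz : ∃ z, ((h.1 * g.1)⁻¹ * (g.1 * h.1) : SL F) = u z := by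
    refine ⟨((h.1 * g.1)⁻¹ * (g.1 * h.1) : SL F).1 0 1, ?_⟩
    have e1 : ((h.1 * g.1)⁻¹ * (g.1 * h.1) : SL F).1 0 0 = 1 := by
      rw [hg, hh]
      simp [mul00, mul01, mul10, mul11, inv00, inv01, inv10, inv11, u00, u01, u10, u11, t00, t01, t10, t11]
      have := a.ne_zero
      have := b.ne_zero
      field_simp
    have e2 : ((h.1 * g.1)⁻¹ * (g.1 * h.1) : SL F).1 1 1 = 1 := by
      rw [hg, hh]
      simp [mul00, mul01, mul10, mul11, inv00, inv01, inv10, inv11, u00, u01, u10, u11, t00, t01, t10, t11]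
      have := a.ne_zero
      have := b.ne_zero
      field_simp
    apply sl_ext
    · exact e1
    · rfl
    · exact this
    · exact e2
  obtain ⟨z, hz⟩ := hz
  refine ⟨.ofAdd z, Subtype.ext ?_⟩
  change g.1 * h.1 = h.1 * g.1 * u z
  rw [← hz]; group

lemma scalar_finrank_one {Γ : Type} [Group Γ] {ρ : Representation ℂ Γ V} (hρ : Irr ρ)
    (h : ∀ g, ∃ c : ℂ, ρ g = c • LinearMap.id) : finrank ℂ V = 1 := by
  have := hρ.1
  obtain ⟨v, hv⟩ := exists_ne (0 : V)
  have hs : Stab ρ (ℂ ∙ v) := by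
    intro g x hx
    obtain ⟨c, hc⟩ := h g
    rw [hc]
    exact Submodule.smul_mem _ c hx
  rcases hρ.2 _ hs with h1 | h1
  · exact absurd (Submodule.span_singleton_eq_bot.1 h1) hv
  · rw [← finrank_top, ← h1]; exact finrank_span_singleton hv

lemma B_lin {ρ : Representation ℂ (BB F) V} (hρ : Irr ρ) (h : fixU uB ρ = ⊤) : finrank ℂ V = 1 := by
  refine scalar_finrank_one hF hρ (fun g => schur hρ ?_)
  intro k v
  obtain ⟨x, hx⟩ := B_comm_mod hF g k
  rw [← rep_mul_apply, hx, rep_mul_apply, rep_mul_apply]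
  have : v ∈ fixU uB ρ := by rw [h]; trivial
  rw [this x]

theorem deg_B {n : ℕ} (hn : IsDeg (BB F) n) : n = 1 ∨ 7 ∣ n := by
  obtain ⟨V, _, _, _, ρ, hρ, rfl⟩ := hn
  obtain ⟨b, hb⟩ := lemW hF uB ρ (uB_tau hF)
  rcases hρ.2 _ (fix_stab hF ρ) with h | h
  · right
    rw [h, finrank_bot, zero_add] at hb
    exact ⟨b, hb⟩
  · exact Or.inl (B_lin hF hρ h)

theorem deg_S {n : ℕ} (hn : IsDeg (SL F) n) : n = 1 ∨ n = 7 ∨ n = 8 ∨ n = 9 ∨ n = 14 ∨ n = 21 := by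
  obtain ⟨V, _, _, _, ρ, hρ, rfl⟩ := hn
  have h2 := two0 hF
  have hnt := hρ.1
  obtain ⟨b, hb⟩ := lemW hF uu ρ (by
    intro b hb
    obtain ⟨a, ha⟩ := tau_exists hF b hb
    exact ⟨t a, ha⟩)
  have hpos : 0 < finrank ℂ V := finrank_pos
  by_cases h : fixU uu ρ = ⊥
  · rw [h, finrank_bot, zero_add] at hb
    have := deg_sq_le hρ
    rw [card_S hF] at this
    have : finrank ℂ V < 23 := by nlinarith
    omega
  · have hf : finrank ℂ (fixU uu ρ) ≠ 0 := by
      rw [Ne, Submodule.finrank_eq_zero]; exact h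
    by_cases hb0 : b = 0
    · left
      have hfix : fixU uu ρ = ⊤ := Submodule.eq_top_of_finrank_eq (by omega)
      have hu : ∀ x, ρ (u x) = 1 := by
        intro x
        ext v
        have : v ∈ fixU uu ρ := by rw [hfix]; trivial
        exact this (.ofAdd x)
      have hw : ρ w = 1 := by
        have h1 := congrArg ρ (t_decomp (1 : Fˣ) h2)
        simp only [map_mul, hu, t_one, map_one, one_mul, mul_one] at h1
        have h3 : (w : SL F) * w = 1 := by
          have := tr0 hF (g := (w : SL F)) (by simp [tr, w, m200, m211])
          rwa [pow_two] at this
        rw [← map_mul, h3, map_one, one_mul] at h1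
        exact h1.symm
      have ht : ∀ a, ρ (t a) = 1 := by
        intro a
        rw [t_decomp a h2]
        simp only [map_mul, hu, hw, one_mul]
      refine scalar_finrank_one hF hρ (fun g => ⟨1, ?_⟩)
      rw [one_smul]
      by_cases hg : g ∈ BB F
      · obtain ⟨x, a, rfl⟩ := BB_decomp hg
        rw [map_mul, hu, ht]; rfl
      · obtain ⟨x, a, y, rfl⟩ := bruhat hg
        simp only [map_mul, hu, hw, ht]; rfl
    · have h9 : finrank ℂ V ≤ 9 := by
        let σ : Representation ℂ (BB F) V := ρ.comp (BB F).subtype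
        have hσ : fixU uB σ = fixU uu ρ := rfl
        have hst := fix_stab hF σ
        have : Nontrivial (fixU uB σ) := by
          rw [hσ]; exact Submodule.nontrivial_iff_ne_bot.2 h
        obtain ⟨X, hX, hirr⟩ := exists_irr_sub (subrep σ _ hst)
        have h1 := B_lin hF hirr (by
          rw [eq_top_iff]
          intro v _ x
          apply Subtype.ext
          apply Subtype.ext
          exact v.1.2 x)
        obtain ⟨v, hv0, hv⟩ := finrank_eq_one_iff'.1 h1
        let v0 : V := v.1.1
        have hv0' : v0 ≠ 0 := by
          intro h
          exact hv0 (Subtype.ext (Subtype.ext h))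
        have hB : ∀ g ∈ BB F, ∃ c : ℂ, ρ g v0 = c • v0 := by
          intro g hg
          obtain ⟨c, hc⟩ := hv (subrep (subrep σ _ hst) X hX ⟨g, hg⟩ v)
          refine ⟨c, ?_⟩
          have := congrArg (fun z : X => (z.1.1 : V)) hc
          exact this.symm
        let f : Option F → V := fun o => o.elim v0 (fun x => ρ (u x * w) v0)
        have hall : ∀ g, ρ g v0 ∈ Submodule.span ℂ (Set.range f) := by
          intro g
          by_cases hg : g ∈ BB F
          · obtain ⟨c, hc⟩ := hB g hg
            rw [hc]
            exact Submodule.smul_mem _ _ (Submodule.subset_span ⟨none, rfl⟩)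
          · obtain ⟨x, a, y, rfl⟩ := bruhat hg
            obtain ⟨c, hc⟩ := hB (t a * u y) (mul_mem (t_mem_BB a) (u_mem_BB y))
            rw [mul_assoc _ (t a), rep_mul_apply, hc, map_smul]
            exact Submodule.smul_mem _ _ (Submodule.subset_span ⟨some x, rfl⟩)
        have hs : Stab ρ (Submodule.span ℂ (Set.range (fun g => ρ g v0))) := by
          intro g x hx
          induction hx using Submodule.span_induction with
          | mem x hx =>
            obtain ⟨k, rfl⟩ := hx
            exact Submodule.subset_span ⟨g * k, by simp only [rep_mul_apply]⟩
          | zero => rw [map_zero]; exact zero_mem _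
          | add x y _ _ hx hy => rw [map_add]; exact add_mem hx hy
          | smul c x _ hx => rw [map_smul]; exact Submodule.smul_mem _ _ hx
        have htop : Submodule.span ℂ (Set.range f) = ⊤ := by
          rcases hρ.2 _ hs with h | h
          · exfalso
            rw [Submodule.span_eq_bot] at h
            apply hv0'
            have := h (ρ 1 v0) ⟨1, rfl⟩
            rwa [map_one] at this
          · rw [eq_top_iff, ← h, Submodule.span_le]
            rintro _ ⟨g, rfl⟩
            exact hall g
        have := finrank_range_le_card (R := ℂ) f
        rw [Set.finrank, htop, finrank_top, Fintype.card_option, hF] at this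
        exact this
      omega

end degs
end CD

open CategoryTheory
set_option linter.all false
namespace CD
open Module
open scoped commutatorElement

section updown

/-- A representation trivial on the kernel of a surjection descends. -/
lemma descend {T Q : Type} [Group T] [Group Q] {W : Type} [AddCommGroup W] [Module ℂ W] [FiniteDimensional ℂ W]
    (q : T →* Q) (hq : Function.Surjective q) {ω : Representation ℂ T W} (hω : Irr ω)
    (ht : ∀ t, q t = 1 → ω t = 1) : IsDeg Q (finrank ℂ W) := by
  have hd : ∀ a b, q a = q b → ω a = ω b := by
    intro a b h
    have h1 : ω (b⁻¹ * a) = 1 := ht _ (by rw [map_mul, map_inv, h, inv_mul_cancel])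
    have h2 : a = b * (b⁻¹ * a) := by group
    rw [h2, map_mul, h1, mul_one]
  choose s hs using hq
  let σ : Representation ℂ Q W :=
    { toFun := fun x => ω (s x)
      map_one' := ht _ (hs 1)
      map_mul' := fun x y => by
        rw [← map_mul]
        exact hd _ _ (by rw [map_mul, hs, hs, hs]) }
  refine ⟨W, _, _, inferInstance, σ, ⟨hω.1, fun X hX => hω.2 X ?_⟩, rfl⟩
  intro t v hv
  have : ω t = σ (q t) := hd _ _ (hs _).symm
  rw [this]
  exact hX _ v hv

lemma pull {T Q : Type} [Group T] [Group Q] {W : Type} [AddCommGroup W] [Module ℂ W]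
    (q : T →* Q) (hq : Function.Surjective q) {σ : Representation ℂ Q W} (hσ : Irr σ) :
    Irr (σ.comp q : Representation ℂ T W) := by
  refine ⟨hσ.1, fun X hX => hσ.2 X ?_⟩
  intro x v hv
  obtain ⟨t, rfl⟩ := hq x
  exact hX t v hv

variable {G : Type} [Group G] [Finite G] {N : Subgroup G} [N.Normal]

/-- Clifford theory when the inertia quotient `Q` has trivial Schur multiplier. -/
lemma cliff_up {Q : Type} [Group Q] (hQ : SchurTriv Q) {U : Type} [AddCommGroup U] [Module ℂ U] [FiniteDimensional ℂ U]
    {θ : Representation ℂ N U} (hθ : Irr θ) (q : inertia θ →* Q) (hq : Function.Surjective q)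
    (hker : ∀ t, q t = 1 ↔ (t : G) ∈ N) {n : ℕ} (hn : IsDeg Q n) :
    IsDeg G ((inertia θ).index * (finrank ℂ U * n)) := by
  obtain ⟨θ', h'⟩ := exists_extension hQ hθ q hq hker
  obtain ⟨W, _, _, _, σ, hσ, rfl⟩ := hn
  exact clifford_B hθ h' (pull q hq hσ) (fun t h => by
    rw [← hker] at h
    change σ (q t) = 1
    rw [h, map_one])

lemma scalar_one {V : Type} [AddCommGroup V] [Module ℂ V] [FiniteDimensional ℂ V] {Γ : Type} [Group Γ] {ρ : Representation ℂ Γ V} (hρ : Irr ρ)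
    (h : ∀ g, ∃ c : ℂ, ρ g = c • LinearMap.id) : finrank ℂ V = 1 := by
  have := hρ.1
  obtain ⟨v, hv⟩ := exists_ne (0 : V)
  have hs : Stab ρ (ℂ ∙ v) := by
    intro g x hx
    obtain ⟨c, hc⟩ := h g
    rw [hc]
    exact Submodule.smul_mem _ c hx
  rcases hρ.2 _ hs with h1 | h1
  · exact absurd (Submodule.span_singleton_eq_bot.1 h1) hv
  · rw [← finrank_top, ← h1]; exact finrank_span_singleton hv

lemma deg_abel {Q : Type} [Group Q] (hc : ∀ a b : Q, a * b = b * a) {n : ℕ} (hn : IsDeg Q n) : n = 1 := by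
  obtain ⟨W, _, _, _, σ, hσ, rfl⟩ := hn
  refine scalar_one hσ (fun g => schur hσ ?_)
  intro k v
  rw [← rep_mul_apply, hc, rep_mul_apply]

lemma deg_one (Q : Type) [Group Q] : IsDeg Q 1 := by
  refine ⟨ℂ, _, _, inferInstance, 1, ⟨inferInstance, fun X _ => ?_⟩, finrank_self ℂ⟩
  exact eq_bot_or_eq_top X

lemma cyc {M : Subgroup G} [M.Normal] (hM : M.index ∣ 3) {U : Type} [AddCommGroup U] [Module ℂ U] (θ : Representation ℂ M U) :
    ∃ (Q : Type) (_ : Group Q) (q : inertia θ →* Q), SchurTriv Q ∧ Function.Surjective q ∧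
      (∀ t, q t = 1 ↔ (t : G) ∈ M) ∧ (∀ a b : Q, a * b = b * a) ∧ ((inertia θ).index = 1 ∨ (inertia θ).index = 3) := by
  have h3 : Fact (Nat.Prime 3) := ⟨Nat.prime_three⟩
  have hcyc : IsCyclic (inertia θ ⧸ M.subgroupOf (inertia θ)) := by
    apply isCyclic_of_card_dvd_prime (p := 3)
    change (M.subgroupOf (inertia θ)).index ∣ 3
    exact (M.relIndex_dvd_index_of_normal _).trans hM
  refine ⟨inertia θ ⧸ M.subgroupOf (inertia θ), inferInstance, QuotientGroup.mk' _, schurTriv_cyclic,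
    QuotientGroup.mk'_surjective _, fun t => ?_, ?_, ?_⟩
  · rw [QuotientGroup.mk'_apply, QuotientGroup.eq_one_iff, Subgroup.mem_subgroupOf]
  · have := hcyc.commGroup
    intro a b
    obtain ⟨g, hg⟩ := hcyc.exists_generator
    obtain ⟨i, rfl⟩ := hg a
    obtain ⟨j, rfl⟩ := hg b
    simp only [← zpow_add, add_comm]
  · have := (Subgroup.index_dvd_of_le (le_inertia θ)).trans hM
    exact (Nat.dvd_prime Nat.prime_three).1 this

lemma from_G {M : Subgroup G} [M.Normal] (hM : M.index ∣ 3) {n : ℕ} (hn : IsDeg G n) :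
    ∃ d, IsDeg M d ∧ (n = d ∨ n = 3 * d) := by
  obtain ⟨V, _, _, _, ρ, hρ, rfl⟩ := hn
  obtain ⟨U, _, _, _, θ, hθ, -, h⟩ := clifford_A (N := M) hρ
  obtain ⟨Q, _, q, hQ, hq, hker, hab, hi⟩ := cyc hM θ
  obtain ⟨θ', h'⟩ := exists_extension hQ hθ q hq hker
  obtain ⟨W, _, _, _, ω, hω, ht, hfr⟩ := h θ' h'
  have h1 := deg_abel hab (descend q hq hω (fun t h => ht t ((hker t).1 h)))
  refine ⟨finrank ℂ U, ⟨U, _, _, inferInstance, θ, hθ, rfl⟩, ?_⟩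
  rw [hfr, h1]
  rcases hi with hi | hi <;> rw [hi] <;> simp

lemma to_G {M : Subgroup G} [M.Normal] (hM : M.index ∣ 3) {d : ℕ} (hd : IsDeg M d) :
    IsDeg G d ∨ IsDeg G (3 * d) := by
  obtain ⟨U, _, _, _, θ, hθ, rfl⟩ := hd
  obtain ⟨Q, _, q, hQ, hq, hker, hab, hi⟩ := cyc hM θ
  have := cliff_up hQ hθ q hq hker (deg_one Q)
  rcases hi with hi | hi <;> rw [hi] at this <;> simp only [mul_one, one_mul] at this
  · exact Or.inl this
  · exact Or.inr this

end updown

section Mdeg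
variable {F : Type} [Field F] [Fintype F] (hF : Fintype.card F = 8)
include hF

lemma index_B : (BB F).index = 9 := by
  have h1 := (BB F).card_mul_index
  rw [card_S hF, card_B hF] at h1
  omega

theorem M_deg {M : Type} [Group M] [Finite M] (p : M →* SL F) (hp : Function.Surjective p) {c : ℕ} (hc : IsDeg M c) :
    (∃ m d, c = m * d ∧ (d = 1 ∨ d = 7 ∨ d = 8 ∨ d = 9 ∨ d = 14 ∨ d = 21) ∧ IsDeg M (8 * m)) ∨
    8 ∣ c ∨ 28 ∣ c ∨ 36 ∣ c ∨ 63 ∣ c ∨ ∃ m, c = 9 * m ∧ IsDeg M (63 * m) := by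
  obtain ⟨V, _, _, _, ρ, hρ, rfl⟩ := hc
  obtain ⟨U, _, _, _, θ, hθ, hdvd, h⟩ := clifford_A (N := p.ker) hρ
  have hT : inertia θ = ((inertia θ).map p).comap p :=
    (Subgroup.comap_map_eq_self (le_inertia θ)).symm
  have hidx : (inertia θ).index = ((inertia θ).map p).index := by
    conv_lhs => rw [hT]
    exact Subgroup.index_comap_of_surjective _ hp
  rcases classify hF ((inertia θ).map p) with h1 | h1 | h1 | h1 | h1 | ⟨s, hs⟩
  · left
    have hQ := schurTriv_S hF
    let q : inertia θ →* SL F := p.comp (inertia θ).subtype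
    have hq : Function.Surjective q := by
      intro x
      have : x ∈ (inertia θ).map p := by rw [h1]; trivial
      obtain ⟨t, ht, rfl⟩ := this
      exact ⟨⟨t, ht⟩, rfl⟩
    have hker : ∀ t, q t = 1 ↔ (t : M) ∈ p.ker := fun t => Iff.rfl
    obtain ⟨θ', h'⟩ := exists_extension hQ hθ q hq hker
    obtain ⟨W, _, _, _, ω, hω, ht, hfr⟩ := h θ' h'
    have hd := deg_S hF (descend q hq hω (fun t h => ht t ((hker t).1 h)))
    have h8 := cliff_up hQ hθ q hq hker (deg8_S hF)
    rw [hidx, h1, Subgroup.index_top, one_mul] at hfr h8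
    exact ⟨_, _, hfr, hd, by rwa [mul_comm]⟩
  · right; left; exact h1.trans (hidx ▸ hdvd)
  · right; right; left; exact h1.trans (hidx ▸ hdvd)
  · right; right; right; left; exact h1.trans (hidx ▸ hdvd)
  · right; right; right; right; left; exact h1.trans (hidx ▸ hdvd)
  · right; right; right; right
    have hQ := schurTriv_B hF
    let q : inertia θ →* BB F :=
      ((MulAut.conj s).toMonoidHom.comp (p.comp (inertia θ).subtype)).codRestrict (BB F)
        (fun t => (hs _).1 ⟨t.1, t.2, rfl⟩)
    have hqv : ∀ t, (q t : SL F) = s * p t * s⁻¹ := fun t => rfl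
    have hq : Function.Surjective q := by
      rintro ⟨x, hx⟩
      have : s⁻¹ * x * s ∈ (inertia θ).map p := by
        rw [hs]
        have : s * (s⁻¹ * x * s) * s⁻¹ = x := by group
        rwa [this]
      obtain ⟨t, ht, h⟩ := this
      refine ⟨⟨t, ht⟩, Subtype.ext ?_⟩
      rw [hqv, h]
      group
    have hker : ∀ t, q t = 1 ↔ (t : M) ∈ p.ker := fun t => by
      rw [Subtype.ext_iff, hqv, MonoidHom.mem_ker]
      exact conj_eq_one_iff
    obtain ⟨θ', h'⟩ := exists_extension hQ hθ q hq hker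
    obtain ⟨W, _, _, _, ω, hω, ht, hfr⟩ := h θ' h'
    have hd := deg_B hF (descend q hq hω (fun t h => ht t ((hker t).1 h)))
    have h8 := cliff_up hQ hθ q hq hker (deg7_B hF)
    have h9 : (inertia θ).index = 9 := by
      have : (inertia θ).map p = (BB F).comap (MulAut.conj s).toMonoidHom := by
        ext h; exact hs h
      rw [hidx, this, Subgroup.index_comap_of_surjective _ (MulAut.conj s).surjective, index_B hF]
    rw [h9] at hfr h8
    rcases hd with hd | ⟨k, hk⟩
    · right
      rw [hd, mul_one] at hfr
      exact ⟨_, hfr, by rwa [show 63 * finrank ℂ U = 9 * (finrank ℂ U * 7) by ring]⟩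
    · left
      rw [hfr, hk]
      exact ⟨finrank ℂ U * k, by ring⟩

end Mdeg
end CD

open CategoryTheory
set_option linter.all false
namespace CD
open Module

section core
variable {F : Type} [Field F] [Fintype F] (hF : Fintype.card F = 8)

lemma len_le {a n : ℕ} (h : a ∣ n) (hn : n ≠ 0) : a.primeFactorsList.length ≤ n.primeFactorsList.length :=
  (Nat.primeFactorsList_sublist_of_dvd h hn).length_le

lemma two_prime {G : Type} [Group G] (hG : TwoPrimeHypothesis G) {a x y : ℕ} (hx : x ∈ charDegrees G) (hy : y ∈ charDegrees G)
    (hax : a ∣ x) (hay : a ∣ y) (ha : 2 < a.primeFactorsList.length) : x = y := by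
  by_contra hne
  have h1 := hG x hx y hy hne
  have h2 : Nat.gcd x y ≠ 0 := by
    intro h
    rw [Nat.gcd_eq_zero_iff] at h
    exact hne (h.1.trans h.2.symm)
  have h3 := len_le (Nat.dvd_gcd hax hay) h2
  omega

lemma len_mul {a b : ℕ} (ha : a ≠ 0) (hb : b ≠ 0) :
    (a * b).primeFactorsList.length = a.primeFactorsList.length + b.primeFactorsList.length := by
  rw [(Nat.perm_primeFactorsList_mul ha hb).length_eq, List.length_append]

lemma len_prime {p : ℕ} (hp : p.Prime) : p.primeFactorsList.length = 1 := by
  rw [Nat.primeFactorsList_prime hp]; rfl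

lemma len8 : 2 < (8 : ℕ).primeFactorsList.length := by
  rw [show 8 = 2 * (2 * 2) by norm_num, len_mul, len_mul, len_prime Nat.prime_two] <;> norm_num
lemma len28 : 2 < (28 : ℕ).primeFactorsList.length := by
  rw [show 28 = 2 * (2 * 7) by norm_num, len_mul, len_mul, len_prime Nat.prime_two, len_prime (p := 7)] <;> norm_num
lemma len36 : 2 < (36 : ℕ).primeFactorsList.length := by
  rw [show 36 = 2 * (2 * (3 * 3)) by norm_num, len_mul, len_mul, len_mul, len_prime Nat.prime_two, len_prime (p := 3)] <;> norm_num
lemma len63 : 2 < (63 : ℕ).primeFactorsList.length := by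
  rw [show 63 = 3 * (3 * 7) by norm_num, len_mul, len_mul, len_prime Nat.prime_three, len_prime (p := 7)] <;> norm_num
lemma len9m {m : ℕ} (h0 : m ≠ 0) (h1 : m ≠ 1) : 2 < (9 * m).primeFactorsList.length := by
  have h2 : 0 < m.primeFactorsList.length := by
    rw [List.length_pos_iff, Ne, Nat.primeFactorsList_eq_nil]
    tauto
  rw [show 9 * m = 3 * (3 * m) by ring, len_mul, len_mul, len_prime Nat.prime_three] <;> omega

lemma pick {D : Set ℕ} {q : ℕ} (h : ∀ x ∈ D, ∀ y ∈ D, q ∣ x → q ∣ y → x = y) :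
    ∃ z : ℕ, ∀ x ∈ D, q ∣ x → x = z := by
  by_cases hx : ∃ x ∈ D, q ∣ x
  · obtain ⟨x, hx, hq⟩ := hx
    exact ⟨x, fun y hy hqy => h y hy x hx hqy hq⟩
  · push Not at hx
    exact ⟨0, fun x hxD hq => absurd hq (hx x hxD)⟩

include hF

lemma center_triv (z : SL F) (hz : z ∈ Subgroup.center (SL F)) : z = 1 := by
  obtain ⟨r, hr, hz⟩ := Matrix.SpecialLinearGroup.mem_center_iff.1 hz
  have h2 := two0 hF
  have hr1 : r = 1 := by
    rw [Fintype.card_fin] at hr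
    have : (r - 1) ^ 2 = 0 := by linear_combination hr + (1 - r) * h2
    exact sub_eq_zero.1 (pow_eq_zero_iff (two_ne_zero) |>.1 this)
  apply Subtype.ext
  rw [← hz, hr1]; simp

lemma conj_inj : Function.Injective (MulAut.conj : SL F →* MulAut (SL F)) := by
  rw [injective_iff_map_eq_one]
  intro z hz
  apply center_triv hF
  rw [Subgroup.mem_center_iff]
  intro g
  have := congrArg (fun f : MulAut (SL F) => f g) hz
  have h : z * g * z⁻¹ = g := this
  exact (mul_inv_eq_iff_eq_mul.1 h).symm

theorem core {G : Type} [Group G] [Finite G] (hG : TwoPrimeHypothesis G) (α : G →* MulAut (SL F))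
    (hα : ∀ s, ∃ γ, α γ = MulAut.conj s) : (charDegrees G).ncard ≤ 13 := by
  have := inn_normal (SL F)
  let M : Subgroup G := (Inn (SL F)).comap α
  have hM : M.index ∣ 3 := by
    rw [Subgroup.index_comap]
    exact (Subgroup.relIndex_dvd_index_of_normal _ _).trans (inn_index hF)
  let e := MonoidHom.ofInjective (conj_inj hF)
  let p : M →* SL F := e.symm.toMonoidHom.comp ((α.comp M.subtype).codRestrict (Inn (SL F)) (fun m => m.2))
  have hp : Function.Surjective p := by
    intro s
    obtain ⟨γ, hγ⟩ := hα s
    refine ⟨⟨γ, s, hγ.symm⟩, ?_⟩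
    apply e.injective
    apply Subtype.ext
    change (e (e.symm ⟨α γ, _⟩)).1 = _
    rw [e.apply_symm_apply]
    exact hγ
  have h8 : 8 ∈ charDegrees G := (mem_charDegrees 8).2 (deg8 hF α hα)
  have hall8 : ∀ x ∈ charDegrees G, 8 ∣ x → x = 8 := fun x hx h => two_prime hG hx h8 h (dvd_refl 8) len8
  obtain ⟨a, ha⟩ := pick (D := charDegrees G) (q := 28) (fun x hx y hy h1 h2 => two_prime hG hx hy h1 h2 len28)
  obtain ⟨b, hb⟩ := pick (D := charDegrees G) (q := 36) (fun x hx y hy h1 h2 => two_prime hG hx hy h1 h2 len36)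
  obtain ⟨c, hc⟩ := pick (D := charDegrees G) (q := 63) (fun x hx y hy h1 h2 => two_prime hG hx hy h1 h2 len63)
  have hsub : charDegrees G ⊆ ((([1, 3, 7, 8, 9, 14, 21, 27, 42, a, b, c] : List ℕ).toFinset : Finset ℕ) : Set ℕ) := by
    intro n hn
    have big : n = 1 ∨ n = 3 ∨ n = 7 ∨ n = 9 ∨ n = 14 ∨ n = 21 ∨ n = 27 ∨ n = 42 ∨ 8 ∣ n ∨ 28 ∣ n ∨ 36 ∣ n ∨ 63 ∣ n := by
      obtain ⟨d, hd, hnd⟩ := from_G hM ((mem_charDegrees n).1 hn)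
      have hdn : d ∣ n := by
        rcases hnd with h | h <;> rw [h]
        exact Dvd.intro_left 3 rfl
      rcases M_deg hF p hp hd with ⟨m, k, rfl, hk, hm⟩ | h | h | h | h | ⟨m, rfl, hm⟩
      · have hm1 : m = 1 := by
          rcases to_G hM hm with h | h
          · have := hall8 _ ((mem_charDegrees _).2 h) ⟨m, rfl⟩
            omega
          · have := hall8 _ ((mem_charDegrees _).2 h) ⟨3 * m, by ring⟩
            omega
        subst hm1
        omega
      · have := h.trans hdn; tauto
      · have := h.trans hdn; tauto
      · have := h.trans hdn; tauto
      · have := h.trans hdn; tauto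
      · obtain ⟨k, hk, h63, h9⟩ : ∃ k, k ∈ charDegrees G ∧ 63 ∣ k ∧ 9 * m ∣ k := by
          rcases to_G hM hm with h | h
          · exact ⟨_, (mem_charDegrees _).2 h, ⟨m, rfl⟩, ⟨7, by ring⟩⟩
          · exact ⟨_, (mem_charDegrees _).2 h, ⟨3 * m, by ring⟩, ⟨21, by ring⟩⟩
        by_cases hm0 : m = 0
        · subst hm0; omega
        by_cases hm1 : m = 1
        · subst hm1; omega
        have := two_prime hG hn hk hdn h9 (len9m hm0 hm1)
        rw [← this] at h63
        tauto
    have e8 := hall8 n hn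
    have ea := ha n hn
    have eb := hb n hn
    have ec := hc n hn
    rw [Finset.mem_coe, List.mem_toFinset]
    clear hall8 ha hb hc
    rcases big with h | h | h | h | h | h | h | h | h | h | h | h
    · simp [h]
    · simp [h]
    · simp [h]
    · simp [h]
    · simp [h]
    · simp [h]
    · simp [h]
    · simp [h]
    · simp [e8 h]
    · simp [ea h]
    · simp [eb h]
    · simp [ec h]
  calc (charDegrees G).ncard ≤ _ := Set.ncard_le_ncard hsub (Finset.finite_toSet _)
    _ = _ := Set.ncard_coe_finset _
    _ ≤ 12 := List.toFinset_card_le _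
    _ ≤ 13 := by norm_num

end core
end CD

theorem cd_bound_psl2_8
    (F : Type) [Field F] [Fintype F] (hF : Fintype.card F = 8)
    (G : Type) [Group G] [Finite G] (hG : TwoPrimeHypothesis G)
    (N M : Subgroup G) [N.Normal] [M.Normal] (hNM : N ≤ M)
    (hiso : Nonempty ((M.map (QuotientGroup.mk' N)) ≃* PSL2 F))
    (hcent : Subgroup.centralizer ((M.map (QuotientGroup.mk' N)) : Set (G ⧸ N)) = ⊥) :
    (charDegrees G).ncard ≤ 13 := by
  obtain ⟨e⟩ := hiso
  have hn : (M.map (QuotientGroup.mk' N)).Normal :=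
    Subgroup.Normal.map inferInstance _ (QuotientGroup.mk'_surjective N)
  have hz : Subgroup.center (CD.SL F) = ⊥ := by
    rw [eq_bot_iff]
    intro z hz
    exact CD.center_triv hF z hz
  let f : PSL2 F ≃* CD.SL F := (QuotientGroup.quotientMulEquivOfEq hz).trans QuotientGroup.quotientBot
  let E : (M.map (QuotientGroup.mk' N)) ≃* CD.SL F := e.trans f
  refine CD.core hF hG (((MulAut.congr E).toMonoidHom.comp MulAut.conjNormal).comp (QuotientGroup.mk' N)) ?_
  intro s
  obtain ⟨m, hm⟩ := QuotientGroup.mk'_surjective N (E.symm s).1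
  refine ⟨m, ?_⟩
  ext1 x
  change E (MulAut.conjNormal (QuotientGroup.mk' N m) (E.symm x)) = s * x * s⁻¹
  have : MulAut.conjNormal (QuotientGroup.mk' N m) (E.symm x) = E.symm s * E.symm x * (E.symm s)⁻¹ := by
    apply Subtype.ext
    rw [MulAut.conjNormal_apply, hm]; rfl
  rw [this]
  simp only [map_mul, map_inv, MulEquiv.apply_symm_apply]
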